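/- arXiv:1805.02419 — 4 statements merged into one kernel-verified Lean document; each statement's English description precedes it below -/
import Mathlib

section
/- (Main counterexample.) Let n ≥ 2 and let μ satisfy 0 ≤ 2μ < n. Then there exist constants α, λ, Λ > 0 and C_μ ≥ 0, bounded smooth functions β, γ : (0,∞) → ℝ, and a positive smooth function φ : (0,∞) → ℝ with φ(r) = r for 0 < r < 3/4 and φ(r) = r^{−μ} + C_μ r^{−μ−2} for r > 1, such that: (i) the coefficient matrix A(x) = α·I + i(β(|x|) ν⊗ν + γ(|x|)(I − ν⊗ν)) satisfies the uniform ellipticity condition with constants λ, Λ at every x ≠ 0; (ii) the function w(x) = φ(|x|)·(x₁/|x|)·e^{−i log|x|}, extended by w(0) = 0, is Lipschitz continuous on ℝⁿ, smooth on ℝⁿ\{0}, and not identically zero; (iii) for every x ≠ 0, div(A∇w)(x) = (1/2)(i·w(x) + μ·w(x) + x·∇w(x)); and (iv) for |x| > 1, w(x) = |x|^{−μ}·(x₁/|x|)·e^{−i log|x|}·(1 + C_μ|x|^{−2}). -/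
/-!
Write `w(x) = φ(r) (x_j / r) e^{-i log r}` with `r = |x|`, and put `p = r φ'/φ`, `q = r² φ''/φ`.
The radial component of the flux `A∇w` is `F(r) x_j / r` with
`F = (α + iβ)(p - i)(φ/r) e^{-i log r}`, and the profile equation is equivalent to the radial
equation
`F' + (n-1)/r F - (n-1)/r² (α + iγ) φ e^{-i log r} = (μ + p) φ/2 e^{-i log r}`;
on the right the term `i w` has been cancelled by the derivative of the phase. For given `φ` and
`α`, split this equation, divided by the phase, into real and imaginary parts. The imaginary part
determines `γ` algebraically from `β` (this needs `n ≥ 2`), and the real part does not involve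
`γ`: it is the linear first-order equation
`r β' = r² (μ + p)/2 - α (q + (n-1) p - n) - β (2p + n - 2)`.
With the integrating factor `ρ = φ² r^{n-2}` its solutions regular at the origin are
`β = (α K + L)/ρ - α p`, where `K' = ρ (p² + n)/r`, `L' = ρ r (μ + p)/2`.

The only real difficulty is to keep `β` bounded at infinity. Put `δ = n - 2μ > 0`; then
`ρ ~ r^{δ-2}`, so `αK + L = O(r^{δ-2})` is needed (`exists_beta`). The integrands are explicit
combinations of `r^{δ-3}`, `r^{δ-5}`, `r^{δ-7}` on `r > 1`. If `δ > 2` the bound is automatic. If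
`δ = 2`, the choice `α = C/(μ² + n)` removes the term `1/r` and hence the logarithm. If `δ < 2`,
then `K` and `L` have limits `K∞ > 0` and `L∞`, and `αK + L` has the required decay exactly when
`α = -L∞/K∞`; this is positive because the correction `C r^{-μ-2}` in `φ` with `C = 1/δ`
makes `L∞` negative. The correction term is needed only for `δ ≤ 2`: with `C = 0` the value of `α`
for `δ = 2` would be `0`.

Given bounded `β` and `γ`, ellipticity holds because the real part of `A` is `α I` and its
imaginary part is a bounded real symmetric matrix (`coefA_re`, `coefA_bound`). The function `w` is
Lipschitz because `w = ψ(|x|) x_j` with `ψ` and `r ψ'` bounded (`lipschitz_profW`).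
-/


open scoped BigOperators

noncomputable section
open scoped Classical

/-- The `k`-th partial derivative of `w : ℝⁿ → ℂ`. -/
def pdC {n : ℕ} (w : EuclideanSpace ℝ (Fin n) → ℂ) (x : EuclideanSpace ℝ (Fin n))
    (k : Fin n) : ℂ :=
  fderiv ℝ w x (EuclideanSpace.single k 1)

/-- `div(A ∇w)(x) = ∑ₖ ∂ₖ (∑ₗ A_{kl} ∂ₗ w)(x)`. -/
def divAgrad {n : ℕ} (A : EuclideanSpace ℝ (Fin n) → Matrix (Fin n) (Fin n) ℂ)
    (w : EuclideanSpace ℝ (Fin n) → ℂ) (x : EuclideanSpace ℝ (Fin n)) : ℂ :=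
  ∑ k, fderiv ℝ (fun y => ∑ l, A y k l * pdC w y l) x (EuclideanSpace.single k 1)

/-! ### Calculus on the half-line -/

theorem sub_le_sub_of_deriv_le {f g f' g' : ℝ → ℝ} {a b : ℝ} (ha : 0 < a) (hab : a ≤ b)
    (hf : ∀ r > 0, HasDerivAt f (f' r) r) (hg : ∀ r > 0, HasDerivAt g (g' r) r)
    (h : ∀ r ∈ Set.Ioo a b, f' r ≤ g' r) : f b - f a ≤ g b - g a := by
  have hd : ∀ r > 0, HasDerivAt (fun r => g r - f r) (g' r - f' r) r :=
    fun r hr => (hg r hr).sub (hf r hr)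
  have hm : MonotoneOn (fun r => g r - f r) (Set.Icc a b) := by
    apply monotoneOn_of_deriv_nonneg (convex_Icc a b)
    · intro r hr
      exact (hd r (ha.trans_le hr.1)).continuousAt.continuousWithinAt
    · intro r hr
      rw [interior_Icc] at hr
      exact (hd r (ha.trans hr.1)).differentiableAt.differentiableWithinAt
    · intro r hr
      rw [interior_Icc] at hr
      rw [(hd r (ha.trans hr.1)).deriv]
      linarith [h r hr]
  have := hm (Set.left_mem_Icc.2 hab) (Set.right_mem_Icc.2 hab) hab
  simp only at this
  linarith

theorem sub_eq_sub_of_deriv_eq {f g f' g' : ℝ → ℝ} {a b : ℝ} (ha : 0 < a) (hab : a ≤ b)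
    (hf : ∀ r > 0, HasDerivAt f (f' r) r) (hg : ∀ r > 0, HasDerivAt g (g' r) r)
    (h : ∀ r ∈ Set.Ioo a b, f' r = g' r) : f b - f a = g b - g a :=
  le_antisymm (sub_le_sub_of_deriv_le ha hab hf hg fun r hr => (h r hr).le)
    (sub_le_sub_of_deriv_le ha hab hg hf fun r hr => (h r hr).ge)

/-- Antiderivatives on `(0, ∞)`, normalised at `1/2`, a point near which the profile is the identity
and antiderivatives are therefore explicit. -/
theorem exists_antideriv {f : ℝ → ℝ} (hf : ContinuousOn f (Set.Ioi 0)) (c : ℝ) :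
    ∃ F : ℝ → ℝ, F (1 / 2) = c ∧ ∀ r > 0, HasDerivAt F (f r) r := by
  refine ⟨fun r => c + ∫ s in (1 / 2 : ℝ)..r, f s, by simp, fun r hr => ?_⟩
  refine HasDerivAt.const_add _ ?_
  apply intervalIntegral.integral_hasDerivAt_right
  · apply ContinuousOn.intervalIntegrable
    apply hf.mono
    intro x hx
    have := hx.1
    exact lt_of_lt_of_le (lt_min (by norm_num) hr) this
  · exact hf.stronglyMeasurableAtFilter isOpen_Ioi _ hr
  · exact hf.continuousAt (Ioi_mem_nhds hr)

/-- Being bounded on `(0, ∞)`. -/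
def BddPos (f : ℝ → ℝ) : Prop := ∃ M : ℝ, ∀ r > (0 : ℝ), |f r| ≤ M

theorem BddPos.add {f g : ℝ → ℝ} (hf : BddPos f) (hg : BddPos g) :
    BddPos (fun r => f r + g r) := by
  obtain ⟨M, hM⟩ := hf
  obtain ⟨N, hN⟩ := hg
  exact ⟨M + N, fun r hr => (abs_add_le _ _).trans (add_le_add (hM r hr) (hN r hr))⟩

theorem BddPos.mul {f g : ℝ → ℝ} (hf : BddPos f) (hg : BddPos g) :
    BddPos (fun r => f r * g r) := by
  obtain ⟨M, hM⟩ := hf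
  obtain ⟨N, hN⟩ := hg
  refine ⟨M * N, fun r hr => ?_⟩
  rw [abs_mul]
  exact mul_le_mul (hM r hr) (hN r hr) (abs_nonneg _) ((abs_nonneg _).trans (hM r hr))

theorem BddPos.const (c : ℝ) : BddPos (fun _ => c) := ⟨|c|, fun _ _ => le_rfl⟩

theorem BddPos.sub {f g : ℝ → ℝ} (hf : BddPos f) (hg : BddPos g) :
    BddPos (fun r => f r - g r) := by
  simpa [sub_eq_add_neg] using hf.add ((BddPos.const (-1)).mul hg)

/-- A continuous function on `(0, ∞)` is bounded once it is bounded near both ends. -/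
theorem BddPos.of_ends {f : ℝ → ℝ} (hf : ContinuousOn f (Set.Ioi 0))
    (h0 : ∃ M : ℝ, ∀ r > (0 : ℝ), r ≤ 1 / 2 → |f r| ≤ M)
    (h1 : ∃ M : ℝ, ∀ r > (1 : ℝ), |f r| ≤ M) : BddPos f := by
  obtain ⟨M, hM⟩ := h0
  obtain ⟨N, hN⟩ := h1
  obtain ⟨B, hB⟩ := (isCompact_Icc (a := (1 / 2 : ℝ)) (b := 1)).exists_bound_of_continuousOn
    (hf.mono fun x hx => lt_of_lt_of_le (by norm_num) hx.1)
  refine ⟨max M (max N B), fun r hr => ?_⟩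
  rcases le_or_gt r (1 / 2) with h | h
  · exact (hM r hr h).trans (le_max_left _ _)
  rcases le_or_gt r 1 with h' | h'
  · exact (hB r ⟨h.le, h'⟩).trans ((le_max_right _ _).trans (le_max_right _ _))
  · exact (hN r h').trans ((le_max_left _ _).trans (le_max_right _ _))

/-! ### The radial profile -/

/-- Interpolation between `r` and `r^{-μ} + C r^{-μ-2}` by a smooth cutoff supported in `r ≥ 3/4`. Both
are positive, so the convex combination is positive. -/
theorem exists_profile (μ C : ℝ) (hC : 0 ≤ C) : ∃ φ : ℝ → ℝ,
    ContDiffOn ℝ (⊤ : ℕ∞) φ (Set.Ioi 0) ∧ (∀ r > (0 : ℝ), 0 < φ r) ∧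
    (∀ r ∈ Set.Ioo (0 : ℝ) (3 / 4), φ r = r) ∧
    (∀ r ≥ (1 : ℝ), φ r = r ^ (-μ) + C * r ^ (-μ - 2)) := by
  have hs : ContDiff ℝ (⊤ : ℕ∞) (fun r : ℝ => Real.smoothTransition ((r - 3 / 4) * 4)) :=
    Real.smoothTransition.contDiff.comp (by fun_prop)
  have hp : ∀ a : ℝ, ContDiffOn ℝ (⊤ : ℕ∞) (fun r : ℝ => r ^ a) (Set.Ioi 0) := fun a =>
    contDiffOn_id.rpow_const_of_ne fun x hx => ne_of_gt hx
  refine ⟨fun r => (1 - Real.smoothTransition ((r - 3 / 4) * 4)) * r +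
    Real.smoothTransition ((r - 3 / 4) * 4) * (r ^ (-μ) + C * r ^ (-μ - 2)), ?_, ?_, ?_, ?_⟩
  · exact ((contDiffOn_const.sub hs.contDiffOn).mul contDiffOn_id).add
      (hs.contDiffOn.mul ((hp _).add (contDiffOn_const.mul (hp _))))
  · intro r hr
    have h1 := Real.smoothTransition.nonneg ((r - 3 / 4) * 4)
    have h2 := Real.smoothTransition.le_one ((r - 3 / 4) * 4)
    have h3 : 0 < r ^ (-μ) + C * r ^ (-μ - 2) := by positivity
    rcases h2.lt_or_eq with h | h
    · have := mul_pos (sub_pos.2 h) hr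
      have := mul_nonneg h1 h3.le
      linarith
    · simp only [h]; linarith
  · intro r hr
    simp only
    rw [Real.smoothTransition.zero_of_nonpos (by linarith [hr.2])]; ring
  · intro r hr
    simp only
    rw [Real.smoothTransition.one_of_one_le (by linarith)]; ring

/-- A smooth positive profile `φ` on `(0, ∞)`, equal to `r` near the origin and to
`r^{-μ} + C r^{-μ-2}` for `r ≥ 1`, together with its logarithmic derivatives `p = r φ' / φ` and
`q = r² φ'' / φ`. The far-field values of `p` and `q` are multiplied by `1 + C / r²`, which
makes them polynomial in `1 / r²`. -/
structure LogProfile (μ C : ℝ) (φ p q : ℝ → ℝ) : Prop where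
  smooth : ContDiffOn ℝ (⊤ : ℕ∞) φ (Set.Ioi 0)
  smooth_p : ContDiffOn ℝ (⊤ : ℕ∞) p (Set.Ioi 0)
  smooth_q : ContDiffOn ℝ (⊤ : ℕ∞) q (Set.Ioi 0)
  pos : ∀ r > (0 : ℝ), 0 < φ r
  near : ∀ r ∈ Set.Ioo (0 : ℝ) (3 / 4), φ r = r
  near_p : ∀ r ∈ Set.Ioo (0 : ℝ) (3 / 4), p r = 1
  near_q : ∀ r ∈ Set.Ioo (0 : ℝ) (3 / 4), q r = 0
  far : ∀ r ≥ (1 : ℝ), φ r = r ^ (-μ) * (1 + C / r ^ 2)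
  far_p : ∀ r > (1 : ℝ), p r * (1 + C / r ^ 2) = -μ - (μ + 2) * C / r ^ 2
  far_q : ∀ r > (1 : ℝ), q r * (1 + C / r ^ 2) = μ * (μ + 1) + (μ + 2) * (μ + 3) * C / r ^ 2
  deriv_φ : ∀ r > (0 : ℝ), HasDerivAt φ (p r * φ r / r) r
  deriv_p : ∀ r > (0 : ℝ), HasDerivAt p ((p r + q r - p r ^ 2) / r) r

theorem exists_logProfile (μ C : ℝ) (hC : 0 ≤ C) : ∃ φ p q, LogProfile μ C φ p q ∧
    (∀ r > (1 : ℝ), φ r = r ^ (-μ) + C * r ^ (-μ - 2)) := by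
  obtain ⟨φ, hs, hpos, hnear, hfar⟩ := exists_profile μ C hC
  obtain ⟨hd, hs1⟩ := (contDiffOn_infty_iff_deriv_of_isOpen isOpen_Ioi).1 hs
  obtain ⟨hd1, hs2⟩ := (contDiffOn_infty_iff_deriv_of_isOpen isOpen_Ioi).1 hs1
  have hφ0 : ∀ r ∈ Set.Ioi (0 : ℝ), φ r ≠ 0 := fun r hr => (hpos r hr).ne'
  have hφ1 : ∀ r > 0, HasDerivAt φ (deriv φ r) r := fun r hr =>
    ((hd r hr).differentiableAt (Ioi_mem_nhds hr)).hasDerivAt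
  have hφ2 : ∀ r > 0, HasDerivAt (deriv φ) (deriv (deriv φ) r) r := fun r hr =>
    ((hd1 r hr).differentiableAt (Ioi_mem_nhds hr)).hasDerivAt
  have n1 : ∀ r ∈ Set.Ioo (0 : ℝ) (3 / 4), deriv φ r = 1 := by
    intro r hr
    have : φ =ᶠ[nhds r] id := by
      filter_upwards [isOpen_Ioo.mem_nhds hr] with s h using hnear s h
    rw [this.deriv_eq]; simp
  have n2 : ∀ r ∈ Set.Ioo (0 : ℝ) (3 / 4), deriv (deriv φ) r = 0 := by
    intro r hr
    have : deriv φ =ᶠ[nhds r] fun _ => 1 := by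
      filter_upwards [isOpen_Ioo.mem_nhds hr] with s h using n1 s h
    rw [this.deriv_eq]; simp
  have pw : ∀ (a : ℝ) (r : ℝ), r > 1 → HasDerivAt (fun x : ℝ => x ^ a) (a * r ^ (a - 1)) r :=
    fun a r hr => Real.hasDerivAt_rpow_const (Or.inl (by linarith))
  have f1 : ∀ r > (1 : ℝ), deriv φ r =
      -μ * r ^ (-μ - 1) + C * ((-μ - 2) * r ^ (-μ - 2 - 1)) := by
    intro r hr
    have : φ =ᶠ[nhds r] fun r => r ^ (-μ) + C * r ^ (-μ - 2) := by
      filter_upwards [isOpen_Ioi.mem_nhds hr] with s h using hfar s (le_of_lt h)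
    rw [this.deriv_eq]
    exact ((pw (-μ) r hr).add ((pw (-μ - 2) r hr).const_mul C)).deriv
  have f2 : ∀ r > (1 : ℝ), deriv (deriv φ) r =
      -μ * ((-μ - 1) * r ^ (-μ - 1 - 1)) +
        C * ((-μ - 2) * ((-μ - 2 - 1) * r ^ (-μ - 2 - 1 - 1))) := by
    intro r hr
    have : deriv φ =ᶠ[nhds r]
        fun r => -μ * r ^ (-μ - 1) + C * ((-μ - 2) * r ^ (-μ - 2 - 1)) := by
      filter_upwards [isOpen_Ioi.mem_nhds hr] with s h using f1 s h
    rw [this.deriv_eq]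
    exact (((pw (-μ - 1) r hr).const_mul (-μ)).add
      (((pw (-μ - 2 - 1) r hr).const_mul (-μ - 2)).const_mul C)).deriv
  have e1 : ∀ (a r : ℝ), 0 < r → r ^ (a - 1) = r ^ a / r := fun a r hr =>
    Real.rpow_sub_one hr.ne' a
  have e2 : ∀ (a r : ℝ), 0 < r → r ^ (a - 2) = r ^ a / r ^ 2 := fun a r hr => by
    rw [Real.rpow_sub hr]; norm_cast
  have hfar' : ∀ r ≥ (1 : ℝ), φ r = r ^ (-μ) * (1 + C / r ^ 2) := by
    intro r hr
    rw [hfar r hr, e2 _ _ (by linarith)]; ring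
  refine ⟨φ, fun r => r * deriv φ r / φ r, fun r => r ^ 2 * deriv (deriv φ) r / φ r,
    ⟨hs, (contDiffOn_id.mul hs1).div hs hφ0, ((contDiffOn_id.pow 2).mul hs2).div hs hφ0, hpos,
      hnear, ?_, ?_, hfar', ?_, ?_, ?_, ?_⟩, fun r hr => hfar r hr.le⟩
  · intro r hr
    simp only [n1 r hr, hnear r hr]
    rw [mul_one, div_self hr.1.ne']
  · intro r hr
    simp [n2 r hr]
  · intro r hr
    have hr0 : (0 : ℝ) < r := by linarith
    have hμ : 0 < r ^ (-μ) := by positivity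
    have : 0 < 1 + C / r ^ 2 := by positivity
    simp only [f1 r hr, hfar' r hr.le, e1 _ _ hr0, e2 _ _ hr0]
    generalize r ^ (-μ) = a at *
    generalize hc : 1 + C / r ^ 2 = b at *
    field_simp
    ring
  · intro r hr
    have hr0 : (0 : ℝ) < r := by linarith
    have hμ : 0 < r ^ (-μ) := by positivity
    have : 0 < 1 + C / r ^ 2 := by positivity
    simp only [f2 r hr, hfar' r hr.le, e1 _ _ hr0, e2 _ _ hr0]
    generalize r ^ (-μ) = a at *
    generalize hc : 1 + C / r ^ 2 = b at *
    field_simp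
    ring
  · intro r hr
    convert hφ1 r hr using 1
    have := (hpos r hr).ne'
    field_simp
  · intro r hr
    have h0 := (hpos r hr).ne'
    have h1 : HasDerivAt (fun r => r * deriv φ r / φ r)
        (((1 * deriv φ r + r * deriv (deriv φ) r) * φ r - r * deriv φ r * deriv φ r) / φ r ^ 2) r :=
      ((hasDerivAt_id' r).mul (hφ2 r hr)).div (hφ1 r hr) h0
    convert h1 using 1
    field_simp

/-! ### The bounded solution of the equation for `β` -/

/-- A function whose derivative on `r > 1` is a combination of `r^{δ-3}`, `r^{δ-5}`, `r^{δ-7}` is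
`O(r^{δ-2})` if `δ > 2`; if `δ = 2` and there is no logarithmic term; or if `δ < 2` and its limit at
infinity, which is the left-hand side of the last equation, vanishes. -/
theorem tail_bound {f f' : ℝ → ℝ} {δ A₀ A₁ A₂ : ℝ} (hf : ∀ r > 0, HasDerivAt f (f' r) r)
    (hf' : ∀ r > 1, f' r = A₀ * r ^ (δ - 3) + A₁ * r ^ (δ - 5) + A₂ * r ^ (δ - 7))
    (h : 2 < δ ∨ (δ = 2 ∧ A₀ = 0) ∨
      (δ < 2 ∧ f 1 + A₀ / (2 - δ) + A₁ / (4 - δ) + A₂ / (6 - δ) = 0)) :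
    ∃ B : ℝ, ∀ r > 1, |f r| ≤ B * r ^ (δ - 2) := by
  have pw : ∀ (a A r : ℝ), r > 0 →
      HasDerivAt (fun x : ℝ => A * (x ^ a)) (A * (a * r ^ (a - 1))) r :=
    fun a A r hr => (Real.hasDerivAt_rpow_const (Or.inl (by linarith))).const_mul A
  have mono : ∀ (A a b r : ℝ), 1 < r → a ≤ b → |A * r ^ a| ≤ |A| * r ^ b := by
    intro A a b r hr hab
    have h0 : 0 < r := by linarith
    rw [abs_mul, abs_of_pos (Real.rpow_pos_of_pos h0 a)]
    exact mul_le_mul_of_nonneg_left (Real.rpow_le_rpow_of_exponent_le hr.le hab) (abs_nonneg _)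
  rcases h with h | ⟨h, h0⟩ | ⟨h, h0⟩
  -- `δ > 2`: the derivative is `O(r^{δ-3})` with exponent above `-1`
  · set A := |A₀| + |A₁| + |A₂| with hA
    have hAn : 0 ≤ A := by positivity
    have hδ : 0 < δ - 2 := by linarith
    have hb : ∀ r > 1, |f' r| ≤ A * r ^ (δ - 3) := by
      intro r hr
      rw [hf' r hr]
      have a1 := mono A₀ (δ - 3) (δ - 3) r hr le_rfl
      have a2 := mono A₁ (δ - 5) (δ - 3) r hr (by linarith)
      have a3 := mono A₂ (δ - 7) (δ - 3) r hr (by linarith)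
      have a4 := abs_add_three (A₀ * r ^ (δ - 3)) (A₁ * r ^ (δ - 5)) (A₂ * r ^ (δ - 7))
      rw [hA]; linarith
    have hder : ∀ s r : ℝ, s * A / (δ - 2) * ((δ - 2) * r ^ (δ - 2 - 1)) = s * (A * r ^ (δ - 3)) := by
      intro s r
      rw [show δ - 2 - 1 = δ - 3 by ring]; field_simp
    refine ⟨|f 1| + A / (δ - 2), fun r hr => ?_⟩
    have u := sub_le_sub_of_deriv_le one_pos hr.le hf (pw (δ - 2) (1 * A / (δ - 2))) (by
      intro s hs
      rw [hder]; linarith [(abs_le.1 (hb s hs.1)).2])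
    have l := sub_le_sub_of_deriv_le one_pos hr.le (pw (δ - 2) (-1 * A / (δ - 2))) hf (by
      intro s hs
      rw [hder]; linarith [(abs_le.1 (hb s hs.1)).1])
    simp only [Real.one_rpow] at u l
    have h1 : 1 ≤ r ^ (δ - 2) := Real.one_le_rpow hr.le hδ.le
    have h2 : |f 1| * 1 ≤ |f 1| * r ^ (δ - 2) := mul_le_mul_of_nonneg_left h1 (abs_nonneg _)
    have h3 : 0 ≤ A / (δ - 2) := by positivity
    have h4 := le_abs_self (f 1)
    have h5 := neg_abs_le (f 1)
    rw [show 1 * A / (δ - 2) = A / (δ - 2) by ring] at u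
    rw [show -1 * A / (δ - 2) = -(A / (δ - 2)) by ring] at l
    rw [abs_le]
    constructor <;> nlinarith
  -- `δ = 2`: the derivative is `O(r^{-3})`, so the function is bounded
  · subst h h0
    set A := |A₁| + |A₂| with hA
    have hAn : 0 ≤ A := by positivity
    have hb : ∀ r > 1, |f' r| ≤ A * r ^ (-3 : ℝ) := by
      intro r hr
      rw [hf' r hr, zero_mul, zero_add]
      have a2 := mono A₁ (2 - 5) (-3) r hr (by norm_num)
      have a3 := mono A₂ (2 - 7) (-3) r hr (by norm_num)
      have a4 := abs_add_le (A₁ * r ^ ((2:ℝ) - 5)) (A₂ * r ^ ((2:ℝ) - 7))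
      rw [hA]; linarith
    have hder : ∀ s r : ℝ, s * A / 2 * ((-2) * r ^ ((-2 : ℝ) - 1)) = -s * (A * r ^ (-3 : ℝ)) := by
      intro s r
      rw [show (-2 : ℝ) - 1 = -3 by norm_num]; ring
    refine ⟨|f 1| + A / 2, fun r hr => ?_⟩
    have u := sub_le_sub_of_deriv_le one_pos hr.le hf (pw (-2) (-1 * A / 2)) (by
      intro s hs
      rw [hder]; linarith [(abs_le.1 (hb s hs.1)).2])
    have l := sub_le_sub_of_deriv_le one_pos hr.le (pw (-2) (1 * A / 2)) hf (by
      intro s hs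
      rw [hder]; linarith [(abs_le.1 (hb s hs.1)).1])
    simp only [Real.one_rpow] at u l
    have h1 : 0 < r ^ (-2 : ℝ) := Real.rpow_pos_of_pos (by linarith) _
    have h2 : 0 ≤ A * r ^ (-2 : ℝ) := by positivity
    have h4 := le_abs_self (f 1)
    have h5 := neg_abs_le (f 1)
    rw [show (2 : ℝ) - 2 = 0 by norm_num, Real.rpow_zero, abs_le]
    constructor <;> linarith
  -- `δ < 2`: the function is its limit, which is zero, plus the explicit decaying antiderivative
  · have hg : ∀ r > 0, HasDerivAt (fun r => A₀ / (δ - 2) * r ^ (δ - 2) +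
        A₁ / (δ - 4) * r ^ (δ - 4) + A₂ / (δ - 6) * r ^ (δ - 6))
        (A₀ / (δ - 2) * ((δ - 2) * r ^ (δ - 2 - 1)) + A₁ / (δ - 4) * ((δ - 4) * r ^ (δ - 4 - 1)) +
          A₂ / (δ - 6) * ((δ - 6) * r ^ (δ - 6 - 1))) r :=
      fun r hr => ((pw (δ - 2) _ r hr).add (pw (δ - 4) _ r hr)).add (pw (δ - 6) _ r hr)
    have d2 : δ - 2 ≠ 0 := by linarith
    have d4 : δ - 4 ≠ 0 := by linarith
    have d6 : δ - 6 ≠ 0 := by linarith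
    refine ⟨|A₀ / (δ - 2)| + |A₁ / (δ - 4)| + |A₂ / (δ - 6)|, fun r hr => ?_⟩
    have e := sub_eq_sub_of_deriv_eq one_pos hr.le hf hg (by
      intro s hs
      rw [hf' s hs.1, show δ - 2 - 1 = δ - 3 by ring, show δ - 4 - 1 = δ - 5 by ring,
        show δ - 6 - 1 = δ - 7 by ring]
      field_simp)
    simp only [Real.one_rpow, mul_one] at e
    rw [show 2 - δ = -(δ - 2) by ring, show 4 - δ = -(δ - 4) by ring,
      show 6 - δ = -(δ - 6) by ring] at h0
    simp only [div_neg] at h0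
    have e' : f r = A₀ / (δ - 2) * r ^ (δ - 2) +
        A₁ / (δ - 4) * r ^ (δ - 4) + A₂ / (δ - 6) * r ^ (δ - 6) := by linarith
    rw [e']
    have a1 := mono (A₀ / (δ - 2)) (δ - 2) (δ - 2) r hr le_rfl
    have a2 := mono (A₁ / (δ - 4)) (δ - 4) (δ - 2) r hr (by linarith)
    have a3 := mono (A₂ / (δ - 6)) (δ - 6) (δ - 2) r hr (by linarith)
    have a4 := abs_add_three (A₀ / (δ - 2) * r ^ (δ - 2)) (A₁ / (δ - 4) * r ^ (δ - 4))
      (A₂ / (δ - 6) * r ^ (δ - 6))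
    linarith

/-- A weighted average of `a` and `b` is at most `a + b`; used with `x = C / r²` in the far field. -/
theorem abs_le_of_weighted {x y a b : ℝ} (hx : 0 ≤ x) (ha : 0 ≤ a) (hb : 0 ≤ b)
    (h : y * (1 + x) = a + b * x) : |y| ≤ a + b := by
  have hx1 : 0 < 1 + x := by linarith
  rw [eq_div_of_mul_eq hx1.ne' h, abs_of_nonneg (by positivity), div_le_iff₀ hx1]
  nlinarith [mul_nonneg ha hx]

theorem LogProfile.abs_p_le {μ C : ℝ} {φ p q : ℝ → ℝ} (hP : LogProfile μ C φ p q)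
    (hμ : 0 ≤ μ) (hC : 0 ≤ C) (r : ℝ) (hr : 1 < r) : |p r| ≤ μ + (μ + 2) := by
  rw [← abs_neg]
  refine abs_le_of_weighted (x := C / r ^ 2) (by positivity) hμ (by linarith) ?_
  have := hP.far_p r hr
  linear_combination -this

/-- For `n = m + 2` and the correction constant `C = 1/δ`, some `α > 0` admits a bounded smooth solution
`β = (αK + L)/ρ - αp` of the real part of the radial equation. The value of `α` depends on the sign
of `δ - 2`. -/
theorem exists_beta {μ C δ : ℝ} {m : ℕ} {φ p q : ℝ → ℝ} (hP : LogProfile μ C φ p q)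
    (hμ : 0 ≤ μ) (hδ : δ = m + 2 - 2 * μ) (hδ0 : 0 < δ) (hC : C = 1 / δ) :
    ∃ (α : ℝ) (β : ℝ → ℝ), 0 < α ∧ BddPos β ∧ ContDiffOn ℝ (⊤ : ℕ∞) β (Set.Ioi 0) ∧
      ∀ r > 0, HasDerivAt β ((r ^ 2 * (μ + p r) / 2 - α * (q r + (m + 1) * p r - (m + 2)) -
        β r * (2 * p r + m)) / r) r := by
  have hC0 : 0 < C := by rw [hC]; positivity
  set ρ : ℝ → ℝ := fun r => φ r ^ 2 * r ^ m with hρ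
  have hρpos : ∀ r > 0, 0 < ρ r := fun r hr => by
    have := hP.pos r hr
    simp only [hρ]; positivity
  have hρs : ContDiffOn ℝ (⊤ : ℕ∞) ρ (Set.Ioi 0) :=
    (hP.smooth.pow 2).mul (contDiffOn_id.pow m)
  have hρd : ∀ r > 0, HasDerivAt ρ ((2 * p r + m) * ρ r / r) r := by
    intro r hr
    refine (((hP.deriv_φ r hr).fun_pow 2).fun_mul (hasDerivAt_pow m r)).congr_deriv ?_
    simp only [hρ]
    rcases m with _ | m
    · simp; field_simp
    · simp [pow_succ]; field_simp
  -- `ρ` is the integrating factor; `K' = k` and `L' = l` below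
  set k : ℝ → ℝ := fun r => ρ r * (p r ^ 2 + (m + 2)) / r with hk
  set l : ℝ → ℝ := fun r => ρ r * r * (μ + p r) / 2 with hl
  have hid : ∀ r ∈ Set.Ioi (0 : ℝ), r ≠ 0 := fun r hr => ne_of_gt hr
  have hks : ContDiffOn ℝ (⊤ : ℕ∞) k (Set.Ioi 0) :=
    (hρs.mul ((hP.smooth_p.pow 2).add contDiffOn_const)).div contDiffOn_id hid
  have hls : ContDiffOn ℝ (⊤ : ℕ∞) l (Set.Ioi 0) :=
    ((hρs.mul contDiffOn_id).mul (contDiffOn_const.add hP.smooth_p)).div_const 2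
  have hm2 : (0 : ℝ) < m + 2 := by positivity
  have hm4 : (0 : ℝ) < m + 4 := by positivity
  obtain ⟨K, hK0, hK⟩ := exists_antideriv hks.continuousOn ((m + 3) / (m + 2) * (1 / 2) ^ (m + 2))
  obtain ⟨L, hL0, hL⟩ := exists_antideriv hls.continuousOn
    ((μ + 1) / (2 * (m + 4)) * (1 / 2) ^ (m + 4))
  -- near the origin `φ r = r`, and the initial values are those of antiderivatives vanishing at `0`
  have hpw : ∀ (A : ℝ) (j : ℕ) (r : ℝ), r > 0 →
      HasDerivAt (fun x : ℝ => A * x ^ (j + 1)) (A * ((j + 1) * r ^ j)) r := by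
    intro A j r _
    simpa using (hasDerivAt_pow (j + 1) r).const_mul A
  have hKn : ∀ r > 0, r ≤ 1 / 2 → K r = (m + 3) / (m + 2) * r ^ (m + 2) := by
    intro r hr hr2
    have := sub_eq_sub_of_deriv_eq hr hr2 hK (hpw ((m + 3) / (m + 2)) (m + 1)) (by
      intro s hs
      have hs' : s ∈ Set.Ioo (0 : ℝ) (3 / 4) := ⟨hr.trans hs.1, by linarith [hs.2]⟩
      have := hs'.1.ne'
      simp only [hk, hρ, hP.near s hs', hP.near_p s hs']
      push_cast
      field_simp
      ring)
    rw [hK0] at this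
    linarith
  have hLn : ∀ r > 0, r ≤ 1 / 2 → L r = (μ + 1) / (2 * (m + 4)) * r ^ (m + 4) := by
    intro r hr hr2
    have := sub_eq_sub_of_deriv_eq hr hr2 hL (hpw ((μ + 1) / (2 * (m + 4))) (m + 3)) (by
      intro s hs
      have hs' : s ∈ Set.Ioo (0 : ℝ) (3 / 4) := ⟨hr.trans hs.1, by linarith [hs.2]⟩
      have := hs'.1.ne'
      simp only [hl, hρ, hP.near s hs', hP.near_p s hs']
      push_cast
      field_simp
      ring)
    rw [hL0] at this
    linarith
  have hρf : ∀ r ≥ 1, ρ r = r ^ (δ - 2) * (1 + C / r ^ 2) ^ 2 := by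
    intro r hr
    have hr0 : 0 < r := by linarith
    have : r ^ (δ - 2) = (r ^ (-μ)) ^ 2 * r ^ m := by
      rw [← Real.rpow_natCast r m, ← Real.rpow_mul_natCast hr0.le, ← Real.rpow_add hr0, hδ]
      congr 1; push_cast; ring
    simp only [hρ, hP.far r hr, this]; ring
  have e3 : ∀ r : ℝ, r > 0 → r ^ (δ - 3) = r ^ (δ - 2) / r := fun r hr => by
    rw [← Real.rpow_sub_one hr.ne']; congr 1; ring
  have e5 : ∀ r : ℝ, r > 0 → r ^ (δ - 5) = r ^ (δ - 2) / r ^ 3 := fun r hr => by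
    rw [← Real.rpow_natCast r 3, ← Real.rpow_sub hr]; congr 1; push_cast; ring
  have e7 : ∀ r : ℝ, r > 0 → r ^ (δ - 7) = r ^ (δ - 2) / r ^ 5 := fun r hr => by
    rw [← Real.rpow_natCast r 5, ← Real.rpow_sub hr]; congr 1; push_cast; ring
  set c₀ : ℝ := μ ^ 2 + (m + 2) with hc₀
  set c₁ : ℝ := 2 * C * (μ * (μ + 2) + (m + 2)) with hc₁
  set c₂ : ℝ := C ^ 2 * ((μ + 2) ^ 2 + (m + 2)) with hc₂
  have hc₀p : 0 < c₀ := by positivity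
  have hc₁p : 0 < c₁ := by positivity
  have hc₂p : 0 < c₂ := by positivity
  have hkf : ∀ r > 1, k r = c₀ * r ^ (δ - 3) + c₁ * r ^ (δ - 5) + c₂ * r ^ (δ - 7) := by
    intro r hr
    have hr0 : 0 < r := by linarith
    have hp := hP.far_p r hr
    simp only [hk, hρf r hr.le, e3 r hr0, e5 r hr0, e7 r hr0]
    rw [show r ^ (δ - 2) * (1 + C / r ^ 2) ^ 2 * (p r ^ 2 + (m + 2)) / r =
      r ^ (δ - 2) / r * ((p r * (1 + C / r ^ 2)) ^ 2 + (m + 2) * (1 + C / r ^ 2) ^ 2) by ring, hp,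
      hc₀, hc₁, hc₂]
    field_simp
    ring
  have hlf : ∀ r > 1, l r = -C * r ^ (δ - 3) + -C ^ 2 * r ^ (δ - 5) + 0 * r ^ (δ - 7) := by
    intro r hr
    have hr0 : 0 < r := by linarith
    have hp := hP.far_p r hr
    simp only [hl, hρf r hr.le, e3 r hr0, e5 r hr0, e7 r hr0]
    rw [show r ^ (δ - 2) * (1 + C / r ^ 2) ^ 2 * r * (μ + p r) / 2 =
      r ^ (δ - 2) * r * (1 + C / r ^ 2) * (μ * (1 + C / r ^ 2) + p r * (1 + C / r ^ 2)) / 2 by ring,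
      hp]
    field_simp
    ring
  have hK1 : 0 < K 1 := by
    have := sub_le_sub_of_deriv_le (f := fun _ => (0 : ℝ)) (f' := fun _ => 0)
      (by norm_num : (0 : ℝ) < 1 / 2) (by norm_num : (1 / 2 : ℝ) ≤ 1)
      (fun r _ => hasDerivAt_const r 0) hK (by
        intro s hs
        have hs0 : 0 < s := by linarith [hs.1]
        have := hρpos s hs0
        simp only [hk]; positivity)
    have h2 : 0 < K (1 / 2) := by rw [hK0]; positivity
    linarith
  have hL1 : L 1 ≤ (1 + C) ^ 2 / 4 := by
    -- `(ρ r² / 4)' = l + ρ r δ / 4 ≥ l`, because `δ > 0`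
    have hd : ∀ r > 0, HasDerivAt (fun r => ρ r * r ^ 2 / 4)
        (((2 * p r + m) * ρ r / r * r ^ 2 + ρ r * (2 * r)) / 4) r := by
      intro r hr
      have := ((hρd r hr).fun_mul (hasDerivAt_pow 2 r)).div_const 4
      simpa using this
    have := sub_le_sub_of_deriv_le (by norm_num : (0 : ℝ) < 1 / 2) (by norm_num : (1 / 2 : ℝ) ≤ 1)
      hL hd (by
        intro s hs
        have hs0 : 0 < s := by linarith [hs.1]
        have h1 := mul_pos (mul_pos (hρpos s hs0) hs0) hδ0
        rw [show ((2 * p s + m) * ρ s / s * s ^ 2 + ρ s * (2 * s)) / 4 = l s + ρ s * s * δ / 4 by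
          simp only [hl, hδ]; field_simp; ring]
        linarith)
    have h1 : ρ 1 = (1 + C) ^ 2 := by rw [hρf 1 le_rfl]; simp
    have h2 : ρ (1 / 2) = (1 / 2) ^ (m + 2) := by
      simp only [hρ]; rw [hP.near _ ⟨by norm_num, by norm_num⟩]; ring
    rw [h1, h2, hL0] at this
    have h3 : (μ + 1) / (2 * (m + 4)) ≤ 1 / 4 := by
      rw [div_le_div_iff₀ (by positivity) (by norm_num)]; linarith
    have h4 : (μ + 1) / (2 * ((m : ℝ) + 4)) * (1 / 2) ^ (m + 4) ≤ 1 / 4 * (1 / 2) ^ (m + 4) :=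
      mul_le_mul_of_nonneg_right h3 (by positivity)
    have h5 : ((1 : ℝ) / 2) ^ (m + 4) = (1 / 2) ^ (m + 2) * (1 / 4) := by ring
    rw [h5] at h4 this
    linarith
  obtain ⟨α, hα, B, hB⟩ : ∃ α > 0, ∃ B : ℝ, ∀ r > 1, |α * K r + L r| ≤ B * r ^ (δ - 2) := by
    have hd : ∀ α : ℝ, ∀ r > 0, HasDerivAt (fun r => α * K r + L r) (α * k r + l r) r :=
      fun α r hr => ((hK r hr).const_mul α).add (hL r hr)
    have hdf : ∀ α : ℝ, ∀ r > 1, α * k r + l r =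
        (α * c₀ - C) * r ^ (δ - 3) + (α * c₁ - C ^ 2) * r ^ (δ - 5) + (α * c₂) * r ^ (δ - 7) := by
      intro α r hr
      rw [hkf r hr, hlf r hr]; ring
    rcases le_or_gt 2 δ with h | h
    · refine ⟨C / c₀, by positivity, tail_bound (hd _) (hdf _) ?_⟩
      rcases h.lt_or_eq with h | h
      · exact Or.inl h
      · exact Or.inr (Or.inl ⟨h.symm, by field_simp; ring⟩)
    · have d2 : 0 < 2 - δ := by linarith
      have d4 : 0 < 4 - δ := by linarith
      have d6 : 0 < 6 - δ := by linarith
      -- `k'` and `l'` are the limits of `K` and `L` at infinity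
      set k' := K 1 + c₀ / (2 - δ) + c₁ / (4 - δ) + c₂ / (6 - δ) with hk'
      have hk'p : 0 < k' := by positivity
      set l' := L 1 - C / (2 - δ) - C ^ 2 / (4 - δ) with hl'
      -- `L 1 ≤ (1 + C)² / 4` and `C δ = 1` give `l' ≤ 1/4 - 1/(2(2 - δ)) < 0`
      have hl'n : l' < 0 := by
        have i2 : C / (2 - δ) - C / 2 - 1 / 4 = 1 / (2 * (2 - δ)) - 1 / 4 := by
          rw [hC]; field_simp; ring
        have i3 : 1 / 4 < 1 / (2 * (2 - δ)) := by
          apply one_div_lt_one_div_of_lt <;> linarith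
        have i4 : C ^ 2 / 4 ≤ C ^ 2 / (4 - δ) := by
          apply div_le_div_of_nonneg_left <;> first | positivity | linarith
        rw [hl']
        nlinarith
      refine ⟨-l' / k', div_pos (by linarith) hk'p,
        tail_bound (hd _) (hdf _) (Or.inr (Or.inr ⟨h, ?_⟩))⟩
      have h0 : -l' / k' * k' + l' = 0 := by field_simp; ring
      generalize -l' / k' = a at *
      rw [hl', hk'] at h0
      rw [← h0]
      ring
  have hIs : ContDiffOn ℝ (⊤ : ℕ∞) (fun r => α * K r + L r) (Set.Ioi 0) := by
    rw [contDiffOn_infty_iff_deriv_of_isOpen isOpen_Ioi]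
    have hd : ∀ r > 0, HasDerivAt (fun r => α * K r + L r) (α * k r + l r) r :=
      fun r hr => ((hK r hr).const_mul α).add (hL r hr)
    refine ⟨fun r hr => (hd r hr).differentiableAt.differentiableWithinAt, ?_⟩
    exact ((contDiffOn_const.mul hks).add hls).congr fun r hr => (hd r hr).deriv
  have hβs : ContDiffOn ℝ (⊤ : ℕ∞) (fun r => (α * K r + L r) / ρ r - α * p r) (Set.Ioi 0) :=
    (hIs.div hρs fun r hr => (hρpos r hr).ne').sub (contDiffOn_const.mul hP.smooth_p)
  refine ⟨α, fun r => (α * K r + L r) / ρ r - α * p r, hα, ?_, hβs, ?_⟩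
  · apply BddPos.of_ends hβs.continuousOn
    · refine ⟨α * ((m + 3) / (m + 2)) + (μ + 1) / (2 * (m + 4)) + α, fun r hr hr2 => ?_⟩
      have hr' : r ∈ Set.Ioo (0 : ℝ) (3 / 4) := ⟨hr, by linarith⟩
      rw [hKn r hr hr2, hLn r hr hr2]
      simp only [hρ, hP.near r hr', hP.near_p r hr']
      rw [show (α * ((m + 3) / (m + 2) * r ^ (m + 2)) + (μ + 1) / (2 * (m + 4)) * r ^ (m + 4)) /
        (r ^ 2 * r ^ m) - α * 1 =
        α * ((m + 3) / (m + 2)) + (μ + 1) / (2 * (m + 4)) * r ^ 2 - α by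
          rw [pow_add, pow_add]; field_simp]
      have h1 : r ^ 2 ≤ 1 := by nlinarith
      have h2 : 0 ≤ (μ + 1) / (2 * ((m : ℝ) + 4)) := by positivity
      have h3 := mul_le_mul_of_nonneg_left h1 h2
      have h4 : 0 ≤ (μ + 1) / (2 * ((m : ℝ) + 4)) * r ^ 2 := by positivity
      have h5 : 0 < α * (((m : ℝ) + 3) / (m + 2)) := by positivity
      rw [abs_le]; constructor <;> linarith
    · refine ⟨B + α * (μ + (μ + 2)), fun r hr => ?_⟩
      have hr0 : 0 < r := by linarith
      have hx : 0 < C / r ^ 2 := by positivity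
      have hρ1 : r ^ (δ - 2) ≤ ρ r := by
        rw [hρf r hr.le]
        apply le_mul_of_one_le_right (by positivity)
        nlinarith
      have hB0 : 0 ≤ B := by
        by_contra hB0
        have h1 := (abs_nonneg _).trans (hB r hr)
        have h2 : 0 < r ^ (δ - 2) := by positivity
        nlinarith
      have h1 : |(α * K r + L r) / ρ r| ≤ B := by
        rw [abs_div, abs_of_pos (hρpos r hr0), div_le_iff₀ (hρpos r hr0)]
        exact (hB r hr).trans (mul_le_mul_of_nonneg_left hρ1 hB0)
      have h2 : |α * p r| ≤ α * (μ + (μ + 2)) := by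
        rw [abs_mul, abs_of_pos hα]
        apply mul_le_mul_of_nonneg_left _ hα.le
        exact hP.abs_p_le hμ hC0.le r hr
      exact (abs_sub _ _).trans (add_le_add h1 h2)
  · intro r hr
    have h0 := (hρpos r hr).ne'
    have hd : HasDerivAt (fun r => α * K r + L r) (α * k r + l r) r :=
      ((hK r hr).const_mul α).add (hL r hr)
    refine ((hd.fun_div (hρd r hr) h0).sub ((hP.deriv_p r hr).const_mul α)).congr_deriv ?_
    simp only [hk, hl]
    field_simp
    ring

/-! ### The radial equation -/

/-- The phase `e^{-i log r}`. -/
def phase (r : ℝ) : ℂ := Complex.exp (-Complex.I * (Real.log r : ℂ))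

theorem hasDerivAt_phase {r : ℝ} (hr : 0 < r) :
    HasDerivAt phase (-Complex.I / r * phase r) r := by
  have h := (((Real.hasDerivAt_log hr.ne').ofReal_comp).const_mul (-Complex.I)).cexp
  refine h.congr_deriv ?_
  simp only [phase]
  push_cast
  ring

theorem norm_phase (r : ℝ) : ‖phase r‖ = 1 := by
  rw [phase, show -Complex.I * (Real.log r : ℂ) = ((-Real.log r : ℝ) : ℂ) * Complex.I by
    push_cast; ring]
  exact Complex.norm_exp_ofReal_mul_I _

theorem contDiffOn_phase : ContDiffOn ℝ (⊤ : ℕ∞) phase (Set.Ioi 0) := by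
  have h1 : ContDiffOn ℝ (⊤ : ℕ∞) Real.log (Set.Ioi 0) :=
    Real.contDiffOn_log.mono fun x hx => ne_of_gt hx
  exact (contDiffOn_const.mul (Complex.ofRealCLM.contDiff.comp_contDiffOn h1)).cexp

/-- Solution of the radial problem for `n = m + 2`: the last clause is the profile equation for the radial
flux `F = (α + iβ)(p - i)(φ/r) e^{-i log r}`. -/
theorem exists_radial (m : ℕ) {μ : ℝ} (hμ : 0 ≤ μ) (hμm : 2 * μ < m + 2) :
    ∃ (α C : ℝ) (β γ φ p : ℝ → ℝ), 0 < α ∧ 0 ≤ C ∧ BddPos β ∧ BddPos γ ∧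
      ContDiffOn ℝ (⊤ : ℕ∞) β (Set.Ioi 0) ∧ ContDiffOn ℝ (⊤ : ℕ∞) γ (Set.Ioi 0) ∧
      (∀ r > (0 : ℝ), 0 < φ r) ∧ ContDiffOn ℝ (⊤ : ℕ∞) φ (Set.Ioi 0) ∧
      (∀ r ∈ Set.Ioo (0 : ℝ) (3 / 4), φ r = r) ∧
      (∀ r > (1 : ℝ), φ r = r ^ (-μ) + C * r ^ (-μ - 2)) ∧
      BddPos p ∧ BddPos (fun r => φ r / r) ∧
      (∀ r > 0, HasDerivAt φ (p r * φ r / r) r) ∧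
      ∀ r > 0, HasDerivAt
        (fun r => ((α : ℂ) + Complex.I * β r) * (((p r : ℂ) - Complex.I) * (φ r / r)) * phase r)
        ((((μ : ℂ) + p r) * φ r / 2 - (m + 1) / r *
          (((α : ℂ) + Complex.I * β r) * (((p r : ℂ) - Complex.I) * (φ r / r))) +
          (m + 1) / (r : ℂ) ^ 2 * (((α : ℂ) + Complex.I * γ r) * φ r)) * phase r) r := by
  set δ : ℝ := m + 2 - 2 * μ with hδ
  have hδ0 : 0 < δ := by linarith
  set C : ℝ := 1 / δ with hC
  have hC0 : 0 < C := by positivity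
  obtain ⟨φ, p, q, hP, hfar⟩ := exists_logProfile μ C hC0.le
  obtain ⟨α, β, hα, hβb, hβs, hβd⟩ := exists_beta hP hμ hδ hδ0 hC
  have hpb : BddPos p := by
    apply BddPos.of_ends hP.smooth_p.continuousOn
    · refine ⟨1, fun r hr hr2 => ?_⟩
      rw [hP.near_p r ⟨hr, by linarith⟩]; simp
    · exact ⟨_, fun r hr => hP.abs_p_le hμ hC0.le r hr⟩
  have hqb : BddPos q := by
    apply BddPos.of_ends hP.smooth_q.continuousOn
    · refine ⟨0, fun r hr hr2 => ?_⟩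
      rw [hP.near_q r ⟨hr, by linarith⟩]; simp
    · refine ⟨μ * (μ + 1) + (μ + 2) * (μ + 3), fun r hr => ?_⟩
      have h0 : 0 < r := by linarith
      refine abs_le_of_weighted (x := C / r ^ 2) (by positivity) (by positivity) (by positivity) ?_
      rw [hP.far_q r hr]; ring
  have hsb : BddPos (fun r => r ^ 2 * (μ + p r) / 2) := by
    apply BddPos.of_ends
    · exact (((contDiffOn_id.pow 2).mul
        (contDiffOn_const.add hP.smooth_p)).div_const 2).continuousOn
    · refine ⟨(μ + 1), fun r hr hr2 => ?_⟩
      rw [hP.near_p r ⟨hr, by linarith⟩, abs_of_nonneg (by positivity)]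
      have : r ^ 2 ≤ 1 := by nlinarith
      nlinarith
    -- here `μ + p = -2C / r² / (1 + C / r²)`, so the factor `r²` is compensated
    · refine ⟨C + 0, fun r hr => ?_⟩
      have h0 : 0 < r := by linarith
      rw [← abs_neg]
      refine abs_le_of_weighted (x := C / r ^ 2) (by positivity) hC0.le le_rfl ?_
      have := hP.far_p r hr
      rw [show -(r ^ 2 * (μ + p r) / 2) * (1 + C / r ^ 2) =
        -(r ^ 2 * (μ * (1 + C / r ^ 2) + p r * (1 + C / r ^ 2)) / 2) by ring, this]
      field_simp
      ring
  have hφb : BddPos (fun r => φ r / r) := by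
    apply BddPos.of_ends
    · exact (hP.smooth.div contDiffOn_id fun r hr => ne_of_gt hr).continuousOn
    · refine ⟨1, fun r hr hr2 => ?_⟩
      rw [hP.near r ⟨hr, by linarith⟩, div_self hr.ne']; simp
    · refine ⟨1 + C, fun r hr => ?_⟩
      have h0 : 0 < r := by linarith
      have h1 : r ^ (-μ) ≤ 1 := Real.rpow_le_one_of_one_le_of_nonpos hr.le (by linarith)
      have h2 : C / r ^ 2 ≤ C := div_le_self hC0.le (by nlinarith)
      have h3 : 0 < r ^ (-μ) := by positivity
      have h4 : 0 < C / r ^ 2 := by positivity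
      rw [abs_of_pos (div_pos (hP.pos r h0) h0), div_le_iff₀ h0, hP.far r hr.le]
      calc r ^ (-μ) * (1 + C / r ^ 2) ≤ 1 * (1 + C) := by gcongr
        _ ≤ (1 + C) * r := by nlinarith
  -- `D = r β'`, by the equation for `β`
  set D : ℝ → ℝ := fun r => r ^ 2 * (μ + p r) / 2 - α * (q r + (m + 1) * p r - (m + 2)) -
    β r * (2 * p r + m) with hD
  have hDb : BddPos D :=
    (hsb.sub ((BddPos.const α).mul ((hqb.add ((BddPos.const (m + 1)).mul hpb)).sub
      (BddPos.const (m + 2))))).sub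
      (hβb.mul (((BddPos.const 2).mul hpb).add (BddPos.const m)))
  have hDs : ContDiffOn ℝ (⊤ : ℕ∞) D (Set.Ioi 0) :=
    ((((contDiffOn_id.pow 2).mul (contDiffOn_const.add hP.smooth_p)).div_const 2).sub
      (contDiffOn_const.mul ((hP.smooth_q.add (contDiffOn_const.mul hP.smooth_p)).sub
        contDiffOn_const))).sub
      (hβs.mul ((contDiffOn_const.mul hP.smooth_p).add contDiffOn_const))
  -- `γ` is what the imaginary part of the radial equation forces it to be
  set γ : ℝ → ℝ := fun r => 1 / ((m : ℝ) + 1) * (D r * p r + β r * q r - α * (p r - 1) -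
    α * p r - β r + (m + 1) * (β r * p r - α)) with hγ
  have hγb : BddPos γ :=
    (BddPos.const _).mul ((((((hDb.mul hpb).add (hβb.mul hqb)).sub
      ((BddPos.const α).mul (hpb.sub (BddPos.const 1)))).sub ((BddPos.const α).mul hpb)).sub
      hβb).add ((BddPos.const (m + 1)).mul ((hβb.mul hpb).sub (BddPos.const α))))
  have hγs : ContDiffOn ℝ (⊤ : ℕ∞) γ (Set.Ioi 0) :=
    contDiffOn_const.mul ((((((hDs.mul hP.smooth_p).add (hβs.mul hP.smooth_q)).sub
      (contDiffOn_const.mul (hP.smooth_p.sub contDiffOn_const))).sub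
      (contDiffOn_const.mul hP.smooth_p)).sub hβs).add
      (contDiffOn_const.mul ((hβs.mul hP.smooth_p).sub contDiffOn_const)))
  refine ⟨α, C, β, γ, φ, p, hα, hC0.le, hβb, hγb, hβs, hγs, hP.pos, hP.smooth, hP.near, hfar,
    hpb, hφb, hP.deriv_φ, fun r hr => ?_⟩
  have hr0 := hr.ne'
  have hm1 : (m : ℝ) + 1 ≠ 0 := by positivity
  have hφ := hP.deriv_φ r hr
  have hp := hP.deriv_p r hr
  have hβ := hβd r hr
  -- `P` and `Q` are the real and imaginary parts of `F` with the phase removed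
  set P : ℝ → ℝ := fun r => (α * p r + β r) * (φ r / r) with hPdef
  set Q : ℝ → ℝ := fun r => (β r * p r - α) * (φ r / r) with hQdef
  have hPd : HasDerivAt P ((μ + p r) * φ r / 2 - Q r / r - (m + 1) / r * P r +
      (m + 1) / r ^ 2 * (α * φ r)) r := by
    refine (((hp.const_mul α).fun_add hβ).fun_mul
      (hφ.fun_div (hasDerivAt_id' r) hr0)).congr_deriv ?_
    simp only [hPdef, hQdef]
    field_simp
    ring
  have hQd : HasDerivAt Q (P r / r - (m + 1) / r * Q r + (m + 1) / r ^ 2 * (γ r * φ r)) r := by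
    refine (((hβ.fun_mul hp).sub_const α).fun_mul
      (hφ.fun_div (hasDerivAt_id' r) hr0)).congr_deriv ?_
    simp only [hPdef, hQdef, hγ, hD]
    field_simp
    ring
  have hF : (fun r => ((α : ℂ) + Complex.I * β r) *
      (((p r : ℂ) - Complex.I) * (φ r / r)) * phase r) =
      fun r => ((P r : ℂ) + Complex.I * Q r) * phase r := by
    funext s
    simp only [hPdef, hQdef]
    push_cast
    linear_combination (-(β s : ℂ) * (φ s / s) * phase s) * Complex.I_sq
  rw [hF]
  refine ((hPd.ofReal_comp.fun_add (hQd.ofReal_comp.const_mul Complex.I)).fun_mul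
    (hasDerivAt_phase hr)).congr_deriv ?_
  have e : ((α : ℂ) + Complex.I * β r) * (((p r : ℂ) - Complex.I) * (φ r / r)) =
      (P r : ℂ) + Complex.I * Q r := by
    simp only [hPdef, hQdef]
    push_cast
    linear_combination (-(β r : ℂ) * (φ r / r)) * Complex.I_sq
  rw [e]
  push_cast
  linear_combination (-(Q r : ℂ) / r * phase r) * Complex.I_sq

/-! ### From the radial equation to the equation on `ℝⁿ` -/

/-- Derivative of a radial function `f(|x|)`, in terms of its values on the coordinate vectors. -/
theorem hasFDerivAt_radial {n : ℕ} {f : ℝ → ℂ} {f' : ℂ} {x : EuclideanSpace ℝ (Fin n)}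
    (hx : x ≠ 0) (hf : HasDerivAt f f' ‖x‖) :
    ∃ L : EuclideanSpace ℝ (Fin n) →L[ℝ] ℂ, HasFDerivAt (fun y => f ‖y‖) L x ∧
      ∀ k, L (EuclideanSpace.single k 1) = f' * ((x k / ‖x‖ : ℝ) : ℂ) := by
  have hn : ‖x‖ ≠ 0 := norm_ne_zero_iff.2 hx
  have h2 := (hasStrictFDerivAt_norm_sq x).hasFDerivAt.sqrt (pow_ne_zero 2 hn)
  simp only [Real.sqrt_sq (norm_nonneg _)] at h2
  refine ⟨_, hf.hasFDerivAt.comp x h2, fun k => ?_⟩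
  simp [EuclideanSpace.inner_single_right]
  field_simp

theorem hasFDerivAt_coord {n : ℕ} (x : EuclideanSpace ℝ (Fin n)) (j : Fin n) :
    ∃ L : EuclideanSpace ℝ (Fin n) →L[ℝ] ℂ, HasFDerivAt (fun y => ((y j : ℝ) : ℂ)) L x ∧
      ∀ k, L (EuclideanSpace.single k 1) = if k = j then 1 else 0 := by
  let L : EuclideanSpace ℝ (Fin n) →L[ℝ] ℂ := Complex.ofRealCLM.comp (EuclideanSpace.proj j)
  refine ⟨L, L.hasFDerivAt, fun k => ?_⟩
  by_cases h : k = j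
  · subst h; simp [L]
  · simp [L, h, Ne.symm h]

/-- The coefficient matrix `α I + i(β ν⊗ν + γ (I - ν⊗ν))`. -/
def coefA {n : ℕ} (α : ℝ) (β γ : ℝ → ℝ) :
    EuclideanSpace ℝ (Fin n) → Matrix (Fin n) (Fin n) ℂ := fun x k l =>
  (α : ℂ) * (if k = l then 1 else 0) +
    Complex.I * ((β ‖x‖ * (x k * x l / ‖x‖ ^ 2) +
      γ ‖x‖ * ((if k = l then (1 : ℝ) else 0) - x k * x l / ‖x‖ ^ 2) : ℝ) : ℂ)

/-- The function `φ(|x|) (x_j/|x|) e^{-i log |x|}`, extended by `0` to the origin. -/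
def profW {n : ℕ} (φ : ℝ → ℝ) (j : Fin n) : EuclideanSpace ℝ (Fin n) → ℂ := fun x =>
  if x = 0 then 0 else
    (φ ‖x‖ : ℂ) * ((x j / ‖x‖ : ℝ) : ℂ) *
      Complex.exp (-Complex.I * (Real.log ‖x‖ : ℂ))

/-- The radial factor `ψ(r) = φ(r) e^{-i log r} / r`, for which `w(x) = ψ(|x|) x_j`. -/
def psi (φ : ℝ → ℝ) (r : ℝ) : ℂ := (φ r / r : ℂ) * phase r

theorem profW_eq {n : ℕ} (φ : ℝ → ℝ) (j : Fin n) :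
    profW φ j = fun x => psi φ ‖x‖ * ((x j : ℝ) : ℂ) := by
  funext x
  by_cases h : x = 0
  · simp [profW, h]
  · simp only [profW, h, if_false, psi, phase]
    push_cast
    ring

section
variable {n : ℕ} {φ p : ℝ → ℝ}

theorem hasDerivAt_psi (hφ : ∀ r > 0, HasDerivAt φ (p r * φ r / r) r) {r : ℝ} (hr : 0 < r) :
    HasDerivAt (psi φ) ((((p r : ℂ) - Complex.I) * (φ r / r) - φ r / r) / r * phase r) r := by
  have hr' : (r : ℂ) ≠ 0 := by exact_mod_cast hr.ne'
  have h := (((hφ r hr).fun_div (hasDerivAt_id' r) hr.ne').ofReal_comp).fun_mul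
    (hasDerivAt_phase hr)
  have e : (fun r => ((φ r / r : ℝ) : ℂ) * phase r) = psi φ := by
    funext s; simp [psi]
  rw [e] at h
  refine h.congr_deriv ?_
  push_cast
  field_simp
  ring

theorem contDiffOn_psi (hφ : ContDiffOn ℝ (⊤ : ℕ∞) φ (Set.Ioi 0)) :
    ContDiffOn ℝ (⊤ : ℕ∞) (psi φ) (Set.Ioi 0) := by
  have e : (fun r => ((φ r / r : ℝ) : ℂ) * phase r) = psi φ := by
    funext s; simp [psi]
  rw [← e]
  exact (Complex.ofRealCLM.contDiff.comp_contDiffOn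
    (hφ.div contDiffOn_id fun r hr => ne_of_gt hr)).mul contDiffOn_phase

theorem contDiffOn_profW (hφ : ContDiffOn ℝ (⊤ : ℕ∞) φ (Set.Ioi 0)) (j : Fin n) :
    ContDiffOn ℝ (⊤ : ℕ∞) (profW φ j) {x | x ≠ 0} := by
  rw [profW_eq]
  refine ContDiffOn.mul ?_ ?_
  · refine (contDiffOn_psi hφ).comp (t := Set.Ioi 0) (fun x hx => ?_) ?_
    · exact (contDiffAt_norm ℝ hx).contDiffWithinAt
    · intro x hx
      exact norm_pos_iff.2 hx
  · exact (Complex.ofRealCLM.comp (EuclideanSpace.proj j)).contDiff.contDiffOn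

theorem pdC_profW (hφ : ∀ r > 0, HasDerivAt φ (p r * φ r / r) r) (j k : Fin n)
    {x : EuclideanSpace ℝ (Fin n)} (hx : x ≠ 0) :
    pdC (profW φ j) x k =
      (((p ‖x‖ : ℂ) - Complex.I) * (φ ‖x‖ / ‖x‖) - φ ‖x‖ / ‖x‖) / ‖x‖ * phase ‖x‖ *
        ((x k / ‖x‖ : ℝ) : ℂ) * x j + psi φ ‖x‖ * (if k = j then 1 else 0) := by
  obtain ⟨L, hL, hLk⟩ := hasFDerivAt_radial hx (hasDerivAt_psi hφ (norm_pos_iff.2 hx))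
  obtain ⟨M, hM, hMk⟩ := hasFDerivAt_coord x j
  rw [pdC, profW_eq, (hL.fun_mul hM).fderiv]
  simp [hLk, hMk]
  ring

theorem sum_sq_coord (x : EuclideanSpace ℝ (Fin n)) :
    ∑ l, (x l : ℂ) * x l = (‖x‖ : ℂ) ^ 2 := by
  have := EuclideanSpace.norm_sq_eq x
  rw [← Complex.ofReal_pow, this]
  push_cast
  refine Finset.sum_congr rfl fun l _ => ?_
  rw [← Complex.ofReal_pow, Real.norm_eq_abs, sq_abs]
  push_cast; ring

theorem sum_coord_mul_pdC (hφ : ∀ r > 0, HasDerivAt φ (p r * φ r / r) r) (j : Fin n)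
    {x : EuclideanSpace ℝ (Fin n)} (hx : x ≠ 0) :
    ∑ k, (x k : ℂ) * pdC (profW φ j) x k =
      ((p ‖x‖ : ℂ) - Complex.I) * (φ ‖x‖ / ‖x‖) * phase ‖x‖ * x j := by
  have hn : (‖x‖ : ℂ) ≠ 0 := by exact_mod_cast norm_ne_zero_iff.2 hx
  simp only [pdC_profW hφ j _ hx, mul_add, Finset.sum_add_distrib]
  have e1 : ∀ a b : ℂ, ∑ k, (x k : ℂ) * (a * ((x k / ‖x‖ : ℝ) : ℂ) * b) =
      a * b / ‖x‖ * ∑ k, (x k : ℂ) * x k := by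
    intro a b
    rw [Finset.mul_sum]
    refine Finset.sum_congr rfl fun k _ => ?_
    push_cast; ring
  have e2 : ∀ a : ℂ, ∑ k, (x k : ℂ) * (a * (if k = j then 1 else 0)) = x j * a := by
    intro a; simp
  rw [e1, e2, sum_sq_coord, psi]
  field_simp
  ring

/-- `A∇w = H(|x|) e_j + G(|x|) x_j x` with `H = (α + iγ)ψ` and
`r² G = (α + iβ) (rψ)' - H`. -/
theorem flux_eq (hφ : ∀ r > 0, HasDerivAt φ (p r * φ r / r) r) (α : ℝ) (β γ : ℝ → ℝ)
    (j k : Fin n) {x : EuclideanSpace ℝ (Fin n)} (hx : x ≠ 0) :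
    ∑ l, coefA α β γ x k l * pdC (profW φ j) x l =
      ((α : ℂ) + Complex.I * γ ‖x‖) * psi φ ‖x‖ * (if k = j then 1 else 0) +
      (((α : ℂ) + Complex.I * β ‖x‖) *
        (((p ‖x‖ : ℂ) - Complex.I) * (φ ‖x‖ / ‖x‖)) * phase ‖x‖ -
        ((α : ℂ) + Complex.I * γ ‖x‖) * psi φ ‖x‖) / (‖x‖ : ℂ) ^ 2 * (x k * x j) := by
  have hn : (‖x‖ : ℂ) ≠ 0 := by exact_mod_cast norm_ne_zero_iff.2 hx
  have e : ∀ l, coefA α β γ x k l * pdC (profW φ j) x l =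
      ((α : ℂ) + Complex.I * γ ‖x‖) * ((if k = l then 1 else 0) * pdC (profW φ j) x l) +
      Complex.I * (β ‖x‖ - γ ‖x‖) * x k / (‖x‖ : ℂ) ^ 2 * (x l * pdC (profW φ j) x l) := by
    intro l
    simp only [coefA]
    split_ifs <;> push_cast <;> ring
  simp only [e, Finset.sum_add_distrib, ← Finset.mul_sum, sum_coord_mul_pdC hφ j hx]
  simp only [ite_mul, one_mul, zero_mul, Finset.sum_ite_eq, Finset.mem_univ, if_true,
    pdC_profW hφ j _ hx, psi]
  push_cast
  field_simp
  ring

/-- The radial equation `hF` for the flux implies the profile equation at every `x ≠ 0`, by taking the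
divergence of the form of `A∇w` in `flux_eq`. -/
theorem divAgrad_profW (hφ : ∀ r > 0, HasDerivAt φ (p r * φ r / r) r) {α μ : ℝ} {β γ : ℝ → ℝ}
    (hγ : ∀ r > 0, DifferentiableAt ℝ γ r)
    (hF : ∀ r > 0, HasDerivAt
        (fun r => ((α : ℂ) + Complex.I * β r) * (((p r : ℂ) - Complex.I) * (φ r / r)) * phase r)
        ((((μ : ℂ) + p r) * φ r / 2 - (n - 1) / r *
          (((α : ℂ) + Complex.I * β r) * (((p r : ℂ) - Complex.I) * (φ r / r))) +
          (n - 1) / (r : ℂ) ^ 2 * (((α : ℂ) + Complex.I * γ r) * φ r)) * phase r) r)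
    (j : Fin n) {x : EuclideanSpace ℝ (Fin n)} (hx : x ≠ 0) :
    divAgrad (coefA α β γ) (profW φ j) x =
      (1 / 2) * (Complex.I * profW φ j x + (μ : ℂ) * profW φ j x +
        ∑ k, (x k : ℂ) * pdC (profW φ j) x k) := by
  have hr : 0 < ‖x‖ := norm_pos_iff.2 hx
  have hn : (‖x‖ : ℂ) ≠ 0 := by exact_mod_cast hr.ne'
  have hH : HasDerivAt (fun r => ((α : ℂ) + Complex.I * γ r) * psi φ r) _ ‖x‖ :=
    ((((hγ _ hr).hasDerivAt.ofReal_comp).const_mul Complex.I).const_add (α : ℂ)).fun_mul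
      (hasDerivAt_psi hφ hr)
  have hsq : HasDerivAt (fun r : ℝ => (r : ℂ) ^ 2) (2 * ‖x‖) ‖x‖ := by
    simpa using ((hasDerivAt_id' ‖x‖).ofReal_comp).fun_pow 2
  have hG := ((hF _ hr).fun_sub hH).fun_div hsq (pow_ne_zero 2 hn)
  obtain ⟨LH, hLH, hLHk⟩ := hasFDerivAt_radial hx hH
  obtain ⟨LG, hLG, hLGk⟩ := hasFDerivAt_radial hx hG
  obtain ⟨M, hM, hMk⟩ := hasFDerivAt_coord x j
  have hk : ∀ k : Fin n, fderiv ℝ (fun y => ∑ l, coefA α β γ y k l * pdC (profW φ j) y l) x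
      (EuclideanSpace.single k 1) = LH (EuclideanSpace.single k 1) * (if k = j then 1 else 0) +
      ((((α : ℂ) + Complex.I * β ‖x‖) *
        (((p ‖x‖ : ℂ) - Complex.I) * (φ ‖x‖ / ‖x‖)) * phase ‖x‖ -
        ((α : ℂ) + Complex.I * γ ‖x‖) * psi φ ‖x‖) / (‖x‖ : ℂ) ^ 2 *
        (x j + x k * (if k = j then 1 else 0)) +
        LG (EuclideanSpace.single k 1) * (x k * x j)) := by
    intro k
    obtain ⟨N, hN, hNk⟩ := hasFDerivAt_coord x k
    have hD := (hLH.mul_const (if k = j then (1 : ℂ) else 0)).fun_add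
      (hLG.fun_mul (hN.fun_mul hM))
    have h2 := hD.congr_of_eventuallyEq
      (f₁ := fun y => ∑ l, coefA α β γ y k l * pdC (profW φ j) y l)
      (by filter_upwards [isOpen_ne.mem_nhds hx] with y hy using flux_eq hφ α β γ j k hy)
    rw [h2.fderiv]
    simp only [add_apply, smul_apply, smul_eq_mul, hMk, hNk, if_true]
    ring
  rw [divAgrad]
  simp only [hk, hLHk, hLGk]
  rw [sum_coord_mul_pdC hφ j hx, profW_eq]
  have e1 : ∀ a : ℂ, ∑ k, a * ((x k / ‖x‖ : ℝ) : ℂ) * (if k = j then 1 else 0) =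
      a / ‖x‖ * x j := by
    intro a
    simp only [mul_ite, mul_one, mul_zero, Finset.sum_ite_eq', Finset.mem_univ, if_true]
    push_cast; ring
  have e2 : ∀ a : ℂ, ∑ k, a * ((x j : ℂ) + x k * (if k = j then 1 else 0)) =
      (n + 1) * a * x j := by
    intro a
    rw [← Finset.mul_sum, Finset.sum_add_distrib]
    simp
    ring
  have e3 : ∀ a : ℂ, ∑ k, a * ((x k / ‖x‖ : ℝ) : ℂ) * ((x k : ℂ) * x j) =
      a * ‖x‖ * x j := by
    intro a
    rw [show a * ‖x‖ * x j = a / ‖x‖ * x j * (‖x‖ : ℂ) ^ 2 by field_simp, ← sum_sq_coord,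
      Finset.mul_sum]
    refine Finset.sum_congr rfl fun k _ => ?_
    push_cast; ring
  simp only [Finset.sum_add_distrib]
  rw [e1, e2, e3]
  simp only [psi]
  field_simp
  ring

/-- For `|y| ≤ |x|`, write `w(x) - w(y) = ψ(|x|)(x_j - y_j) + (ψ(|x|) - ψ(|y|)) y_j`. The second term
is controlled by `|ψ'| ≤ M/|y|` on `[|y|, |x|]` and `|y_j| ≤ |y|`. -/
theorem lipschitz_profW (hφ : ∀ r > 0, HasDerivAt φ (p r * φ r / r) r) (hp : BddPos p)
    (hb : BddPos (fun r => φ r / r)) (j : Fin n) :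
    ∃ K : NNReal, LipschitzWith K (profW φ j) := by
  obtain ⟨P, hP⟩ := hp
  obtain ⟨B, hB⟩ := hb
  have hP0 : 0 ≤ P := (abs_nonneg _).trans (hP 1 one_pos)
  have hB0 : 0 ≤ B := (abs_nonneg _).trans (hB 1 one_pos)
  have hψ : ∀ r > 0, ‖psi φ r‖ ≤ B := by
    intro r hr
    rw [psi, norm_mul, norm_phase, mul_one, ← Complex.ofReal_div, Complex.norm_real]
    exact hB r hr
  have hψ' : ∀ r > 0, ‖(((p r : ℂ) - Complex.I) * (φ r / r) - φ r / r) / r * phase r‖ ≤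
      (P + 2) * B / r := by
    intro r hr
    rw [norm_mul, norm_phase, mul_one, norm_div, Complex.norm_real, Real.norm_of_nonneg hr.le]
    apply div_le_div_of_nonneg_right _ hr.le
    rw [show ((p r : ℂ) - Complex.I) * (φ r / r) - φ r / r =
      ((p r : ℂ) - Complex.I - 1) * ((φ r / r : ℝ) : ℂ) by push_cast; ring, norm_mul,
      Complex.norm_real]
    refine mul_le_mul ?_ (hB r hr) (norm_nonneg _) (by linarith)
    have h1 := norm_sub_le ((p r : ℂ) - Complex.I) 1
    have h2 := norm_sub_le (p r : ℂ) Complex.I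
    rw [Complex.norm_I, Complex.norm_real] at h2
    rw [norm_one] at h1
    have h3 : ‖p r‖ ≤ P := hP r hr
    linarith
  have hcoord : ∀ x : EuclideanSpace ℝ (Fin n), ‖((x j : ℝ) : ℂ)‖ ≤ ‖x‖ := fun x => by
    rw [Complex.norm_real]; exact PiLp.norm_apply_le x j
  have key : ∀ x y : EuclideanSpace ℝ (Fin n), ‖y‖ ≤ ‖x‖ →
      ‖profW φ j x - profW φ j y‖ ≤ (B + (P + 2) * B) * ‖x - y‖ := by
    intro x y hxy
    have hK : 0 ≤ (P + 2) * B := by positivity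
    rcases eq_or_ne y 0 with rfl | hy
    · rcases eq_or_ne x 0 with rfl | hx
      · simp
      · simp only [profW_eq]
        simp only [PiLp.zero_apply, Complex.ofReal_zero, mul_zero, sub_zero, norm_mul]
        have h1 := hψ _ (norm_pos_iff.2 hx)
        have h2 := mul_le_mul h1 (hcoord x) (norm_nonneg _) hB0
        have h3 := mul_nonneg hK (norm_nonneg x)
        linarith
    · have hy0 : 0 < ‖y‖ := norm_pos_iff.2 hy
      have hx0 : 0 < ‖x‖ := hy0.trans_le hxy
      have h1 : ‖psi φ ‖x‖ - psi φ ‖y‖‖ ≤ (P + 2) * B / ‖y‖ * ‖‖x‖ - ‖y‖‖ := by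
        refine Convex.norm_image_sub_le_of_norm_hasDerivWithin_le (s := Set.Ici ‖y‖)
          (fun r hr => (hasDerivAt_psi hφ (hy0.trans_le hr)).hasDerivWithinAt) (fun r hr => ?_)
          (convex_Ici _) Set.self_mem_Ici hxy
        exact (hψ' r (hy0.trans_le hr)).trans (div_le_div_of_nonneg_left hK hy0 hr)
      have h2 : ‖‖x‖ - ‖y‖‖ ≤ ‖x - y‖ := abs_norm_sub_norm_le x y
      have h3 : profW φ j x - profW φ j y = psi φ ‖x‖ * (((x - y) j : ℝ) : ℂ) +
          (psi φ ‖x‖ - psi φ ‖y‖) * ((y j : ℝ) : ℂ) := by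
        simp only [profW_eq, PiLp.sub_apply]
        push_cast; ring
      rw [h3]
      refine (norm_add_le _ _).trans ?_
      rw [norm_mul, norm_mul, add_mul]
      refine add_le_add (mul_le_mul (hψ _ hx0) (hcoord _) (norm_nonneg _) hB0) ?_
      calc ‖psi φ ‖x‖ - psi φ ‖y‖‖ * ‖((y j : ℝ) : ℂ)‖
          ≤ ((P + 2) * B / ‖y‖ * ‖x - y‖) * ‖y‖ := by
            refine mul_le_mul (h1.trans ?_) (hcoord y) (norm_nonneg _) (by positivity)
            exact mul_le_mul_of_nonneg_left h2 (by positivity)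
        _ = (P + 2) * B * ‖x - y‖ := by field_simp
  refine ⟨⟨B + (P + 2) * B, by positivity⟩, LipschitzWith.of_dist_le_mul fun x y => ?_⟩
  rw [dist_eq_norm, dist_eq_norm]
  rcases le_total ‖y‖ ‖x‖ with h | h
  · exact key x y h
  · rw [norm_sub_rev, norm_sub_rev x y]; exact key y x h

/-- The real part of `A` as a quadratic form is `α I`, since the imaginary part of `A` is a real symmetric
matrix. -/
theorem coefA_re (α : ℝ) (β γ : ℝ → ℝ) (x : EuclideanSpace ℝ (Fin n)) (v : Fin n → ℂ) :
    (∑ k, ∑ l, coefA α β γ x k l * v k * (starRingEnd ℂ) (v l)).re = α * ∑ k, ‖v k‖ ^ 2 := by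
  set b : Fin n → Fin n → ℝ := fun k l => β ‖x‖ * (x k * x l / ‖x‖ ^ 2) +
    γ ‖x‖ * ((if k = l then (1 : ℝ) else 0) - x k * x l / ‖x‖ ^ 2) with hb
  have hsymm : ∀ k l, b k l = b l k := by
    intro k l
    simp only [hb, eq_comm (a := k), mul_comm (x k)]
  set S : ℂ := ∑ k, ∑ l, (b k l : ℂ) * v k * (starRingEnd ℂ) (v l) with hS
  have hconj : (starRingEnd ℂ) S = S := by
    rw [hS]
    simp only [map_sum, map_mul, Complex.conj_ofReal, Complex.conj_conj]
    rw [Finset.sum_comm]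
    refine Finset.sum_congr rfl fun k _ => Finset.sum_congr rfl fun l _ => ?_
    rw [hsymm l k]; ring
  have hS0 : S.im = 0 := Complex.conj_eq_iff_im.1 hconj
  have e : ∑ k, ∑ l, coefA α β γ x k l * v k * (starRingEnd ℂ) (v l) =
      ((α * ∑ k, ‖v k‖ ^ 2 : ℝ) : ℂ) + Complex.I * S := by
    have e1 : ∀ k l, coefA α β γ x k l * v k * (starRingEnd ℂ) (v l) =
        (if k = l then (α : ℂ) * (v k * (starRingEnd ℂ) (v l)) else 0) +
        Complex.I * ((b k l : ℂ) * v k * (starRingEnd ℂ) (v l)) := by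
      intro k l
      simp only [coefA, hb]
      split_ifs <;> push_cast <;> ring
    simp only [e1, Finset.sum_add_distrib, ← Finset.mul_sum, Finset.sum_ite_eq, Finset.mem_univ,
      if_true, Complex.mul_conj']
    push_cast
    rfl
  rw [e, Complex.add_re, Complex.ofReal_re]
  simp [hS0]

/-- Cauchy–Schwarz with every entry of `A` bounded by `α + b + 2c`. -/
theorem coefA_bound {α b c : ℝ} (hα : 0 ≤ α) {β γ : ℝ → ℝ} {x : EuclideanSpace ℝ (Fin n)}
    (hx : x ≠ 0) (hβ : |β ‖x‖| ≤ b) (hγ : |γ ‖x‖| ≤ c) (v : Fin n → ℂ) :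
    ∑ k, ‖(coefA α β γ x).mulVec v k‖ ^ 2 ≤ (n * (α + b + 2 * c)) ^ 2 * ∑ k, ‖v k‖ ^ 2 := by
  have hr : 0 < ‖x‖ := norm_pos_iff.2 hx
  have hent : ∀ k l, ‖coefA α β γ x k l‖ ≤ α + b + 2 * c := by
    intro k l
    have ht : |x k * x l / ‖x‖ ^ 2| ≤ 1 := by
      rw [abs_div, abs_mul, abs_of_pos (pow_pos hr 2), div_le_one (pow_pos hr 2), sq]
      exact mul_le_mul (PiLp.norm_apply_le x k) (PiLp.norm_apply_le x l) (abs_nonneg _) hr.le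
    have ht' : |(if k = l then (1 : ℝ) else 0) - x k * x l / ‖x‖ ^ 2| ≤ 2 := by
      refine (abs_sub _ _).trans ?_
      have : |(if k = l then (1 : ℝ) else 0)| ≤ 1 := by split_ifs <;> simp
      linarith
    have h1 := mul_le_mul hβ ht (abs_nonneg _) ((abs_nonneg _).trans hβ)
    have h2 := mul_le_mul hγ ht' (abs_nonneg _) ((abs_nonneg _).trans hγ)
    rw [← abs_mul] at h1 h2
    rw [coefA]
    refine (norm_add_le _ _).trans ?_
    rw [norm_mul, norm_mul, Complex.norm_I, one_mul, Complex.norm_real, Complex.norm_real,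
      Real.norm_of_nonneg hα]
    have h3 : ‖(if k = l then (1 : ℂ) else 0)‖ ≤ 1 := by split_ifs <;> simp
    have h4 := mul_le_mul_of_nonneg_left h3 hα
    have h5 := abs_add_le (β ‖x‖ * (x k * x l / ‖x‖ ^ 2))
      (γ ‖x‖ * ((if k = l then (1 : ℝ) else 0) - x k * x l / ‖x‖ ^ 2))
    rw [← Real.norm_eq_abs] at h5
    linarith
  have hd : 0 ≤ α + b + 2 * c := by
    have := (abs_nonneg _).trans hβ
    have := (abs_nonneg _).trans hγ
    linarith
  have hrow : ∀ k, ‖(coefA α β γ x).mulVec v k‖ ^ 2 ≤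
      (α + b + 2 * c) ^ 2 * (n * ∑ l, ‖v l‖ ^ 2) := by
    intro k
    have h1 : ‖(coefA α β γ x).mulVec v k‖ ≤ (α + b + 2 * c) * ∑ l, ‖v l‖ := by
      rw [Finset.mul_sum]
      show ‖∑ l, coefA α β γ x k l * v l‖ ≤ _
      refine norm_sum_le_of_le _ fun l _ => ?_
      rw [norm_mul]
      exact mul_le_mul_of_nonneg_right (hent k l) (norm_nonneg _)
    have h2 := pow_le_pow_left₀ (norm_nonneg _) h1 2
    have h3 := sq_sum_le_card_mul_sum_sq (s := Finset.univ) (f := fun l => ‖v l‖)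
    rw [Finset.card_univ, Fintype.card_fin] at h3
    rw [mul_pow] at h2
    exact h2.trans (mul_le_mul_of_nonneg_left h3 (sq_nonneg _))
  refine (Finset.sum_le_sum fun k _ => hrow k).trans ?_
  rw [Finset.sum_const, Finset.card_univ, Fintype.card_fin, nsmul_eq_mul]
  exact le_of_eq (by ring)

end

/-! ### The counterexample -/

/-- Main counterexample, Theorem 1.1 of the paper: for `n ≥ 2` and
`0 ≤ 2μ < n` there are uniformly elliptic complex coefficients
`A = α I + i(β ν⊗ν + γ (I - ν⊗ν))` and a nontrivial Lipschitz profile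
`w = φ(r)(x₁/r)e^{-i log r}` solving `div(A∇w) = (1/2)(i w + μ w + x·∇w)` away from the
origin, with the stated asymptotics `w = |x|^{-μ}(x₁/|x|)e^{-i log |x|}(1 + C_μ|x|^{-2})`. -/
theorem stmt_10 (n : ℕ) (hn : 2 ≤ n) (μ : ℝ) (hμ0 : 0 ≤ μ) (hμn : 2 * μ < n) :
    ∃ (α lam Lam Cμ : ℝ) (β γ φ : ℝ → ℝ),
      0 < α ∧ 0 < lam ∧ 0 < Lam ∧ 0 ≤ Cμ ∧
      (∃ M : ℝ, ∀ r > (0:ℝ), |β r| ≤ M) ∧ (∃ M : ℝ, ∀ r > (0:ℝ), |γ r| ≤ M) ∧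
      ContDiffOn ℝ (⊤ : ℕ∞) β (Set.Ioi 0) ∧ ContDiffOn ℝ (⊤ : ℕ∞) γ (Set.Ioi 0) ∧
      (∀ r > (0:ℝ), 0 < φ r) ∧ ContDiffOn ℝ (⊤ : ℕ∞) φ (Set.Ioi 0) ∧
      (∀ r ∈ Set.Ioo (0 : ℝ) (3 / 4), φ r = r) ∧
      (∀ r > (1 : ℝ), φ r = r ^ (-μ) + Cμ * r ^ (-μ - 2)) ∧
      (let A : EuclideanSpace ℝ (Fin n) → Matrix (Fin n) (Fin n) ℂ := fun x k l =>
          (α : ℂ) * (if k = l then 1 else 0) +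
            Complex.I * ((β ‖x‖ * (x k * x l / ‖x‖ ^ 2) +
              γ ‖x‖ * ((if k = l then (1 : ℝ) else 0) - x k * x l / ‖x‖ ^ 2) : ℝ) : ℂ)
       let w : EuclideanSpace ℝ (Fin n) → ℂ := fun x =>
          if x = 0 then 0 else
            (φ ‖x‖ : ℂ) * ((x ⟨0, by omega⟩ / ‖x‖ : ℝ) : ℂ) *
              Complex.exp (-Complex.I * (Real.log ‖x‖ : ℂ))
       -- (i) uniform ellipticity away from the origin
       (∀ x : EuclideanSpace ℝ (Fin n), x ≠ 0 → ∀ p : Fin n → ℂ,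
          lam * ∑ k, ‖p k‖ ^ 2 ≤ (∑ k, ∑ l, A x k l * p k * (starRingEnd ℂ) (p l)).re ∧
          ∑ k, ‖(A x).mulVec p k‖ ^ 2 ≤ Lam ^ 2 * ∑ k, ‖p k‖ ^ 2) ∧
       -- (ii) regularity of w
       (∃ K : NNReal, LipschitzWith K w) ∧
       ContDiffOn ℝ (⊤ : ℕ∞) w {x | x ≠ 0} ∧ w ≠ 0 ∧
       -- (iii) the self-similar profile equation
       (∀ x : EuclideanSpace ℝ (Fin n), x ≠ 0 →
          divAgrad A w x =
            (1 / 2) * (Complex.I * w x + (μ : ℂ) * w x + ∑ k, (x k : ℂ) * pdC w x k)) ∧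
       -- (iv) asymptotics for |x| > 1
       (∀ x : EuclideanSpace ℝ (Fin n), 1 < ‖x‖ →
          w x = ((‖x‖ ^ (-μ) : ℝ) : ℂ) * ((x ⟨0, by omega⟩ / ‖x‖ : ℝ) : ℂ) *
            Complex.exp (-Complex.I * (Real.log ‖x‖ : ℂ)) *
            (1 + ((Cμ * ‖x‖ ^ (-2 : ℝ) : ℝ) : ℂ)))) := by
  obtain ⟨m, rfl⟩ : ∃ m, n = m + 2 := ⟨n - 2, by omega⟩
  have hμm : 2 * μ < m + 2 := by exact_mod_cast hμn
  obtain ⟨α, C, β, γ, φ, p, hα, hC, hβb, hγb, hβs, hγs, hφ0, hφs, hnear, hfar, hp, hφb, hφd, hF⟩ :=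
    exists_radial m hμ0 hμm
  have hβb' := hβb
  have hγb' := hγb
  obtain ⟨b, hb⟩ := hβb
  obtain ⟨c, hc⟩ := hγb
  have hb0 : 0 ≤ b := (abs_nonneg _).trans (hb 1 one_pos)
  have hc0 : 0 ≤ c := (abs_nonneg _).trans (hc 1 one_pos)
  refine ⟨α, α, ((m + 2 : ℕ) : ℝ) * (α + b + 2 * c), C, β, γ, φ, hα, hα, by positivity, hC,
    hβb', hγb', hβs, hγs, hφ0, hφs, hnear, hfar, ?_⟩
  refine ⟨fun x hx v => ⟨(coefA_re α β γ x v).ge,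
    coefA_bound hα.le hx (hb _ (norm_pos_iff.2 hx)) (hc _ (norm_pos_iff.2 hx)) v⟩,
    lipschitz_profW hφd hp hφb _, contDiffOn_profW hφs _, ?_, fun x hx => ?_, fun x hx => ?_⟩
  · intro h
    have h1 := congrFun h (EuclideanSpace.single ⟨0, by omega⟩ 1)
    simp [(hφ0 1 one_pos).ne'] at h1
  · refine divAgrad_profW hφd (fun r hr => ?_) (fun r hr => ?_) _ hx
    · exact (hγs.differentiableOn (by simp) r hr).differentiableAt (Ioi_mem_nhds hr)
    · refine (hF r hr).congr_deriv ?_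
      push_cast
      ring
  · have h0 : 0 < ‖x‖ := by linarith
    have hx0 : x ≠ 0 := norm_pos_iff.1 h0
    simp only [hx0, if_false]
    rw [hfar _ hx, show -μ - 2 = -μ + (-2 : ℝ) by ring, Real.rpow_add h0]
    push_cast
    ring
end
end

section
/- Let n ≥ 2 and μ ∈ ℝ. Let A be a C¹ matrix-valued map on ℝⁿ\{0} with values in n×n complex matrices, and let w : ℝⁿ\{0} → ℂ be C² and satisfy div(A∇w)(x) = (1/2)(i·w(x) + μ·w(x) + x·∇w(x)) for all x ≠ 0. Define u(x,t) = (−t)^{−μ/2} e^{−(i/2)log(−t)} w(x/(−t)^{1/2}) and Ã(x,t) = A(x/(−t)^{1/2}). Then for all x ≠ 0 and all t < 0, ∂_t u(x,t) = div_x(Ã(·,t) ∇_x u(·,t))(x), where div_x(Ã∇_x u) = Σ_k ∂_{x_k}(Σ_l Ã_{kl} ∂_{x_l} u). -/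
/-!
Write `s = -t`, `c = s^{-1/2}` and `K(s) = s^{-μ/2} e^{-(i/2) log s}`, so that `u(x,t) = K w(c x)`.
Both sides of the parabolic equation equal `K s⁻¹` times the corresponding side of the profile
equation at `y = c x`:

* in space, each of the two derivatives in `div(Ã ∇u)` brings out a factor `c`, and `c² = s⁻¹`
  (`divAgrad_comp_smul`);
* in time, `K'(s) = -((μ + i)/2) s⁻¹ K(s)` (`hasDerivAt_amplitude`) and
  `d/ds (c x) = -(1/2) s⁻¹ y`, so that
  `∂ₜ u = K s⁻¹ (1/2) (i w(y) + μ w(y) + y·∇w(y))`, the sign coming from `s = -t`.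
-/

open scoped BigOperators

noncomputable section

theorem pdC_comp_smul {n : ℕ} (w : EuclideanSpace ℝ (Fin n) → ℂ) (K : ℂ) (c : ℝ)
    (x : EuclideanSpace ℝ (Fin n)) (k : Fin n) :
    pdC (fun y => K * w (c • y)) x k = K * c * pdC w (c • x) k := by
  have h' : fderiv ℝ (fun y => K * w (c • y)) x = K • fderiv ℝ (fun y => w (c • y)) x :=
    congrFun (fderiv_const_smul_field (𝕜 := ℝ) (f := fun y => w (c • y)) K) x
  unfold pdC
  rw [h', fderiv_comp_smul]
  simp [mul_assoc]

/-- The operator `div(A∇·)` scales by `c²` under the dilation `x ↦ c x` of both the coefficient and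
the function. No regularity is needed: the chain rule for dilations holds for `fderiv` even at
points of non-differentiability. -/
theorem divAgrad_comp_smul {n : ℕ} (A : EuclideanSpace ℝ (Fin n) → Matrix (Fin n) (Fin n) ℂ)
    (w : EuclideanSpace ℝ (Fin n) → ℂ) (K : ℂ) (c : ℝ) (x : EuclideanSpace ℝ (Fin n)) :
    divAgrad (fun y => A (c • y)) (fun y => K * w (c • y)) x
      = K * c ^ 2 * divAgrad A w (c • x) := by
  unfold divAgrad
  rw [Finset.mul_sum]
  refine Finset.sum_congr rfl fun k _ => ?_
  have e : (fun y => ∑ l, A (c • y) k l * pdC (fun y => K * w (c • y)) y l)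
      = fun y => (K * c) * (fun z => ∑ l, A z k l * pdC w z l) (c • y) := by
    funext y
    simp only [pdC_comp_smul, Finset.mul_sum]
    exact Finset.sum_congr rfl fun l _ => by ring
  rw [e]
  exact (pdC_comp_smul (fun z => ∑ l, A z k l * pdC w z l) (K * c) c x k).trans (by
    unfold pdC; ring)

theorem fderiv_apply_eq_sum_pdC {n : ℕ} (w : EuclideanSpace ℝ (Fin n) → ℂ)
    (x v : EuclideanSpace ℝ (Fin n)) :
    fderiv ℝ w x v = ∑ k, (v k : ℂ) * pdC w x k := by
  have hv : v = ∑ k, v k • EuclideanSpace.single k (1 : ℝ) := by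
    ext j
    simp [Finset.sum_apply, Pi.single_apply]
  conv_lhs => rw [hv]
  simp [pdC]

/-- The scalar amplitude `s^{-μ/2} e^{-(i/2) log s}` is the complex power `s^{-(μ+i)/2}`; this is
its derivative along `s = -t`. -/
theorem hasDerivAt_amplitude (μ t : ℝ) (ht : t < 0) :
    HasDerivAt (fun s : ℝ => (((-s) ^ (-(μ / 2)) : ℝ) : ℂ) *
        Complex.exp (-(Complex.I / 2) * (Real.log (-s) : ℂ)))
      ((((-t) ^ (-(μ / 2)) : ℝ) : ℂ) * Complex.exp (-(Complex.I / 2) * (Real.log (-t) : ℂ))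
        * ((-t : ℝ) : ℂ)⁻¹ * ((1 / 2) * (Complex.I + μ))) t := by
  have hpos : 0 < -t := by linarith
  have hne : ((-t : ℝ) : ℂ) ≠ 0 := by exact_mod_cast hpos.ne'
  have h1 := ((hasDerivAt_id t).neg.rpow_const (p := -(μ / 2)) (Or.inl hpos.ne')).ofReal_comp
  have h2 := (((hasDerivAt_id t).neg.log hpos.ne').ofReal_comp.const_mul (-(Complex.I / 2))).cexp
  refine (h1.mul h2).congr_deriv ?_
  simp only [Pi.neg_apply, id, Real.rpow_sub hpos, Real.rpow_one]
  push_cast at hne ⊢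
  field_simp
  ring

/-- The similarity variable `y = (-t)^{-1/2} x` satisfies `∂ₜ y = (1/2) (-t)⁻¹ y`. -/
theorem hasDerivAt_similarity {n : ℕ} (x : EuclideanSpace ℝ (Fin n)) (t : ℝ) (ht : t < 0) :
    HasDerivAt (fun s : ℝ => ((-s) ^ (-(1 / 2 : ℝ)) : ℝ) • x)
      (((1 / 2) * (-t)⁻¹) • (((-t) ^ (-(1 / 2 : ℝ)) : ℝ) • x)) t := by
  have hpos : 0 < -t := by linarith
  have h1 := ((hasDerivAt_id t).neg.rpow_const (p := -(1 / 2 : ℝ)) (Or.inl hpos.ne')).smul_const x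
  refine h1.congr_deriv ?_
  rw [smul_smul]
  congr 1
  simp only [Pi.neg_apply, id, Real.rpow_sub hpos, Real.rpow_one]
  field_simp

/-- if `w` solves the self-similar profile equation
`div(A∇w) = (1/2)(i w + μ w + x·∇w)` on `ℝⁿ \ {0}`, then the self-similar ansatz
`u(x,t) = (-t)^{-μ/2} e^{-(i/2) log(-t)} w(x/(-t)^{1/2})` solves the parabolic equation
`∂ₜ u = div(Ã ∇ₓ u)` with `Ã(x,t) = A(x/(-t)^{1/2})`, for `x ≠ 0`, `t < 0`. -/
theorem stmt_11 (n : ℕ) (hn : 2 ≤ n) (μ : ℝ)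
    (A : EuclideanSpace ℝ (Fin n) → Matrix (Fin n) (Fin n) ℂ)
    (hA : ∀ k l : Fin n, ContDiffOn ℝ 1 (fun x => A x k l) {x | x ≠ 0})
    (w : EuclideanSpace ℝ (Fin n) → ℂ)
    (hw : ContDiffOn ℝ 2 w {x | x ≠ 0})
    (heq : ∀ x : EuclideanSpace ℝ (Fin n), x ≠ 0 →
      divAgrad A w x =
        (1 / 2) * (Complex.I * w x + (μ : ℂ) * w x + ∑ k, (x k : ℂ) * pdC w x k))
    (u : EuclideanSpace ℝ (Fin n) → ℝ → ℂ)
    (hu : ∀ x t, u x t =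
      (((-t) ^ (-(μ / 2)) : ℝ) : ℂ) * Complex.exp (-(Complex.I / 2) * (Real.log (-t) : ℂ)) *
        w ((((-t) ^ (-(1 / 2 : ℝ)) : ℝ)) • x)) :
    ∀ x : EuclideanSpace ℝ (Fin n), x ≠ 0 → ∀ t : ℝ, t < 0 →
      deriv (fun s => u x s) t =
        divAgrad (fun y => A ((((-t) ^ (-(1 / 2 : ℝ)) : ℝ)) • y)) (fun y => u y t) x := by
  intro x hx t ht
  have hpos : 0 < -t := by linarith
  have hc : 0 < (-t) ^ (-(1 / 2 : ℝ)) := Real.rpow_pos_of_pos hpos _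
  have hc2 : ((-t) ^ (-(1 / 2 : ℝ))) ^ 2 = (-t)⁻¹ := by
    rw [← Real.rpow_natCast, ← Real.rpow_mul hpos.le, ← Real.rpow_neg_one]
    norm_num
  have hy := hasDerivAt_similarity x t ht
  have hK := hasDerivAt_amplitude μ t ht
  have hux : (fun y => u y t) = fun y => _ := funext fun y => hu y t
  have hut : (fun s => u x s) = fun s => _ := funext fun s => hu x s
  rw [hux, hut, divAgrad_comp_smul]
  have hc2' : (((-t) ^ (-(1 / 2 : ℝ)) : ℝ) : ℂ) ^ 2 = ((-t : ℝ) : ℂ)⁻¹ := by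
    rw [← Complex.ofReal_pow, hc2, Complex.ofReal_inv]
  have hy0 : (-t) ^ (-(1 / 2 : ℝ)) • x ≠ 0 := smul_ne_zero hc.ne' hx
  have hwd : DifferentiableAt ℝ w ((-t) ^ (-(1 / 2 : ℝ)) • x) :=
    (hw.contDiffAt (isOpen_ne.mem_nhds hy0)).differentiableAt (by norm_num)
  have hW := hwd.hasFDerivAt.comp_hasDerivAt t hy
  rw [hc2', heq _ hy0, ← fderiv_apply_eq_sum_pdC]
  refine (hK.mul hW).deriv.trans ?_
  rw [map_smul, Complex.real_smul]
  simp only [Function.comp_apply]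
  push_cast
  ring
end
end

section
/- (Optimality of parabolic energy estimates.) Let n ≥ 2 and δ > 0. Then there exist constants λ, Λ > 0, a matrix-valued map A on ℝⁿ × (−1,0), smooth on (ℝⁿ\{0}) × (−1,0) and satisfying the uniform ellipticity condition with constants λ, Λ at every point, and a function u : ℝⁿ × (−1,0) → ℂ, continuous on ℝⁿ × (−1,0), smooth and not identically zero on (ℝⁿ\{0}) × (−1,0), such that: (i) ∂_t u(x,t) = div_x(A(·,t)∇_x u(·,t))(x) for all x ≠ 0 and t ∈ (−1,0); (ii) sup_{t ∈ (−1,0)} ∫_{B₁} |u(x,t)|² dx < ∞ and ∫_{−1}^{0} ∫_{B₁} |∇_x u(x,s)|² dx ds < ∞; (iii) lim_{t→0⁻} ∫_{B₁} |u(x,t)|^{2+δ} dx = ∞; and (iv) lim_{t→0⁻} ∫_{−1}^{−t} ∫_{B₁} |∇_x u(x,s)|^{2+δ} dx ds = ∞. -/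
/-!
The solution is radial and backward self-similar: `u(x, t) = (-t) ^ (-μ / 2) w(y)` and
`A(x, t) = a(y) I` with `y = |x|² / (-t)` and `μ = n / 2 - ε`. If `w` and `w'` decay like
`y ^ (-μ / 2)` and `y ^ (-μ / 2 - 1)`, then `|u| ≤ C |x| ^ (-μ)` uniformly in time, which is in `L²`
near the origin as `2 μ < n`, and similarly `∇u` is square integrable in space-time. By scaling,
`∫ |u| ^ (2 + δ)` is at least a multiple of `(-t) ^ (n / 2 - μ (2 + δ) / 2)`, and the corresponding
gradient integral is at least a multiple of `(-t) ^ (n / 2 + 1 - (μ + 1) (2 + δ) / 2)`. Both exponents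
are negative once `ε` is small compared with `δ`.

The equation becomes `n B + 2 y B' = (μ / 2) w + y w'` for the flux `B = 2 a w'`. Setting
`w = (n + 2 y h') e^h`, it integrates once and gives `B = p e^h / 2` with `p = μ + 2 y h'`. So `h` can
be chosen freely and the coefficient is then determined, with `m = n - μ`:
`a = y p / (2 ((p - μ) (p + m) + 2 y p'))`.
The required decay of `w` means `p(0) = μ` and `p(∞) = 0`, and the point is to find a complex path `p`
for which `a` is bounded with `Re a` bounded below by a positive constant. The choice is `p = μ / Z`
with `Z = (1 - iy) / (1 + iy) - η y`: the path turns by a half-turn around the origin and then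
tends to `0` along the negative axis. Since `m - μ = 2 ε > 0`, the coefficient is elliptic when
`η = ε / (n + 4)` (`pRe_ge`). The profile is put together in `exists_profile`, the equation is checked
in `pde`, and `integral_uSol_sq_le`, `integrableOn_gradNorm_sq`, `tendsto_integral_uSol`,
`tendsto_integral_gradNorm` give the energy bounds and the blow-up.
-/

open MeasureTheory Filter
open scoped BigOperators

noncomputable section

/-! ### The self-similar profile -/

section profile
open Complex

/-- Numerator of `p = μ D / N`. -/
def pD (y : ℝ) : ℂ := 1 + I * y
/-- Denominator of `p = μ D / N`; it is `N = D Z` with `Z = (1 - iy) / (1 + iy) - η y`. -/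
def pN (η y : ℝ) : ℂ := 1 - I * y - η * y - I * η * y ^ 2
/-- `V = (D - N) / y`, so that `h' = (p - μ) / (2 y) = μ V / (2 N)` has no singularity at `y = 0`. -/
def pV (η y : ℝ) : ℂ := η * pD y + 2 * I
/-- With `p = μ D / N`, this is `(N² / (μ y)) (2 y p' + (p - μ) (p + m))`. Hence
`w' = μ pNum / (2 N²) e^h`, and the diffusion coefficient is `a = D N / (2 pNum)`. -/
def pNum (μ m η y : ℝ) : ℂ :=
  2 * (η * pD y ^ 2 + 2 * I) + pV η y * (μ * pD y + m * pN η y)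

lemma pD_norm_le {y : ℝ} (hy : 0 ≤ y) : ‖pD y‖ ≤ 1 + y := by
  unfold pD
  refine (norm_add_le _ _).trans ?_
  simp [abs_of_nonneg hy]

lemma pV_norm_le {η y : ℝ} (hη : 0 < η) (hη1 : η ≤ 1) (hy : 0 ≤ y) : ‖pV η y‖ ≤ 3 * (1 + y) := by
  unfold pV
  refine (norm_add_le _ _).trans ?_
  have := pD_norm_le hy
  simp only [norm_mul, norm_real, Real.norm_eq_abs, abs_of_pos hη, norm_I, Complex.norm_ofNat]
  nlinarith [norm_nonneg (pD y)]

lemma pN_eq (η y : ℝ) : pN η y = pD y - y * pV η y := by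
  unfold pV pN pD
  ring

lemma pN_norm_le {η y : ℝ} (hη : 0 < η) (hη1 : η ≤ 1) (hy : 0 ≤ y) :
    ‖pN η y‖ ≤ 4 * (1 + y) ^ 2 := by
  rw [pN_eq]
  refine (norm_sub_le _ _).trans ?_
  have h1 := pD_norm_le hy
  have h2 := pV_norm_le hη hη1 hy
  simp only [norm_mul, norm_real, Real.norm_eq_abs, abs_of_nonneg hy]
  nlinarith [mul_le_mul_of_nonneg_left h2 hy]

lemma pN_normSq (η y : ℝ) : normSq (pN η y) = (1 - η * y) ^ 2 + y ^ 2 * (1 + η * y) ^ 2 := by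
  unfold pN
  simp [normSq_apply, pow_two]
  ring

lemma pN_ne_zero {η y : ℝ} : pN η y ≠ 0 := by
  intro h
  have := pN_normSq η y
  rw [h, map_zero] at this
  have h1 : (1 - η * y) ^ 2 = 0 := by nlinarith [sq_nonneg (1 - η * y), sq_nonneg (y * (1 + η * y))]
  have h2 : (y * (1 + η * y)) ^ 2 = 0 := by
    nlinarith [sq_nonneg (1 - η * y), sq_nonneg (y * (1 + η * y))]
  have h3 : η * y = 1 := by have := pow_eq_zero_iff (two_ne_zero) |>.1 h1; linarith
  have h4 := pow_eq_zero_iff (two_ne_zero) |>.1 h2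
  rw [h3] at h4
  have : y = 0 := by linarith
  simp [this] at h3

lemma pN_norm_ge {η y : ℝ} (hη : 0 < η) (hη1 : η ≤ 1 / 4) (hy : 0 ≤ y) :
    η / 4 * (1 + y) ^ 2 ≤ ‖pN η y‖ := by
  have h := pN_normSq η y
  rw [normSq_eq_norm_sq] at h
  have h2 : (η / 2 * (1 + y ^ 2)) ^ 2 ≤ ‖pN η y‖ ^ 2 := by
    rw [h]
    have e1 : 0 ≤ η * y := by positivity
    have e2 : η ^ 2 ≤ 1 / 16 := by nlinarith
    have e3 : 0 ≤ η * y ^ 3 := by positivity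
    have e4 : 0 ≤ η ^2 * y ^ 4 := by positivity
    nlinarith [sq_nonneg (1 - η * y), sq_nonneg (1 - 2 * η * y), mul_nonneg (sub_nonneg.2 e2) (sq_nonneg y)]
  have h3 := abs_le_of_sq_le_sq h2 (norm_nonneg _)
  have := (le_abs_self _).trans h3
  nlinarith [sq_nonneg (1 - y)]

lemma pNum_norm_le {μ m η y : ℝ} (hμ : 0 < μ) (hm : 0 < m) (hη : 0 < η) (hη1 : η ≤ 1)
    (hy : 0 ≤ y) : ‖pNum μ m η y‖ ≤ (6 + 3 * μ + 12 * m) * (1 + y) ^ 3 := by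
  unfold pNum
  have h1 := pD_norm_le hy
  have h2 := pV_norm_le hη hη1 hy
  have h3 := pN_norm_le hη hη1 hy
  have e1 : ‖2 * (η * pD y ^ 2 + 2 * I)‖ ≤ 6 * (1 + y) ^ 3 := by
    rw [norm_mul, Complex.norm_ofNat]
    have : ‖(η * pD y ^ 2 + 2 * I)‖ ≤ 1 * (1 + y) ^ 2 + 2 := by
      refine (norm_add_le _ _).trans ?_
      simp only [norm_mul, norm_real, Real.norm_eq_abs, abs_of_pos hη, norm_I, Complex.norm_ofNat,
        norm_pow, mul_one]
      gcongr
    have : (1 + y) ^ 3 = (1 + y)^2 * (1 + y) := by ring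
    nlinarith [pow_nonneg (add_nonneg zero_le_one hy) 2]
  have e2 : ‖(μ * pD y + m * pN η y)‖ ≤ (μ + 4 * m) * (1 + y) ^ 2 := by
    refine (norm_add_le _ _).trans ?_
    simp only [norm_mul, norm_real, Real.norm_eq_abs, abs_of_pos hμ, abs_of_pos hm]
    have : μ * ‖pD y‖ ≤ μ * (1 + y) ^ 2 := by
      gcongr; nlinarith
    nlinarith
  calc _ ≤ 6 * (1 + y) ^ 3 + (3 * (1 + y)) * ((μ + 4 * m) * (1 + y) ^ 2) := by
        refine (norm_add_le _ _).trans (add_le_add e1 ?_)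
        rw [norm_mul]; gcongr
    _ = _ := by ring


/-- The real part that decides ellipticity, expanded in powers of `y` (with `μ = m - 2 ε`). -/
lemma pRe_eq {ε m η y : ℝ} :
    (pD y * pN η y * (starRingEnd ℂ) (pNum (m - 2 * ε) m η y)).re =
     η * (2 * m + 2 - 2 * ε) + (4 * ε - η ^ 2 * (2 - 2 * ε + 3 * m)) * y
      + (η * (-4 * m + 4 * ε - 8) + m * η ^ 3) * y ^ 2
      + (4 * ε + η ^ 2 * (-4 + 4 * ε)) * y ^ 3
      + (η * (-2 + 6 * ε + 2 * m) + 2 * m * η ^ 3) * y ^ 4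
      + η ^ 2 * (-2 + 2 * ε + 3 * m) * y ^ 5 + m * η ^ 3 * y ^ 6 := by
  have hD : pD y = ⟨1, y⟩ := by
    apply Complex.ext <;> simp [pD]
  have hN : pN η y = ⟨1 - η * y, -y - η * y ^ 2⟩ := by
    apply Complex.ext <;> simp [pN, pow_two]
  have hV : pV η y = ⟨η, η * y + 2⟩ := by
    unfold pV; rw [hD]
    apply Complex.ext <;> simp
  have hD2 : 2 * ((η : ℂ) * pD y ^ 2 + 2 * I) = ⟨2 * η * (1 - y ^ 2), 4 * η * y + 4⟩ := by
    rw [hD]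
    apply Complex.ext <;> simp [pow_two] <;> ring
  unfold pNum
  rw [hD2, hV, hN, hD]
  simp only [map_add, map_mul, conj_ofReal, mul_re, mul_im, add_re, add_im, conj_re, conj_im,
    ofReal_re, ofReal_im, ofReal_sub]
  simp
  ring

/-- The key inequality: `Re a > 0`, with `a = D N / (2 pNum)`, uniformly on `[0, ∞)`. The terms in
`y` and `y ^ 3` of the polynomial in `pRe_eq` are about `4 ε`, where `2 ε = m - μ`; they absorb the
negative `y ^ 2` term because `η (n + 4) = ε`. -/
lemma pRe_ge {n ε μ m η y : ℝ} (hn : 2 ≤ n) (hε : 0 < ε) (hε1 : ε ≤ 1 / 8)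
    (hμ : μ = n / 2 - ε) (hm : m = n / 2 + ε) (hη : η * (n + 4) = ε) (hy : 0 ≤ y) :
    η ^ 3 / 32 * (1 + y) ^ 6 ≤ (pD y * pN η y * (starRingEnd ℂ) (pNum μ m η y)).re := by
  have hη0 : 0 < η := by by_contra h; nlinarith
  obtain rfl : μ = m - 2 * ε := by linarith
  rw [pRe_eq]
  have hη1 : η ≤ ε / 6 := by nlinarith
  have hη2 : η ^ 2 * (2 - 2 * ε + 3 * m) ≤ ε := by
    have : η ^ 2 * (2 - 2 * ε + 3 * m) ≤ η * (η * (n + 4)) * 2 := by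
      rw [hm, show η * (η * (n + 4)) * 2 = η ^ 2 * ((n + 4) * 2) by ring]
      gcongr
      linarith
    rw [hη] at this
    nlinarith
  have hη3 : η ^ 2 * (4 - 4 * ε) ≤ ε := by nlinarith
  have h6 : (1 + y) ^ 6 ≤ 32 * (1 + y ^ 6) := by
    have := add_pow_le (zero_le_one) hy 6
    norm_num at this
    linarith
  have hηm : η * (4 * m - 4 * ε + 8) = 2 * ε := by rw [hm]; linarith
  have t0 : η ^ 3 ≤ η * (2 * m + 2 - 2 * ε) := by
    have : η ^ 2 ≤ 2 * m + 2 - 2 * ε := by nlinarith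
    nlinarith
  have t1 : 3 * ε * y ≤ (4 * ε - η ^ 2 * (2 - 2 * ε + 3 * m)) * y := by gcongr; linarith
  have t3 : 3 * ε * y ^ 3 ≤ (4 * ε + η ^ 2 * (-4 + 4 * ε)) * y ^ 3 := by gcongr; linarith
  have t2 : -(2 * ε) * y ^ 2 ≤ (η * (-4 * m + 4 * ε - 8) + m * η ^ 3) * y ^ 2 := by
    gcongr
    have : 0 ≤ m * η ^ 3 := by have : 0 < m := by linarith
                               positivity
    linarith
  have t4 : 0 ≤ (η * (-2 + 6 * ε + 2 * m) + 2 * m * η ^ 3) * y ^ 4 := by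
    have : 0 < m := by linarith
    have : 0 ≤ -2 + 6 * ε + 2 * m := by linarith
    positivity
  have t5 : 0 ≤ η ^ 2 * (-2 + 2 * ε + 3 * m) * y ^ 5 := by
    have : 0 ≤ -2 + 2 * ε + 3 * m := by linarith
    positivity
  have t6 : η ^ 3 * y ^ 6 ≤ m * η ^ 3 * y ^ 6 := by
    have : 1 ≤ m := by linarith
    gcongr
    nlinarith [pow_pos hη0 3]
  have t7 : 0 ≤ 3 * ε * y + 3 * ε * y ^ 3 - 2 * ε * y ^ 2 := by
    have : 0 ≤ ε * y * (3 + 3 * y ^ 2 - 2 * y) := by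
      have : 0 ≤ 3 + 3 * y ^ 2 - 2 * y := by nlinarith
      positivity
    nlinarith
  have t8 : η ^ 3 / 32 * (1 + y) ^ 6 ≤ η ^ 3 / 32 * (32 * (1 + y ^ 6)) := by gcongr
  linarith


lemma pD_norm_ge {y : ℝ} (hy : 0 ≤ y) : (1 + y) / 2 ≤ ‖pD y‖ := by
  have h1 : |(pD y).re| ≤ ‖pD y‖ := abs_re_le_norm _
  have h2 : |(pD y).im| ≤ ‖pD y‖ := abs_im_le_norm _
  simp [pD, abs_of_nonneg hy] at h1 h2
  unfold pD
  linarith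

lemma pD_hasDeriv (y : ℝ) : HasDerivAt pD I y := by
  have h : HasDerivAt (fun y : ℝ => (y : ℂ)) 1 y := Complex.ofRealCLM.hasDerivAt
  have := (h.const_mul I).const_add 1
  rwa [mul_one] at this

lemma pN_hasDeriv (η y : ℝ) : HasDerivAt (pN η) (-I - η - 2 * I * η * y) y := by
  have h : HasDerivAt (fun y : ℝ => (y : ℂ)) 1 y := Complex.ofRealCLM.hasDerivAt
  have := ((((h.const_mul I).const_sub 1).sub (h.const_mul (η : ℂ))).sub
    ((h.pow 2).const_mul (I * η)))
  refine this.congr_deriv ?_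
  norm_num
  ring

lemma ofReal_contDiff : ContDiff ℝ (⊤ : ℕ∞) (fun y : ℝ => (y : ℂ)) := Complex.ofRealCLM.contDiff

lemma contDiffAt_div {f g : ℝ → ℂ} {y : ℝ} (hf : ContDiffAt ℝ (⊤ : ℕ∞) f y)
    (hg : ContDiffAt ℝ (⊤ : ℕ∞) g y) (h0 : g y ≠ 0) :
    ContDiffAt ℝ (⊤ : ℕ∞) (fun y => f y / g y) y := by
  simp only [div_eq_mul_inv]
  exact hf.mul (hg.inv h0)

lemma contDiff_div {f g : ℝ → ℂ} (hf : ContDiff ℝ (⊤ : ℕ∞) f)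
    (hg : ContDiff ℝ (⊤ : ℕ∞) g) (h0 : ∀ y, g y ≠ 0) :
    ContDiff ℝ (⊤ : ℕ∞) (fun y => f y / g y) :=
  contDiff_iff_contDiffAt.2 fun y => contDiffAt_div hf.contDiffAt hg.contDiffAt (h0 y)

lemma pD_contDiff : ContDiff ℝ (⊤ : ℕ∞) pD := by
  unfold pD
  exact contDiff_const.add (contDiff_const.mul ofReal_contDiff)

lemma pN_contDiff (η : ℝ) : ContDiff ℝ (⊤ : ℕ∞) (pN η) := by
  unfold pN
  exact ((contDiff_const.sub (contDiff_const.mul ofReal_contDiff)).sub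
    (contDiff_const.mul ofReal_contDiff)).sub (contDiff_const.mul (ofReal_contDiff.pow 2))

lemma pV_contDiff (η : ℝ) : ContDiff ℝ (⊤ : ℕ∞) (pV η) := by
  unfold pV
  exact (contDiff_const.mul pD_contDiff).add contDiff_const

lemma pNum_contDiff (μ m η : ℝ) : ContDiff ℝ (⊤ : ℕ∞) (pNum μ m η) := by
  unfold pNum
  exact (contDiff_const.mul ((contDiff_const.mul (pD_contDiff.pow 2)).add contDiff_const)).add
    ((pV_contDiff η).mul ((contDiff_const.mul pD_contDiff).add
      (contDiff_const.mul (pN_contDiff η))))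

/-- The exponent `h`, that is `∫₀ʸ (p - μ) / (2 s) ds`. -/
lemma exists_primitive (μ η : ℝ) : ∃ h : ℝ → ℂ, ContDiff ℝ (⊤ : ℕ∞) h ∧ h 0 = 0 ∧
    ∀ y, HasDerivAt h (μ * pV η y / (2 * pN η y)) y := by
  have hq : ContDiff ℝ (⊤ : ℕ∞) (fun y => μ * pV η y / (2 * pN η y)) :=
    contDiff_div (contDiff_const.mul (pV_contDiff η)) (contDiff_const.mul (pN_contDiff η))
      fun y => mul_ne_zero two_ne_zero pN_ne_zero
  have hd : ∀ y, HasDerivAt (fun y => ∫ s in (0 : ℝ)..y, μ * pV η s / (2 * pN η s))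
      (μ * pV η y / (2 * pN η y)) y := fun y =>
    intervalIntegral.integral_hasDerivAt_right (hq.continuous.intervalIntegrable _ _)
      (hq.continuous.stronglyMeasurableAtFilter _ _) hq.continuous.continuousAt
  refine ⟨_, ?_, by simp, hd⟩
  rw [contDiff_infty_iff_deriv]
  refine ⟨fun y => (hd y).differentiableAt, ?_⟩
  rw [funext fun y => (hd y).deriv]
  exact hq

/-- `e^h` decays like `y ^ (-μ / 2)`: since `p → 0` at infinity, `h' = -μ / (2 y) + O(y⁻²)`. The term
`K / (1 + y)` in the auxiliary function `f` absorbs the remainder and makes `f` decreasing. -/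
lemma exp_primitive_norm_le {μ η : ℝ} (hμ : 0 < μ) (hη : 0 < η) (hη1 : η ≤ 1 / 4) {h : ℝ → ℂ}
    (h0 : h 0 = 0) (hd : ∀ y, HasDerivAt h (μ * pV η y / (2 * pN η y)) y) {y : ℝ} (hy : 0 ≤ y) :
    ‖exp (h y)‖ ≤ Real.exp (10 * μ / η) * (1 + y) ^ (-(μ / 2)) := by
  set K := 10 * μ / η with hK
  let f : ℝ → ℝ := fun y => (h y).re + μ / 2 * Real.log (1 + y) + K * (1 + y)⁻¹
  have hf : ∀ y, 0 ≤ y → HasDerivAt f ((μ * pV η y / (2 * pN η y)).re + μ / 2 * (1 / (1 + y))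
      + K * (-1 / (1 + y) ^ 2)) y := by
    intro y hy
    have e1 : HasDerivAt (fun y : ℝ => 1 + y) 1 y := (hasDerivAt_id y).const_add 1
    have hre : HasDerivAt (fun y => (h y).re) (μ * pV η y / (2 * pN η y)).re y := by
      exact Complex.reCLM.hasFDerivAt.comp_hasDerivAt y (hd y)
    exact (hre.add ((e1.log (by linarith)).const_mul _)).add ((e1.fun_inv (by linarith)).const_mul _)
  have hneg : ∀ y, 0 ≤ y → (μ * pV η y / (2 * pN η y)).re + μ / 2 * (1 / (1 + y))
      + K * (-1 / (1 + y) ^ 2) ≤ 0 := by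
    intro y hy
    have hpos : 0 < 1 + y := by linarith
    have hne : (1 + y : ℂ) ≠ 0 := by
      have : ((1 + y : ℝ) : ℂ) ≠ 0 := by exact_mod_cast hpos.ne'
      simpa using this
    have hN := pN_ne_zero (η := η) (y := y)
    -- The leading `1 / y` terms cancel; what is left is `O((1 + y)⁻²)`.
    have hsum : (μ * pV η y / (2 * pN η y) : ℂ) + ((μ / 2 * (1 / (1 + y)) : ℝ) : ℂ)
        = μ / 2 * ((1 + η + 2 * I) + (η + 1) * I * y) / (pN η y * (1 + y)) := by
      push_cast
      field_simp
      unfold pV pN pD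
      ring
    have hb : ‖(μ * pV η y / (2 * pN η y) : ℂ) + ((μ / 2 * (1 / (1 + y)) : ℝ) : ℂ)‖
        ≤ K * (1 / (1 + y) ^ 2) := by
      rw [hsum, norm_div, norm_mul, norm_mul]
      have n1 : ‖(1 + y : ℂ)‖ = 1 + y := by
        have : (1 + y : ℂ) = ((1 + y : ℝ) : ℂ) := by push_cast; rfl
        rw [this, norm_real, Real.norm_of_nonneg hpos.le]
      have n2 : ‖(μ / 2 : ℂ)‖ = μ / 2 := by
        have : (μ / 2 : ℂ) = ((μ / 2 : ℝ) : ℂ) := by push_cast; rfl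
        rw [this, norm_real, Real.norm_of_nonneg (by positivity)]
      have n3 : ‖(1 + η + 2 * I : ℂ) + (η + 1) * I * y‖ ≤ 5 * (1 + y) := by
        have : (1 + η + 2 * I : ℂ) + (η + 1) * I * y
          = ((1 + η : ℝ) : ℂ) + ((2 + (η + 1) * y : ℝ) : ℂ) * I := by push_cast; ring
        rw [this]
        refine (norm_add_le _ _).trans ?_
        rw [norm_mul, norm_real, norm_real, norm_I, Real.norm_of_nonneg (by positivity),
          Real.norm_of_nonneg (by positivity)]
        nlinarith
      have n4 := pN_norm_ge hη hη1 hy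
      rw [n1, n2]
      calc _ ≤ μ / 2 * (5 * (1 + y)) / (η / 4 * (1 + y) ^ 2 * (1 + y)) := by gcongr
        _ = _ := by rw [hK]; field_simp; ring
    have := (re_le_norm _).trans hb
    rw [add_re, ofReal_re] at this
    have e : K * (-1 / (1 + y) ^ 2) = - (K * (1 / (1 + y) ^ 2)) := by ring
    rw [e]; linarith
  have hanti : AntitoneOn f (Set.Ici 0) := by
    apply antitoneOn_of_deriv_nonpos (convex_Ici 0)
    · exact fun y hy => (hf y hy).continuousAt.continuousWithinAt
    · intro y hy
      rw [interior_Ici] at hy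
      exact (hf y (le_of_lt hy)).differentiableAt.differentiableWithinAt
    · intro y hy
      rw [interior_Ici] at hy
      rw [(hf y (le_of_lt hy)).deriv]
      exact hneg y (le_of_lt hy)
  have := hanti (Set.mem_Ici.2 le_rfl) (Set.mem_Ici.2 hy) hy
  simp only [f, h0] at this
  simp at this
  have hKp : 0 ≤ K * (1 + y)⁻¹ := by positivity
  rw [norm_exp, Real.rpow_def_of_pos (by linarith), ← Real.exp_add, Real.exp_le_exp]
  linarith

/-- Profile data for the radial backward self-similar ansatz `u(x, t) = (-t) ^ (-μ / 2) w(y)`,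
`A(x, t) = a(y) I`, `y = |x|² / (-t)`. Here `dw` and `dB` are the derivatives of `w` and of the flux
`B = 2 a w'`, and `ode` is the equation `∂ₜ u = div (A ∇u)` written in the variable `y`. Only `y ≥ 0`
matters; `w` and `B` are extended to all of `ℝ` so that their derivatives at `y = 0` are two-sided. -/
structure IsProfile (n μ lam Lam C : ℝ) (w dw B dB a : ℝ → ℂ) : Prop where
  w_smooth : ContDiff ℝ (⊤ : ℕ∞) w
  a_smooth : ∀ y, 0 ≤ y → ContDiffAt ℝ (⊤ : ℕ∞) a y
  w_deriv : ∀ y, HasDerivAt w (dw y) y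
  B_deriv : ∀ y, HasDerivAt B (dB y) y
  flux : ∀ y, 0 ≤ y → 2 * a y * dw y = B y
  ode : ∀ y : ℝ, n * B y + 2 * y * dB y = μ / 2 * w y + y * dw y
  lower : ∀ y, 0 ≤ y → lam ≤ (a y).re
  upper : ∀ y, 0 ≤ y → ‖a y‖ ≤ Lam
  w_le : ∀ y, 0 ≤ y → ‖w y‖ ≤ C * (1 + y) ^ (-(μ / 2))
  dw_le : ∀ y, 0 ≤ y → ‖dw y‖ ≤ C * (1 + y) ^ (-(μ / 2) - 1)
  w_ne : w 0 ≠ 0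
  dw_ne : dw 1 ≠ 0

lemma exists_profile_s14 {n ε : ℝ} (hn : 2 ≤ n) (hε : 0 < ε) (hε1 : ε ≤ 1 / 8) :
    ∃ lam Lam C : ℝ, ∃ w dw B dB a : ℝ → ℂ, 0 < lam ∧ 0 < Lam ∧
      IsProfile n (n / 2 - ε) lam Lam C w dw B dB a := by
  obtain ⟨μ, hμ⟩ : ∃ μ, μ = n / 2 - ε := ⟨_, rfl⟩
  obtain ⟨m, hm⟩ : ∃ m, m = n / 2 + ε := ⟨_, rfl⟩
  obtain ⟨η, hη⟩ : ∃ η, η * (n + 4) = ε := ⟨ε / (n + 4), by field_simp⟩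
  rw [← hμ]
  have hη0 : 0 < η := by by_contra h; nlinarith
  have hη1 : η ≤ 1 / 4 := by nlinarith
  have hμ0 : 0 < μ := by linarith
  have hm0 : 0 < m := by linarith
  have hnm : (n : ℂ) = μ + m := by
    have : n = μ + m := by linarith
    rw [this]; push_cast; rfl
  obtain ⟨h, hsm, h0, hd⟩ := exists_primitive μ η
  have hexp : ∀ y, HasDerivAt (fun y => exp (h y)) (exp (h y) * (μ * pV η y / (2 * pN η y))) y :=
    fun y => (hd y).cexp
  have hexpC : ContDiff ℝ (⊤ : ℕ∞) (fun y => exp (h y)) := hsm.cexp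
  set K := 6 + 3 * μ + 12 * m with hK
  have hKp : 0 < K := by positivity
  set c := η ^ 3 / 32 with hc
  have hcp : 0 < c := by positivity
  have hR := fun y (hy : 0 ≤ y) => pRe_ge hn hε hε1 hμ hm hη hy
  have hNum := fun y (hy : 0 ≤ y) => pNum_norm_le hμ0 hm0 hη0 (hη1.trans (by norm_num)) hy
  have hDN : ∀ y, 0 ≤ y → ‖pD y * pN η y‖ ≤ 4 * (1 + y) ^ 3 := by
    intro y hy
    rw [norm_mul]
    calc _ ≤ (1 + y) * (4 * (1 + y) ^ 2) := by
          gcongr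
          exacts [pD_norm_le hy, pN_norm_le hη0 (hη1.trans (by norm_num)) hy]
      _ = _ := by ring
  have hNumge : ∀ y, 0 ≤ y → c / 4 * (1 + y) ^ 3 ≤ ‖pNum μ m η y‖ := by
    intro y hy
    have h1 := (hR y hy).trans (re_le_norm _)
    rw [norm_mul, RCLike.norm_conj] at h1
    have h2 := h1.trans (mul_le_mul_of_nonneg_right (hDN y hy) (norm_nonneg _))
    have h3 : 0 < (1 + y) ^ 3 := by positivity
    rw [show c * (1 + y) ^ 6 = (1 + y) ^ 3 * (c * (1 + y) ^ 3) by ring,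
      show 4 * (1 + y) ^ 3 * ‖pNum μ m η y‖ = (1 + y) ^ 3 * (4 * ‖pNum μ m η y‖) by ring] at h2
    have := le_of_mul_le_mul_left h2 h3
    linarith
  have hNumpos : ∀ y, 0 ≤ y → 0 < ‖pNum μ m η y‖ := fun y hy =>
    lt_of_lt_of_le (by positivity) (hNumge y hy)
  have hNumne : ∀ y, 0 ≤ y → pNum μ m η y ≠ 0 := fun y hy => norm_pos_iff.1 (hNumpos y hy)
  have hN := fun y => pN_ne_zero (η := η) (y := y)
  have hE := fun y (hy : 0 ≤ y) => exp_primitive_norm_le hμ0 hη0 hη1 h0 hd hy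
  set E := Real.exp (10 * μ / η) with hEdef
  have hEp : 0 < E := Real.exp_pos _
  set C1 := (m + 4 * μ / η) * E with hC1
  set C2 := (8 * μ * K / η ^ 2) * E with hC2
  have hwd : ∀ y, HasDerivAt (fun y => (m + μ * pD y / pN η y) * exp (h y))
      (μ * pNum μ m η y / (2 * pN η y ^ 2) * exp (h y)) y := by
    intro y
    have := ((((pD_hasDeriv y).const_mul (μ : ℂ)).fun_div (pN_hasDeriv η y) (hN y)).const_add
      (m : ℂ)).fun_mul (hexp y)
    refine this.congr_deriv ?_
    have := hN y
    field_simp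
    unfold pNum pV pN pD
    ring
  have hBd : ∀ y, HasDerivAt (fun y => (μ / 2) * (pD y / pN η y) * exp (h y))
      ((μ / 2 * ((I * pN η y - pD y * (-I - η - 2 * I * η * y)) / pN η y ^ 2)) * exp (h y)
        + (μ / 2) * (pD y / pN η y) * (exp (h y) * (μ * pV η y / (2 * pN η y)))) y := by
    intro y
    exact (((pD_hasDeriv y).fun_div (pN_hasDeriv η y) (hN y)).const_mul (μ / 2 : ℂ)).fun_mul (hexp y)
  refine ⟨c / (2 * K ^ 2), 8 / c, max C1 C2, _, _, _, _,
    fun y => pD y * pN η y / (2 * pNum μ m η y), by positivity, by positivity, ?_, ?_, hwd, hBd,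
    ?_, ?_, ?_, ?_, ?_, ?_, ?_, ?_⟩
  · exact (contDiff_const.add (contDiff_div (contDiff_const.mul pD_contDiff) (pN_contDiff η) hN)).mul hexpC
  · intro y hy
    exact contDiffAt_div (pD_contDiff.mul (pN_contDiff η)).contDiffAt
      (contDiff_const.mul (pNum_contDiff μ m η)).contDiffAt (mul_ne_zero two_ne_zero (hNumne y hy))
  · intro y hy
    have := hN y
    have := hNumne y hy
    field_simp
  · intro y
    have := hN y
    rw [hnm]
    field_simp
    unfold pNum
    simp only [pV, pD, pN]
    ring
  · intro y hy
    have e : pD y * pN η y / (2 * pNum μ m η y)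
        = (pD y * pN η y * (starRingEnd ℂ) (pNum μ m η y)) * ((2 * ‖pNum μ m η y‖ ^ 2 : ℝ) : ℂ)⁻¹ := by
      have h1 : ((‖pNum μ m η y‖ : ℂ)) ^ 2 = pNum μ m η y * (starRingEnd ℂ) (pNum μ m η y) := by
        rw [mul_conj, normSq_eq_norm_sq]; push_cast; rfl
      push_cast
      rw [h1]
      have := hNumne y hy
      have h2 : (starRingEnd ℂ) (pNum μ m η y) ≠ 0 := by simpa using this
      field_simp
    rw [e, ← ofReal_inv, re_mul_ofReal, ← div_eq_mul_inv]
    rw [div_le_div_iff₀ (by positivity) (by have := hNumpos y hy; positivity)]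
    have h1 := hR y hy
    have h2 : ‖pNum μ m η y‖ ^ 2 ≤ (K * (1 + y) ^ 3) ^ 2 := by gcongr; exact hNum y hy
    calc c * (2 * ‖pNum μ m η y‖ ^ 2) ≤ c * (2 * (K * (1 + y) ^ 3) ^ 2) := by gcongr
      _ = (c * (1 + y) ^ 6) * (2 * K ^ 2) := by ring
      _ ≤ _ := by gcongr
  · intro y hy
    rw [norm_div, norm_mul 2, Complex.norm_ofNat]
    calc _ ≤ 4 * (1 + y) ^ 3 / (2 * (c / 4 * (1 + y) ^ 3)) := by
          gcongr
          exacts [hDN y hy, hNumge y hy]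
      _ = 8 / c := by field_simp; norm_num
  · intro y hy
    have h1 : ‖(m + μ * pD y / pN η y : ℂ)‖ ≤ m + 4 * μ / η := by
      refine (norm_add_le _ _).trans ?_
      rw [norm_div, norm_mul, norm_real, norm_real, Real.norm_of_nonneg hm0.le,
        Real.norm_of_nonneg hμ0.le]
      refine add_le_add le_rfl ?_
      calc _ ≤ μ * (1 + y) ^ 2 / (η / 4 * (1 + y) ^ 2) := by
            gcongr
            · refine (pD_norm_le hy).trans (by nlinarith)
            · exact pN_norm_ge hη0 hη1 hy
        _ = _ := by field_simp
    rw [norm_mul]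
    calc _ ≤ (m + 4 * μ / η) * (E * (1 + y) ^ (-(μ / 2))) := by
          gcongr
          exact hE y hy
      _ = C1 * (1 + y) ^ (-(μ / 2)) := by rw [hC1]; ring
      _ ≤ _ := by gcongr; exact le_max_left _ _
  · intro y hy
    have h1 : ‖(μ * pNum μ m η y / (2 * pN η y ^ 2) : ℂ)‖ ≤ 8 * μ * K / η ^ 2 * (1 + y)⁻¹ := by
      rw [norm_div, norm_mul, norm_mul, norm_real, norm_pow, Complex.norm_ofNat,
        Real.norm_of_nonneg hμ0.le]
      calc _ ≤ μ * (K * (1 + y) ^ 3) / (2 * (η / 4 * (1 + y) ^ 2) ^ 2) := by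
            gcongr
            · exact hNum y hy
            · exact pN_norm_ge hη0 hη1 hy
        _ = _ := by field_simp; norm_num
    rw [norm_mul, Real.rpow_sub_one (by positivity)]
    calc _ ≤ (8 * μ * K / η ^ 2 * (1 + y)⁻¹) * (E * (1 + y) ^ (-(μ / 2))) := by
          gcongr
          exact hE y hy
      _ = C2 * ((1 + y) ^ (-(μ / 2)) / (1 + y)) := by rw [hC2]; ring
      _ ≤ _ := by gcongr; exact le_max_right _ _
  · simp only [pD, pN, ofReal_zero]
    simp only [mul_zero, add_zero, sub_zero, mul_one, div_one, ne_eq, zero_pow two_ne_zero,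
      mul_eq_zero, exp_ne_zero, or_false]
    rw [add_comm, ← hnm]
    exact_mod_cast (by linarith : n ≠ 0)
  · have := hNumne 1 zero_le_one
    have := hN 1
    have : (μ : ℂ) ≠ 0 := by exact_mod_cast hμ0.ne'
    have := exp_ne_zero (h 1)
    simp_all

end profile

/-! ### The solution built from a profile -/

section construction
open Complex

/-- The self-similar function `u(x, t) = (-t) ^ (-μ / 2) w(|x|² / (-t))`, meaningful for `t < 0`. -/
def uSol {n : ℕ} (μ : ℝ) (w : ℝ → ℂ) (x : EuclideanSpace ℝ (Fin n)) (t : ℝ) : ℂ :=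
  (((-t) ^ (-(μ / 2)) : ℝ) : ℂ) * w (‖x‖ ^ 2 / (-t))

/-- The Euclidean norm `|∇ₓ u(x, t)|` of the gradient of `uSol` (see `gradSq_eq`), at `p = (x, t)`. -/
def gradNorm {n : ℕ} (μ : ℝ) (dw : ℝ → ℂ) (p : EuclideanSpace ℝ (Fin n) × ℝ) : ℝ :=
  (-p.2) ^ (-(μ / 2) - 1) * ‖dw (‖p.1‖ ^ 2 / (-p.2))‖ * 2 * ‖p.1‖

lemma fderiv_radial {n : ℕ} {f : ℝ → ℂ} {f' : ℂ} {T : ℝ} {x : EuclideanSpace ℝ (Fin n)}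
    (hf : HasDerivAt f f' (‖x‖ ^ 2 / T)) :
    ∃ L : EuclideanSpace ℝ (Fin n) →L[ℝ] ℂ, HasFDerivAt (fun y => f (‖y‖ ^ 2 / T)) L x ∧
      ∀ k, L (EuclideanSpace.single k 1) = f' * (2 * x k / T) := by
  have h1 : HasFDerivAt (fun y : EuclideanSpace ℝ (Fin n) => ‖y‖ ^ 2 / T)
      (T⁻¹ • (2 • innerSL ℝ x)) x := by
    have := (hasStrictFDerivAt_norm_sq x).hasFDerivAt.const_mul T⁻¹
    simpa only [div_eq_inv_mul] using this
  refine ⟨_, hf.hasFDerivAt.comp x h1, fun k => ?_⟩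
  simp [EuclideanSpace.inner_single_right]
  ring

lemma pdC_radial {n : ℕ} {f : ℝ → ℂ} {f' : ℂ} {T : ℝ} (c : ℂ) {x : EuclideanSpace ℝ (Fin n)}
    (hf : HasDerivAt f f' (‖x‖ ^ 2 / T)) (k : Fin n) :
    pdC (fun y => c * f (‖y‖ ^ 2 / T)) x k = c * (f' * (2 * x k / T)) := by
  obtain ⟨L, hL, hk⟩ := fderiv_radial hf
  unfold pdC
  rw [(hL.const_mul c).fderiv]
  simp [hk]

lemma sum_coord_sq {n : ℕ} (x : EuclideanSpace ℝ (Fin n)) :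
    ∑ k, (x k : ℂ) * (x k : ℂ) = ((‖x‖ ^ 2 : ℝ) : ℂ) := by
  rw [EuclideanSpace.norm_sq_eq]
  push_cast
  refine Finset.sum_congr rfl fun k _ => ?_
  rw [← ofReal_mul, ← ofReal_pow, Real.norm_eq_abs, sq_abs, pow_two]

/-- The divergence of the radial field `c B(|x|² / T) x`. -/
lemma div_radial {n : ℕ} {B : ℝ → ℂ} {B' : ℂ} {T : ℝ} (c : ℂ) {x : EuclideanSpace ℝ (Fin n)}
    (hB : HasDerivAt B B' (‖x‖ ^ 2 / T)) :
    ∑ k, fderiv ℝ (fun y : EuclideanSpace ℝ (Fin n) => c * (B (‖y‖ ^ 2 / T) * (y k : ℂ))) x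
      (EuclideanSpace.single k 1)
    = c * (n * B (‖x‖ ^ 2 / T) + 2 * ((‖x‖ ^ 2 / T : ℝ) : ℂ) * B') := by
  obtain ⟨L, hL, hk⟩ := fderiv_radial hB
  have hc : ∀ k : Fin n, HasFDerivAt (fun y : EuclideanSpace ℝ (Fin n) => ((y k : ℝ) : ℂ))
      (ofRealCLM.comp (EuclideanSpace.proj k : EuclideanSpace ℝ (Fin n) →L[ℝ] ℝ)) x := fun k =>
    (ofRealCLM.comp (EuclideanSpace.proj k : EuclideanSpace ℝ (Fin n) →L[ℝ] ℝ)).hasFDerivAt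
  have h1 : ∀ k : Fin n,
      fderiv ℝ (fun y : EuclideanSpace ℝ (Fin n) => c * (B (‖y‖ ^ 2 / T) * (y k : ℂ))) x
      (EuclideanSpace.single k 1)
      = c * (B (‖x‖ ^ 2 / T) + (2 / T * B') * ((x k : ℂ) * (x k : ℂ))) := by
    intro k
    rw [((hL.fun_mul (hc k)).const_mul c).fderiv]
    simp [hk]
    ring_nf
  rw [Finset.sum_congr rfl fun k _ => h1 k, ← Finset.mul_sum, Finset.sum_add_distrib,
    ← Finset.mul_sum, sum_coord_sq]
  simp only [Finset.sum_const, Finset.card_univ, Fintype.card_fin, nsmul_eq_mul]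
  push_cast
  ring

variable {n : ℕ} {μ lam Lam C : ℝ} {w dw B dB a : ℝ → ℂ}

lemma gradSq_eq (hw : ∀ y, HasDerivAt w (dw y) y) {x : EuclideanSpace ℝ (Fin n)} {t : ℝ}
    (ht : t < 0) :
    ∑ k, ‖pdC (fun y => uSol μ w y t) x k‖ ^ 2 = gradNorm μ dw (x, t) ^ 2 := by
  have hT : 0 < -t := by linarith
  have h1 : ∀ k, ‖pdC (fun y => uSol μ w y t) x k‖ ^ 2
      = ((-t) ^ (-(μ / 2) - 1) * ‖dw (‖x‖ ^ 2 / (-t))‖ * 2) ^ 2 * ‖x k‖ ^ 2 := by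
    intro k
    unfold uSol
    rw [pdC_radial _ (hw _), ← mul_pow]
    congr 1
    have : (2 * (x k : ℂ) / ((-t : ℝ) : ℂ)) = ((2 * x k / (-t) : ℝ) : ℂ) := by push_cast; rfl
    rw [this]
    simp only [norm_mul, norm_real, norm_div, Real.norm_eq_abs, abs_of_pos hT,
      abs_of_pos (Real.rpow_pos_of_pos hT _), abs_two]
    rw [Real.rpow_sub_one hT.ne']
    ring
  rw [Finset.sum_congr rfl fun k _ => h1 k, ← Finset.mul_sum, ← EuclideanSpace.norm_sq_eq]
  unfold gradNorm
  ring

lemma pde (P : IsProfile n μ lam Lam C w dw B dB a) (x : EuclideanSpace ℝ (Fin n)) {t : ℝ}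
    (ht : t < 0) :
    deriv (fun s => uSol μ w x s) t
      = divAgrad (fun y => a (‖y‖ ^ 2 / (-t)) • (1 : Matrix (Fin n) (Fin n) ℂ))
          (fun y => uSol μ w y t) x := by
  have hT : 0 < -t := by linarith
  have hTc : (t : ℂ) ≠ 0 := by exact_mod_cast ht.ne
  set c : ℂ := (((-t) ^ (-(μ / 2)) : ℝ) : ℂ) with hc
  have hL : deriv (fun s => uSol μ w x s) t
      = c / ((-t : ℝ) : ℂ) * (μ / 2 * w (‖x‖ ^ 2 / (-t))
        + ((‖x‖ ^ 2 / (-t) : ℝ) : ℂ) * dw (‖x‖ ^ 2 / (-t))) := by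
    have hn : HasDerivAt (fun s : ℝ => -s) (-1) t := hasDerivAt_neg t
    have h1 := (hn.rpow_const (p := -(μ / 2)) (Or.inl hT.ne')).ofReal_comp
    have h2 : HasDerivAt (fun s : ℝ => ‖x‖ ^ 2 / (-s)) (‖x‖ ^ 2 / (-t) / (-t)) t := by
      have := (hn.fun_inv hT.ne').const_mul (‖x‖ ^ 2)
      simp only [← div_eq_mul_inv] at this
      refine this.congr_deriv ?_
      field_simp
    have h3 := (P.w_deriv (‖x‖ ^ 2 / (-t))).scomp t h2
    have h4 := h1.fun_mul h3
    rw [show (fun s => uSol μ w x s) = fun s => (((-s) ^ (-(μ / 2)) : ℝ) : ℂ)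
      * (w ∘ fun s => ‖x‖ ^ 2 / (-s)) s from rfl, h4.deriv, Real.rpow_sub_one hT.ne']
    simp only [Function.comp, real_smul]
    rw [hc]
    push_cast
    field_simp
    ring
  have hR : ∀ (y : EuclideanSpace ℝ (Fin n)) (k : Fin n),
      ∑ l, (a (‖y‖ ^ 2 / (-t)) • (1 : Matrix (Fin n) (Fin n) ℂ)) k l
        * pdC (fun y => uSol μ w y t) y l
      = c / ((-t : ℝ) : ℂ) * (B (‖y‖ ^ 2 / (-t)) * (y k : ℂ)) := by
    intro y k
    rw [Finset.sum_eq_single k]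
    · unfold uSol
      rw [pdC_radial _ (P.w_deriv _), ← P.flux _ (by positivity)]
      simp only [Matrix.smul_apply, Matrix.one_apply_eq, smul_eq_mul]
      ring
    · intro l _ hl
      simp [Matrix.one_apply_ne hl.symm]
    · simp
  rw [hL]
  unfold divAgrad
  simp only [hR]
  rw [div_radial _ (P.B_deriv _), ← P.ode]
  push_cast
  rfl

lemma ellipticity {z : ℂ} (h1 : lam ≤ z.re) (h2 : ‖z‖ ≤ Lam) (p : Fin n → ℂ) :
    lam * ∑ k, ‖p k‖ ^ 2
      ≤ (∑ k, ∑ l, (z • (1 : Matrix (Fin n) (Fin n) ℂ)) k l * p k * (starRingEnd ℂ) (p l)).re ∧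
    ∑ k, ‖(z • (1 : Matrix (Fin n) (Fin n) ℂ)).mulVec p k‖ ^ 2 ≤ Lam ^ 2 * ∑ k, ‖p k‖ ^ 2 := by
  constructor
  · have : ∀ k, ∑ l, (z • (1 : Matrix (Fin n) (Fin n) ℂ)) k l * p k * (starRingEnd ℂ) (p l)
        = z * ((‖p k‖ ^ 2 : ℝ) : ℂ) := by
      intro k
      rw [Finset.sum_eq_single k]
      · simp only [Matrix.smul_apply, Matrix.one_apply_eq, smul_eq_mul, mul_one]
        rw [mul_assoc, mul_conj, normSq_eq_norm_sq]
      · intro l _ hl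
        simp [Matrix.one_apply_ne hl.symm]
      · simp
    rw [Finset.sum_congr rfl fun k _ => this k, ← Finset.mul_sum, ← ofReal_sum, re_mul_ofReal]
    gcongr
  · simp only [Matrix.smul_mulVec, Matrix.one_mulVec, Pi.smul_apply, smul_eq_mul, norm_mul, mul_pow]
    rw [← Finset.mul_sum]
    gcongr

lemma contDiffAt_sim {f : ℝ → ℂ} {p : EuclideanSpace ℝ (Fin n) × ℝ} (ht : p.2 < 0)
    (hf : ContDiffAt ℝ (⊤ : ℕ∞) f (‖p.1‖ ^ 2 / (-p.2))) :
    ContDiffAt ℝ (⊤ : ℕ∞)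
      (fun p : EuclideanSpace ℝ (Fin n) × ℝ => f (‖p.1‖ ^ 2 / (-p.2))) p := by
  have h : ContDiffAt ℝ (⊤ : ℕ∞)
      (fun p : EuclideanSpace ℝ (Fin n) × ℝ => ‖p.1‖ ^ 2 / (-p.2)) p :=
    (contDiffAt_fst.norm_sq ℝ).div contDiffAt_snd.neg (by linarith)
  exact hf.comp p h

lemma uSol_contDiffAt (hw : ContDiff ℝ (⊤ : ℕ∞) w) {p : EuclideanSpace ℝ (Fin n) × ℝ}
    (ht : p.2 < 0) :
    ContDiffAt ℝ (⊤ : ℕ∞) (fun p : EuclideanSpace ℝ (Fin n) × ℝ => uSol μ w p.1 p.2) p := by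
  unfold uSol
  refine ContDiffAt.mul ?_ (contDiffAt_sim ht hw.contDiffAt)
  exact ofReal_contDiff.contDiffAt.comp p
    (contDiffAt_snd.neg.rpow_const_of_ne (by linarith))

lemma gradNorm_continuousAt (hdw : Continuous dw) {p : EuclideanSpace ℝ (Fin n) × ℝ}
    (ht : p.2 < 0) : ContinuousAt (gradNorm μ dw) p := by
  unfold gradNorm
  have h0 : -p.2 ≠ 0 := by linarith
  have h2 : ContinuousAt (fun p : EuclideanSpace ℝ (Fin n) × ℝ => -p.2) p := by fun_prop
  have h3 : ContinuousAt (fun p : EuclideanSpace ℝ (Fin n) × ℝ => ‖p.1‖ ^ 2 / (-p.2)) p :=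
    ContinuousAt.div (by fun_prop) h2 h0
  have h4 : ContinuousAt (fun p : EuclideanSpace ℝ (Fin n) × ℝ => dw (‖p.1‖ ^ 2 / (-p.2))) p :=
    ContinuousAt.comp (f := fun p : EuclideanSpace ℝ (Fin n) × ℝ => ‖p.1‖ ^ 2 / (-p.2))
      hdw.continuousAt h3
  exact (((h2.rpow_const (Or.inl h0)).mul h4.norm).mul continuousAt_const).mul (by fun_prop)

lemma rpow_sim {T X s : ℝ} (hT : 0 < T) (hX : 0 ≤ X) :
    T ^ s * (1 + X / T) ^ s = (T + X) ^ s := by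
  rw [← Real.mul_rpow hT.le (by positivity)]
  congr 1
  field_simp

lemma uSol_norm_le (P : IsProfile n μ lam Lam C w dw B dB a) (x : EuclideanSpace ℝ (Fin n)) {t : ℝ}
    (ht : t < 0) : ‖uSol μ w x t‖ ≤ C * (-t + ‖x‖ ^ 2) ^ (-(μ / 2)) := by
  have hT : 0 < -t := by linarith
  have hp := Real.rpow_pos_of_pos hT (-(μ / 2))
  unfold uSol
  rw [norm_mul, norm_real, Real.norm_of_nonneg hp.le, ← rpow_sim hT (by positivity)]
  have := mul_le_mul_of_nonneg_left (P.w_le (‖x‖ ^ 2 / (-t)) (by positivity)) hp.le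
  linarith

lemma gradNorm_le (P : IsProfile n μ lam Lam C w dw B dB a) (x : EuclideanSpace ℝ (Fin n)) {t : ℝ}
    (ht : t < 0) : gradNorm μ dw (x, t) ≤ 2 * C * (-t + ‖x‖ ^ 2) ^ (-(μ / 2) - 1) * ‖x‖ := by
  have hT : 0 < -t := by linarith
  have hp := Real.rpow_pos_of_pos hT (-(μ / 2) - 1)
  unfold gradNorm
  rw [← rpow_sim hT (by positivity)]
  have := mul_le_mul_of_nonneg_left (P.dw_le (‖x‖ ^ 2 / (-t)) (by positivity)) hp.le
  have := mul_le_mul_of_nonneg_right this (norm_nonneg x)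
  dsimp only
  linarith

lemma gradNorm_nonneg {p : EuclideanSpace ℝ (Fin n) × ℝ} (ht : p.2 < 0) :
    0 ≤ gradNorm μ dw p := by
  unfold gradNorm
  have := Real.rpow_pos_of_pos (neg_pos.2 ht) (-(μ / 2) - 1)
  positivity

end construction

/-! ### Energy bounds and blow-up -/

section estimates
open scoped Pointwise

variable {n : ℕ} {μ lam Lam C : ℝ} {w dw B dB a : ℝ → ℂ}

lemma IsProfile.dw_continuous (P : IsProfile n μ lam Lam C w dw B dB a) : Continuous dw := by
  have : dw = deriv w := funext fun y => (P.w_deriv y).deriv.symm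
  rw [this]
  exact P.w_smooth.continuous_deriv (by simp)

lemma IsProfile.C_nonneg (P : IsProfile n μ lam Lam C w dw B dB a) : 0 ≤ C := by
  have := (norm_nonneg _).trans (P.w_le 0 le_rfl)
  simpa using this

lemma ae_ne_zero (hn : 2 ≤ n) : ∀ᵐ x : EuclideanSpace ℝ (Fin n), x ≠ 0 := by
  have : Nonempty (Fin n) := ⟨⟨0, by omega⟩⟩
  exact Measure.ae_ne volume 0

lemma integrableOn_norm_rpow (hn : 2 ≤ n) {α : ℝ} (hα : α < n) :
    IntegrableOn (fun x : EuclideanSpace ℝ (Fin n) => ‖x‖ ^ (-α)) (Metric.ball 0 1) := by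
  refine integrableOn_ball_of_norm_le_rpow (C := 1) (α := α) ?_ ?_ ?_ ?_
  · simp; omega
  · simpa using hα
  · refine Eventually.of_forall fun x => ?_
    rw [one_mul, Real.norm_of_nonneg (by positivity)]
  · exact (measurable_norm.pow_const _).aestronglyMeasurable

/-- The bound `|u| ≤ C |x| ^ (-μ)`, uniform in time; it is in `L²(B₁)` since `2 μ < n`. -/
lemma uSol_sq_le (P : IsProfile n μ lam Lam C w dw B dB a) (hμ : 0 < μ)
    {x : EuclideanSpace ℝ (Fin n)} (hx : x ≠ 0) {t : ℝ} (ht : t < 0) :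
    ‖uSol μ w x t‖ ^ 2 ≤ C ^ 2 * ‖x‖ ^ (-(2 * μ)) := by
  have hx' : 0 < ‖x‖ := norm_pos_iff.2 hx
  have hC := P.C_nonneg
  have h1 : (-t + ‖x‖ ^ 2) ^ (-(μ / 2)) ≤ ‖x‖ ^ (-μ) := by
    calc _ ≤ (‖x‖ ^ 2) ^ (-(μ / 2)) :=
          Real.rpow_le_rpow_of_nonpos (by positivity) (by linarith) (by linarith)
      _ = _ := by
          rw [← Real.rpow_natCast, ← Real.rpow_mul hx'.le]
          congr 1
          push_cast
          ring
  have h2 : ‖uSol μ w x t‖ ≤ C * ‖x‖ ^ (-μ) :=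
    (uSol_norm_le P x ht).trans (by gcongr)
  calc _ ≤ (C * ‖x‖ ^ (-μ)) ^ 2 := by gcongr
    _ = C ^ 2 * ‖x‖ ^ (-(2 * μ)) := by
        rw [mul_pow, ← Real.rpow_mul_natCast hx'.le]
        congr 2
        push_cast
        ring

lemma uSol_continuous (hw : Continuous w) {t : ℝ} :
    Continuous (fun x : EuclideanSpace ℝ (Fin n) => uSol μ w x t) := by
  unfold uSol
  fun_prop

lemma integrableOn_uSol_sq (P : IsProfile n μ lam Lam C w dw B dB a) {t : ℝ} :
    IntegrableOn (fun x => ‖uSol μ w x t‖ ^ 2)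
      (Metric.ball (0 : EuclideanSpace ℝ (Fin n)) 1) :=
  ((((uSol_continuous P.w_smooth.continuous).norm.pow 2).continuousOn).integrableOn_compact
    (isCompact_closedBall 0 1)).mono_set Metric.ball_subset_closedBall

lemma integral_uSol_sq_le (hn : 2 ≤ n) (P : IsProfile n μ lam Lam C w dw B dB a) (hμ : 0 < μ)
    (hμn : 2 * μ < n) {t : ℝ} (ht : t < 0) :
    (∫ x in Metric.ball (0 : EuclideanSpace ℝ (Fin n)) 1, ‖uSol μ w x t‖ ^ 2)
      ≤ ∫ x in Metric.ball (0 : EuclideanSpace ℝ (Fin n)) 1, C ^ 2 * ‖x‖ ^ (-(2 * μ)) := by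
  refine setIntegral_mono_ae (integrableOn_uSol_sq P)
    ((integrableOn_norm_rpow hn hμn).const_mul _) ?_
  filter_upwards [ae_ne_zero hn] with x hx
  exact uSol_sq_le P hμ hx ht

/-- Splitting the decay `(-t + |x|²) ^ (-(μ + 2))` of `|∇u|² / |x|²` between time and space. -/
lemma gradNorm_sq_le (P : IsProfile n μ lam Lam C w dw B dB a) {α β : ℝ} (hα : 0 ≤ α)
    (hβ : 0 ≤ β) (hαβ : α + β = μ + 2) {x : EuclideanSpace ℝ (Fin n)} (hx : x ≠ 0) {t : ℝ}
    (ht : t < 0) :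
    gradNorm μ dw (x, t) ^ 2 ≤ 4 * C ^ 2 * (‖x‖ ^ (-(2 * β - 2)) * (-t) ^ (-α)) := by
  have hx' : 0 < ‖x‖ := norm_pos_iff.2 hx
  have hC := P.C_nonneg
  have hT : 0 < -t := by linarith
  have hs : 0 < -t + ‖x‖ ^ 2 := by positivity
  have h1 : (-t + ‖x‖ ^ 2) ^ (-α) ≤ (-t) ^ (-α) :=
    Real.rpow_le_rpow_of_nonpos hT (by nlinarith) (by linarith)
  have h2 : (-t + ‖x‖ ^ 2) ^ (-β) ≤ ‖x‖ ^ (-(2 * β)) := by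
    calc _ ≤ (‖x‖ ^ 2) ^ (-β) :=
          Real.rpow_le_rpow_of_nonpos (by positivity) (by linarith) (by linarith)
      _ = _ := by
          rw [← Real.rpow_natCast, ← Real.rpow_mul hx'.le]
          congr 1
          push_cast
          ring
  calc _ ≤ (2 * C * (-t + ‖x‖ ^ 2) ^ (-(μ / 2) - 1) * ‖x‖) ^ 2 :=
        pow_le_pow_left₀ (gradNorm_nonneg (by simpa using ht)) (gradNorm_le P x ht) 2
    _ = 4 * C ^ 2 * ‖x‖ ^ 2 * ((-t + ‖x‖ ^ 2) ^ (-α) * (-t + ‖x‖ ^ 2) ^ (-β)) := by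
        rw [← Real.rpow_add hs, show -α + -β = (-(μ / 2) - 1) * (2 : ℕ) by push_cast; linarith,
          Real.rpow_mul_natCast hs.le]
        ring
    _ ≤ 4 * C ^ 2 * ‖x‖ ^ 2 * ((-t) ^ (-α) * ‖x‖ ^ (-(2 * β))) := by gcongr
    _ = _ := by
        rw [show -(2 * β - 2) = -(2 * β) + (2 : ℕ) by push_cast; ring, Real.rpow_add hx',
          Real.rpow_natCast]
        ring

lemma integrableOn_gradNorm_sq (hn : 2 ≤ n) {ε : ℝ} (hε : 0 < ε) (hε1 : ε ≤ 1 / 8)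
    (hμ : μ = n / 2 - ε) (P : IsProfile n μ lam Lam C w dw B dB a) :
    IntegrableOn (fun p : EuclideanSpace ℝ (Fin n) × ℝ => gradNorm μ dw p ^ 2)
      (Metric.ball (0 : EuclideanSpace ℝ (Fin n)) 1 ×ˢ Set.Ioo (-1 : ℝ) 0) := by
  have hn' : (2 : ℝ) ≤ n := by exact_mod_cast hn
  have hmeas : MeasurableSet
      (Metric.ball (0 : EuclideanSpace ℝ (Fin n)) 1 ×ˢ Set.Ioo (-1 : ℝ) 0) :=
    Metric.isOpen_ball.measurableSet.prod measurableSet_Ioo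
  -- The exponents `1 - ε / 2 < 1` in time and `n - ε < n` in space are both integrable.
  have hx := integrableOn_norm_rpow hn (show 2 * (μ + 1 + ε / 2) - 2 < n by rw [hμ]; linarith)
  have ht : IntegrableOn (fun t : ℝ => (-t) ^ (-(1 - ε / 2))) (Set.Ioo (-1 : ℝ) 0) := by
    have := ((intervalIntegral.integrableOn_Ioo_rpow_iff (s := -(1 - ε / 2)) one_pos).2
      (by linarith)).comp_neg
    simpa using this
  have hprod : IntegrableOn (fun p : EuclideanSpace ℝ (Fin n) × ℝ =>
      4 * C ^ 2 * (‖p.1‖ ^ (-(2 * (μ + 1 + ε / 2) - 2)) * (-p.2) ^ (-(1 - ε / 2))))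
      (Metric.ball (0 : EuclideanSpace ℝ (Fin n)) 1 ×ˢ Set.Ioo (-1 : ℝ) 0) := by
    unfold IntegrableOn
    rw [Measure.volume_eq_prod, ← Measure.prod_restrict]
    exact (hx.mul_prod ht).const_mul _
  refine Integrable.mono' hprod ?_ ?_
  · refine ContinuousOn.aestronglyMeasurable (fun p hp => ?_) hmeas
    exact ((gradNorm_continuousAt P.dw_continuous hp.2.2).pow 2).continuousWithinAt
  · have h0 : ∀ᵐ p : EuclideanSpace ℝ (Fin n) × ℝ, p.1 ≠ 0 := by
      rw [Measure.volume_eq_prod]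
      exact Measure.quasiMeasurePreserving_fst.ae (ae_ne_zero hn)
    filter_upwards [ae_restrict_of_ae h0, ae_restrict_mem hmeas] with p hp hpm
    rw [Real.norm_of_nonneg (sq_nonneg _)]
    exact gradNorm_sq_le P (by linarith) (by linarith) (by ring) hp hpm.2.2

lemma tendsto_of_rpow_le {F : ℝ → ℝ} {K s : ℝ} (hK : 0 < K) (hs : 0 < s)
    (h : ∀ᶠ t in nhdsWithin (0 : ℝ) (Set.Iio 0), K * (-t) ^ (-s) ≤ F t) :
    Tendsto F (nhdsWithin 0 (Set.Iio 0)) atTop := by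
  have h1 : Tendsto (fun t : ℝ => -t) (nhdsWithin 0 (Set.Iio 0)) (nhdsWithin 0 (Set.Ioi 0)) := by
    refine tendsto_nhdsWithin_iff.2 ⟨?_, ?_⟩
    · have : Tendsto (fun t : ℝ => -t) (nhds 0) (nhds (-0)) := continuous_neg.tendsto 0
      rw [neg_zero] at this
      exact this.mono_left nhdsWithin_le_nhds
    · filter_upwards [self_mem_nhdsWithin] with t ht
      simpa using ht
  exact tendsto_atTop_mono' _ h
    (((tendsto_rpow_neg_nhdsGT_zero (neg_lt_zero.2 hs)).comp h1).const_mul_atTop hK)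

/-- The self-similar shell `{x | p < |x|² / T < q}`. -/
def shell (n : ℕ) (p q T : ℝ) : Set (EuclideanSpace ℝ (Fin n)) :=
  {x | ‖x‖ ^ 2 / T ∈ Set.Ioo p q}

lemma shell_isOpen (p q T : ℝ) : IsOpen (shell n p q T) :=
  isOpen_Ioo.preimage (by fun_prop)

lemma shell_subset {p q T R : ℝ} (hT : 0 < T) (hR : 0 ≤ R) (h : q * T ≤ R ^ 2) :
    shell n p q T ⊆ Metric.ball 0 R := by
  intro x hx
  have h1 := hx.2
  rw [div_lt_iff₀ hT] at h1
  rw [mem_ball_zero_iff]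
  exact lt_of_pow_lt_pow_left₀ 2 hR (h1.trans_le h)

lemma shell_ne_top {p q T : ℝ} (hT : 0 < T) : volume (shell n p q T) ≠ ⊤ := by
  refine ne_top_of_le_ne_top ?_
    (measure_mono (shell_subset (R := 1 + |q * T|) hT (by positivity) ?_))
  · exact Metric.isBounded_ball.measure_lt_top.ne
  · nlinarith [le_abs_self (q * T), abs_nonneg (q * T)]

lemma shell_volume (hn : 2 ≤ n) {p q : ℝ} (hp : 0 ≤ p) (hpq : p < q) :
    ∃ V, 0 < V ∧ ∀ T, 0 < T → volume.real (shell n p q T) = T ^ ((n : ℝ) / 2) * V := by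
  refine ⟨volume.real (shell n p q 1), ?_, fun T hT => ?_⟩
  · refine ENNReal.toReal_pos ?_ (shell_ne_top one_pos)
    refine ((shell_isOpen p q 1).measure_pos volume ?_).ne'
    obtain ⟨z, hz⟩ : ∃ z, z = (p + q) / 2 := ⟨_, rfl⟩
    refine ⟨EuclideanSpace.single ⟨0, by omega⟩ (Real.sqrt z), ?_⟩
    constructor <;> simp [Real.sq_sqrt (show 0 ≤ z by linarith)] <;> linarith
  · have hs : 0 < Real.sqrt T := Real.sqrt_pos.2 hT
    have h1 : shell n p q T = Real.sqrt T • shell n p q 1 := by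
      ext x
      rw [Set.mem_smul_set_iff_inv_smul_mem₀ hs.ne']
      simp only [shell, Set.mem_ofPred_eq, norm_smul, norm_inv, Real.norm_of_nonneg hs.le, mul_pow,
        inv_pow, Real.sq_sqrt hT.le, div_eq_inv_mul, inv_one, one_mul]
    rw [h1, measureReal_def, Measure.addHaar_smul, ENNReal.toReal_mul, ← measureReal_def,
      ENNReal.toReal_ofReal (abs_nonneg _), abs_of_pos (by positivity)]
    congr 1
    rw [finrank_euclideanSpace_fin, Real.sqrt_eq_rpow, ← Real.rpow_mul_natCast hT.le]
    congr 1
    ring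

/-- On the region `|x|² < r (-t)` one has `|u| ≥ c (-t) ^ (-μ / 2)`, and this region has volume
comparable to `(-t) ^ (n / 2)`. -/
lemma tendsto_integral_uSol (hn : 2 ≤ n) {δ : ℝ} (hδ : 0 < δ) (hμ : n < μ * (2 + δ))
    (hw : Continuous w) (hw0 : w 0 ≠ 0) :
    Tendsto (fun t => ∫ x in Metric.ball (0 : EuclideanSpace ℝ (Fin n)) 1,
      ‖uSol μ w x t‖ ^ ((2 : ℝ) + δ)) (nhdsWithin 0 (Set.Iio 0)) atTop := by
  obtain ⟨r, hr, hrw⟩ : ∃ r > 0, ∀ y, |y| < r → ‖w 0‖ / 2 < ‖w y‖ := by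
    have h := hw.norm.continuousAt.eventually (lt_mem_nhds (half_lt_self (norm_pos_iff.2 hw0)))
    obtain ⟨r, hr, h⟩ := Metric.eventually_nhds_iff.1 h
    exact ⟨r, hr, fun y hy => h (by simpa using hy)⟩
  have hc : 0 < ‖w 0‖ / 2 := half_pos (norm_pos_iff.2 hw0)
  set c := ‖w 0‖ / 2
  obtain ⟨V, hV, hvol⟩ := shell_volume hn (le_refl 0) (lt_min hr one_pos)
  refine tendsto_of_rpow_le (K := c ^ (2 + δ) * V) (s := μ * (2 + δ) / 2 - n / 2) (by positivity)
    (by linarith) ?_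
  filter_upwards [Ioo_mem_nhdsLT (show (-1 : ℝ) < 0 by norm_num)] with t ht
  have hT : 0 < -t := by linarith [ht.2]
  have hcont : Continuous fun x : EuclideanSpace ℝ (Fin n) => ‖uSol μ w x t‖ ^ ((2 : ℝ) + δ) :=
    (uSol_continuous hw).norm.rpow_const fun _ => Or.inr (by linarith)
  have hint : IntegrableOn (fun x : EuclideanSpace ℝ (Fin n) => ‖uSol μ w x t‖ ^ ((2 : ℝ) + δ))
      (Metric.ball 0 1) :=
    (hcont.continuousOn.integrableOn_compact (isCompact_closedBall 0 1)).mono_set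
      Metric.ball_subset_closedBall
  have hsub : shell n 0 (min r 1) (-t) ⊆ Metric.ball 0 1 := by
    refine shell_subset hT zero_le_one ?_
    have : min r 1 ≤ 1 := min_le_right _ _
    nlinarith [ht.1]
  have hlow : ∀ x ∈ shell n 0 (min r 1) (-t),
      (c * (-t) ^ (-(μ / 2))) ^ (2 + δ) ≤ ‖uSol μ w x t‖ ^ ((2 : ℝ) + δ) := by
    intro x hx
    have hp := Real.rpow_pos_of_pos hT (-(μ / 2))
    have h1 := hrw (‖x‖ ^ 2 / (-t)) (by
      rw [abs_of_pos hx.1]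
      exact hx.2.trans_le (min_le_left _ _))
    have h2 : c * (-t) ^ (-(μ / 2)) ≤ ‖uSol μ w x t‖ := by
      unfold uSol
      rw [norm_mul, Complex.norm_real, Real.norm_of_nonneg hp.le, mul_comm]
      gcongr
    gcongr
  calc c ^ (2 + δ) * V * (-t) ^ (-(μ * (2 + δ) / 2 - n / 2))
      = (c * (-t) ^ (-(μ / 2))) ^ (2 + δ) * volume.real (shell n 0 (min r 1) (-t)) := by
        rw [hvol _ hT, Real.mul_rpow hc.le (by positivity), ← Real.rpow_mul hT.le,
          show -(μ * (2 + δ) / 2 - n / 2) = -(μ / 2) * (2 + δ) + n / 2 by ring,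
          Real.rpow_add hT]
        ring
    _ ≤ ∫ x in shell n 0 (min r 1) (-t), ‖uSol μ w x t‖ ^ ((2 : ℝ) + δ) :=
        setIntegral_ge_of_const_le_real (shell_isOpen _ _ _).measurableSet (shell_ne_top hT) hlow
          (hint.mono_set hsub)
    _ ≤ _ := setIntegral_mono_set hint (Eventually.of_forall fun x => by positivity)
        hsub.eventuallyLE

/-- On the space-time region `-t < |x|² < (1 + ρ) (-t)`, `-t < -s < (1 + ρ) (-t)`, of measure
comparable to `(-t) ^ (n / 2 + 1)`, the variable `|x|² / (-s)` stays within `ρ` of `1`, so that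
`|∇u| ≥ c (-t) ^ (-(μ + 1) / 2)`. -/
lemma tendsto_integral_gradNorm (hn : 2 ≤ n) {δ : ℝ} (hδ : 0 < δ) (hμ : n < μ * (2 + δ))
    (hμ0 : 0 < μ) (hdw : Continuous dw) (hdw1 : dw 1 ≠ 0) :
    Tendsto (fun t => ∫ p in Metric.ball (0 : EuclideanSpace ℝ (Fin n)) 1 ×ˢ Set.Ioo (-1 : ℝ) t,
      (gradNorm μ dw p ^ 2) ^ (((2 : ℝ) + δ) / 2)) (nhdsWithin 0 (Set.Iio 0)) atTop := by
  obtain ⟨ρ, hρ, hρ1, hρw⟩ : ∃ ρ > 0, ρ ≤ 1 ∧ ∀ y, |y - 1| < ρ → ‖dw 1‖ / 2 < ‖dw y‖ := by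
    have h := hdw.norm.continuousAt.eventually (lt_mem_nhds (half_lt_self (norm_pos_iff.2 hdw1)))
    obtain ⟨r, hr, h⟩ := Metric.eventually_nhds_iff.1 h
    exact ⟨min r 1, lt_min hr one_pos, min_le_right _ _,
      fun y hy => h (by rw [Real.dist_eq]; exact hy.trans_le (min_le_left _ _))⟩
  have hc : 0 < ‖dw 1‖ / 2 := half_pos (norm_pos_iff.2 hdw1)
  set c := ‖dw 1‖ / 2
  obtain ⟨V, hV, hvol⟩ := shell_volume hn zero_le_one (show (1 : ℝ) < 1 + ρ by linarith)
  set c' := 2 * c * 2 ^ (-(μ / 2) - 1)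
  have hc' : 0 < c' := by positivity
  refine tendsto_of_rpow_le (K := c' ^ (2 + δ) * V * ρ)
    (s := (μ + 1) / 2 * (2 + δ) - n / 2 - 1) (by positivity) (by linarith) ?_
  filter_upwards [Ioo_mem_nhdsLT (show (-1 / 2 : ℝ) < 0 by norm_num)] with t ht
  have hT : 0 < -t := by linarith [ht.2]
  have hT2 : -t < 1 / 2 := by linarith [ht.1]
  have hint : IntegrableOn (fun p : EuclideanSpace ℝ (Fin n) × ℝ =>
      (gradNorm μ dw p ^ 2) ^ (((2 : ℝ) + δ) / 2)) (Metric.ball 0 1 ×ˢ Set.Ioo (-1 : ℝ) t) := by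
    refine IntegrableOn.mono_set (ContinuousOn.integrableOn_compact
      ((isCompact_closedBall (0 : EuclideanSpace ℝ (Fin n)) 1).prod
        (isCompact_Icc (a := (-1 : ℝ)) (b := t))) fun p hp => ?_)
      (Set.prod_mono Metric.ball_subset_closedBall Set.Ioo_subset_Icc_self)
    exact (((gradNorm_continuousAt hdw (hp.2.2.trans_lt ht.2)).pow 2).rpow_const
      (Or.inr (by linarith))).continuousWithinAt
  set S := shell n 1 (1 + ρ) (-t) ×ˢ Set.Ioo ((1 + ρ) * t) t with hS
  have hSm : MeasurableSet S := (shell_isOpen _ _ _).measurableSet.prod measurableSet_Ioo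
  have hsub : S ⊆ Metric.ball 0 1 ×ˢ Set.Ioo (-1 : ℝ) t := by
    refine Set.prod_mono (shell_subset hT zero_le_one (by nlinarith)) ?_
    exact Set.Ioo_subset_Ioo_left (by nlinarith)
  have hSvol : volume.real S = (-t) ^ ((n : ℝ) / 2) * V * (ρ * (-t)) := by
    rw [hS, Measure.volume_eq_prod, measureReal_prod_prod, hvol _ hT, Real.volume_real_Ioo_of_le
      (by nlinarith)]
    ring
  have hSfin : volume S ≠ ⊤ := by
    rw [hS, Measure.volume_eq_prod, Measure.prod_prod]
    exact ENNReal.mul_ne_top (shell_ne_top hT) (by simp)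
  have hlow : ∀ p ∈ S, (c' * (-t) ^ (-((μ + 1) / 2))) ^ (2 + δ)
      ≤ (gradNorm μ dw p ^ 2) ^ (((2 : ℝ) + δ) / 2) := by
    rintro ⟨x, s⟩ ⟨⟨hx1, hx2⟩, hs1, hs2⟩
    dsimp only at hx1 hx2 hs1 hs2
    rw [lt_div_iff₀ hT, one_mul] at hx1
    rw [div_lt_iff₀ hT] at hx2
    have hs : 0 < -s := by linarith
    have h1 := hρw (‖x‖ ^ 2 / (-s)) (by
      rw [abs_lt, lt_sub_iff_add_lt, sub_lt_iff_lt_add, lt_div_iff₀ hs, div_lt_iff₀ hs]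
      constructor <;> nlinarith)
    have h2 : Real.sqrt (-t) ≤ ‖x‖ := Real.sqrt_le_iff.2 ⟨norm_nonneg _, hx1.le⟩
    have h3 : (2 * (-t)) ^ (-(μ / 2) - 1) ≤ (-s) ^ (-(μ / 2) - 1) :=
      Real.rpow_le_rpow_of_nonpos hs (by nlinarith) (by linarith)
    have h4 : c' * (-t) ^ (-((μ + 1) / 2)) ≤ gradNorm μ dw (x, s) := by
      calc _ = (2 * (-t)) ^ (-(μ / 2) - 1) * c * 2 * Real.sqrt (-t) := by
            rw [Real.mul_rpow zero_le_two hT.le, Real.sqrt_eq_rpow,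
              show -((μ + 1) / 2) = (-(μ / 2) - 1) + 1 / 2 by ring, Real.rpow_add hT]
            ring
        _ ≤ _ := by
            unfold gradNorm
            gcongr
    have h5 : (gradNorm μ dw (x, s) ^ 2) ^ (((2 : ℝ) + δ) / 2)
        = gradNorm μ dw (x, s) ^ (2 + δ) := by
      rw [← Real.rpow_natCast, ← Real.rpow_mul (gradNorm_nonneg (neg_pos.1 hs))]
      congr 1
      push_cast
      ring
    rw [h5]
    gcongr
  calc c' ^ (2 + δ) * V * ρ * (-t) ^ (-((μ + 1) / 2 * (2 + δ) - n / 2 - 1))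
      = (c' * (-t) ^ (-((μ + 1) / 2))) ^ (2 + δ) * volume.real S := by
        rw [hSvol, Real.mul_rpow hc'.le (by positivity), ← Real.rpow_mul hT.le,
          show -((μ + 1) / 2 * (2 + δ) - n / 2 - 1) = -((μ + 1) / 2) * (2 + δ) + n / 2 + 1 by ring,
          Real.rpow_add hT, Real.rpow_add hT, Real.rpow_one]
        ring
    _ ≤ ∫ p in S, (gradNorm μ dw p ^ 2) ^ (((2 : ℝ) + δ) / 2) :=
        setIntegral_ge_of_const_le_real hSm hSfin hlow (hint.mono_set hsub)
    _ ≤ _ := setIntegral_mono_set hint (Eventually.of_forall fun x => by positivity)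
        hsub.eventuallyLE

lemma exists_uSol_ne (hn : 2 ≤ n) (hw : Continuous w) (hw0 : w 0 ≠ 0) :
    ∃ x : EuclideanSpace ℝ (Fin n), ∃ t ∈ Set.Ioo (-1 : ℝ) 0, x ≠ 0 ∧ uSol μ w x t ≠ 0 := by
  have : Nonempty (Fin n) := ⟨⟨0, by omega⟩⟩
  have h0 : uSol μ w (0 : EuclideanSpace ℝ (Fin n)) (-1 / 2) ≠ 0 := by
    have : 0 < (-(-1 / 2 : ℝ)) ^ (-(μ / 2)) := Real.rpow_pos_of_pos (by norm_num) _
    unfold uSol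
    refine mul_ne_zero (by exact_mod_cast this.ne') (by simpa using hw0)
  have h1 : ∀ᶠ x in nhdsWithin (0 : EuclideanSpace ℝ (Fin n)) {0}ᶜ, uSol μ w x (-1 / 2) ≠ 0 :=
    ((uSol_continuous hw).continuousAt.eventually_ne h0).filter_mono nhdsWithin_le_nhds
  obtain ⟨x, hx, hx0⟩ := (h1.and self_mem_nhdsWithin).exists
  exact ⟨x, -1 / 2, by norm_num, hx0, hx⟩

end estimates

/-- Corollary 1.2 of the paper: optimality of parabolic energy estimates:
for every `n ≥ 2` and `δ > 0` there is a uniformly parabolic equation with a solution `u`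
on `ℝⁿ × (-1,0)` that lies in the natural energy class `L^∞_t(L²_x) ∩ L²_t(H¹_x)` on
`B₁ × (-1,0)`, but whose `L^{2+δ}` norms of `u` (in x, at time t) and of `∇u`
(in space-time up to time t) blow up as `t → 0⁻`. -/
theorem stmt_14 (n : ℕ) (hn : 2 ≤ n) (δ : ℝ) (hδ : 0 < δ) :
    ∃ (lam Lam : ℝ) (A : EuclideanSpace ℝ (Fin n) → ℝ → Matrix (Fin n) (Fin n) ℂ)
      (u : EuclideanSpace ℝ (Fin n) → ℝ → ℂ),
      0 < lam ∧ 0 < Lam ∧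
      -- A is smooth on (ℝⁿ \ {0}) × (-1,0)
      (∀ k l : Fin n, ContDiffOn ℝ (⊤ : ℕ∞) (fun p : EuclideanSpace ℝ (Fin n) × ℝ => A p.1 p.2 k l)
        ({x : EuclideanSpace ℝ (Fin n) | x ≠ 0} ×ˢ Set.Ioo (-1 : ℝ) 0)) ∧
      -- uniform ellipticity at every point of ℝⁿ × (-1,0)
      (∀ x : EuclideanSpace ℝ (Fin n), ∀ t ∈ Set.Ioo (-1 : ℝ) 0, ∀ p : Fin n → ℂ,
        lam * ∑ k, ‖p k‖ ^ 2 ≤ (∑ k, ∑ l, A x t k l * p k * (starRingEnd ℂ) (p l)).re ∧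
        ∑ k, ‖(A x t).mulVec p k‖ ^ 2 ≤ Lam ^ 2 * ∑ k, ‖p k‖ ^ 2) ∧
      -- u is continuous on ℝⁿ × (-1,0), smooth and nontrivial away from x = 0
      ContinuousOn (fun p : EuclideanSpace ℝ (Fin n) × ℝ => u p.1 p.2)
        (Set.univ ×ˢ Set.Ioo (-1 : ℝ) 0) ∧
      ContDiffOn ℝ (⊤ : ℕ∞) (fun p : EuclideanSpace ℝ (Fin n) × ℝ => u p.1 p.2)
        ({x : EuclideanSpace ℝ (Fin n) | x ≠ 0} ×ˢ Set.Ioo (-1 : ℝ) 0) ∧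
      (∃ x : EuclideanSpace ℝ (Fin n), ∃ t ∈ Set.Ioo (-1 : ℝ) 0, x ≠ 0 ∧ u x t ≠ 0) ∧
      -- (i) u solves the parabolic equation away from x = 0
      (∀ x : EuclideanSpace ℝ (Fin n), x ≠ 0 → ∀ t ∈ Set.Ioo (-1 : ℝ) 0,
        deriv (fun s => u x s) t = divAgrad (fun y => A y t) (fun y => u y t) x) ∧
      -- (ii) u is in the parabolic energy class on B₁ × (-1,0)
      (∀ t ∈ Set.Ioo (-1 : ℝ) 0,
        IntegrableOn (fun x => ‖u x t‖ ^ 2) (Metric.ball (0 : EuclideanSpace ℝ (Fin n)) 1)) ∧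
      (∃ M : ℝ, ∀ t ∈ Set.Ioo (-1 : ℝ) 0,
        (∫ x in Metric.ball (0 : EuclideanSpace ℝ (Fin n)) 1, ‖u x t‖ ^ 2) ≤ M) ∧
      IntegrableOn (fun p : EuclideanSpace ℝ (Fin n) × ℝ => ∑ k, ‖pdC (fun y => u y p.2) p.1 k‖ ^ 2)
        (Metric.ball (0 : EuclideanSpace ℝ (Fin n)) 1 ×ˢ Set.Ioo (-1 : ℝ) 0) ∧
      -- (iii) blowup of the L^{2+δ} norm of u in x as t → 0⁻
      Tendsto (fun t => ∫ x in Metric.ball (0 : EuclideanSpace ℝ (Fin n)) 1,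
          ‖u x t‖ ^ ((2 : ℝ) + δ))
        (nhdsWithin 0 (Set.Iio 0)) atTop ∧
      -- (iv) blowup of the space-time L^{2+δ} norm of ∇u as t → 0⁻
      Tendsto (fun t => ∫ p in
            Metric.ball (0 : EuclideanSpace ℝ (Fin n)) 1 ×ˢ Set.Ioo (-1 : ℝ) t,
          (∑ k, ‖pdC (fun y => u y p.2) p.1 k‖ ^ 2) ^ (((2 : ℝ) + δ) / 2))
        (nhdsWithin 0 (Set.Iio 0)) atTop := by
  have hn' : (2 : ℝ) ≤ n := by exact_mod_cast hn
  have h2δ : 0 < 2 + δ := by linarith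
  -- With this `ε`, the exponent `μ = n / 2 - ε` satisfies both `2 μ < n` and `n < μ (2 + δ)`.
  obtain ⟨ε, hεδ⟩ : ∃ ε, ε * (8 * (2 + δ)) = δ := ⟨δ / (8 * (2 + δ)), by field_simp⟩
  have hε : 0 < ε := by by_contra h; nlinarith
  have hε1 : ε ≤ 1 / 8 := by by_contra h; nlinarith
  obtain ⟨lam, Lam, C, w, dw, B, dB, a, hlam, hLam, P⟩ := exists_profile_s14 hn' hε hε1
  obtain ⟨μ, hμ⟩ : ∃ μ : ℝ, μ = n / 2 - ε := ⟨_, rfl⟩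
  rw [← hμ] at P
  have hμ0 : 0 < μ := by linarith
  have hμδ : (n : ℝ) < μ * (2 + δ) := by rw [hμ]; nlinarith
  have hw := P.w_smooth.continuous
  have hpos : ∀ (x : EuclideanSpace ℝ (Fin n)) {t : ℝ}, t ∈ Set.Ioo (-1 : ℝ) 0 →
      0 ≤ ‖x‖ ^ 2 / (-t) := fun x t ht => div_nonneg (sq_nonneg _) (by linarith [ht.2])
  refine ⟨lam, Lam, fun x t => a (‖x‖ ^ 2 / (-t)) • (1 : Matrix (Fin n) (Fin n) ℂ), uSol μ w,
    hlam, hLam, ?_, ?_, ?_, ?_, exists_uSol_ne hn hw P.w_ne, ?_, ?_, ?_, ?_,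
    tendsto_integral_uSol hn hδ hμδ hw P.w_ne, ?_⟩
  · intro k l p hp
    simp only [Matrix.smul_apply, smul_eq_mul]
    exact ((contDiffAt_sim hp.2.2 (P.a_smooth _ (hpos p.1 hp.2))).mul
      contDiffAt_const).contDiffWithinAt
  · intro x t ht p
    exact ellipticity (P.lower _ (hpos x ht)) (P.upper _ (hpos x ht)) p
  · exact fun p hp => (uSol_contDiffAt P.w_smooth hp.2.2).continuousAt.continuousWithinAt
  · exact fun p hp => (uSol_contDiffAt P.w_smooth hp.2.2).contDiffWithinAt
  · exact fun x _ t ht => pde P x ht.2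
  · exact fun t _ => integrableOn_uSol_sq P
  · exact ⟨_, fun t ht => integral_uSol_sq_le hn P hμ0 (by linarith) ht.2⟩
  · refine (integrableOn_gradNorm_sq hn hε hε1 hμ P).congr_fun ?_
      (Metric.isOpen_ball.measurableSet.prod measurableSet_Ioo)
    exact fun p hp => (gradSq_eq P.w_deriv hp.2.2).symm
  · refine (tendsto_integral_gradNorm hn hδ hμδ hμ0 P.dw_continuous P.dw_ne).congr' ?_
    filter_upwards [self_mem_nhdsWithin] with t ht
    refine setIntegral_congr_fun (Metric.isOpen_ball.measurableSet.prod measurableSet_Ioo)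
      fun p hp => ?_
    rw [gradSq_eq P.w_deriv (hp.2.2.trans ht)]
end
end

section
/- Let n ≥ 1, μ ∈ ℝ, λ, Λ > 0. Let A be a C¹ matrix-valued map on ℝⁿ satisfying the uniform ellipticity condition with constants λ, Λ, and let w : ℝⁿ → ℂ be C² and satisfy the self-similar profile equation div(A∇w)(x) = (1/2)(i·w(x) + μ·w(x) + x·∇w(x)) for all x ∈ ℝⁿ. Then there exists a constant C > 0 depending only on λ and Λ such that for every real-valued compactly supported smooth function ψ on ℝⁿ: ∫_{ℝⁿ} (−λ|∇w|²ψ² + C|w|²|∇ψ|²) dx ≥ ((2μ−n)/2) ∫_{ℝⁿ} |w|²ψ² dx − (1/2) ∫_{ℝⁿ} |w|² x·∇(ψ²) dx. -/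
/-!
The equation is tested against `conj(w) ψ²` and twice the real part is taken. Writing
`F = A∇w`, the pointwise content is an identity for the divergence of the compactly supported
`C¹` real vector field `V = 2 Re(F conj(w)) ψ² - (1/2) x |w|² ψ²` (`fderiv_flux`). After the
equation is substituted for `div F`, the terms `Re(x·∇w conj(w)) ψ²` cancel and
`div V = ((2μ-n)/2)|w|²ψ² - (1/2)|w|² x·∇(ψ²) + 2 Re(F·conj(∇w))ψ² + 4 Re(F·∇ψ conj(w))ψ`.

Ellipticity bounds the third term below by `2λ|∇w|²ψ²`. Young's inequality with weight `λ/Λ²`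
(`young_term`) and `|F| ≤ Λ|∇w|` bound the last one below by
`-λ|∇w|²ψ² - (4Λ²/λ)|w|²|∇ψ|²`. This gives the claimed inequality between the integrands up to
`div V` (`pointwise_energy`), with `C = 4Λ²/λ`. Integrating removes `div V`
(`integral_fderiv_eq_zero`).
-/

open MeasureTheory
open scoped BigOperators

noncomputable section

/-- Uniform ellipticity with constants `lam, Lam` at every point of `ℝⁿ`. -/
def UniformlyElliptic {n : ℕ} (A : EuclideanSpace ℝ (Fin n) → Matrix (Fin n) (Fin n) ℂ)
    (lam Lam : ℝ) : Prop :=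
  ∀ x, ∀ p : Fin n → ℂ,
    lam * ∑ k, ‖p k‖ ^ 2 ≤ (∑ k, ∑ l, A x k l * p k * (starRingEnd ℂ) (p l)).re ∧
    ∑ k, ‖(A x).mulVec p k‖ ^ 2 ≤ Lam ^ 2 * ∑ k, ‖p k‖ ^ 2

/-- The divergence theorem without boundary term, in one direction `v`: integration by parts
against the constant function `1`. -/
theorem integral_fderiv_eq_zero {n : ℕ} (g : EuclideanSpace ℝ (Fin n) → ℝ)
    (hg : ContDiff ℝ 1 g) (hs : HasCompactSupport g) (v : EuclideanSpace ℝ (Fin n)) :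
    Integrable (fun x => fderiv ℝ g x v) ∧ ∫ x, fderiv ℝ g x v = 0 := by
  have hi : Integrable (fun x => fderiv ℝ g x v) :=
    ((hg.continuous_fderiv one_ne_zero).clm_apply continuous_const).integrable_of_hasCompactSupport
      (hs.fderiv_apply (𝕜 := ℝ) v)
  refine ⟨hi, ?_⟩
  have h := integral_mul_fderiv_eq_neg_fderiv_mul_of_integrable (𝕜 := ℝ) (μ := volume)
    (f := fun _ : EuclideanSpace ℝ (Fin n) => (1 : ℝ)) (g := g) (v := v)
    (by simp) (by simpa using hi)
    (by simpa using hg.continuous.integrable_of_hasCompactSupport hs)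
    (fun _ _ => by fun_prop) (fun x _ => hg.differentiable one_ne_zero x)
  simpa using h

/-- `∂ₖ` of the `k`-th component of the field `2 Re(F conj(w)) ψ² - (1/2) x |w|² ψ²`, where `F`
is a single (the `k`-th) component of the flux `A∇w`. The field is written in real and imaginary
parts, so that the product rule for real functions applies. -/
theorem fderiv_flux {n : ℕ} (F w : EuclideanSpace ℝ (Fin n) → ℂ)
    (ψ : EuclideanSpace ℝ (Fin n) → ℝ) (x : EuclideanSpace ℝ (Fin n)) (k : Fin n)
    (hF : DifferentiableAt ℝ F x) (hw : DifferentiableAt ℝ w x)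
    (hψ : DifferentiableAt ℝ ψ x) :
    fderiv ℝ (fun y => (2 * ((F y).re * (w y).re + (F y).im * (w y).im)
        - 1 / 2 * y k * ((w y).re * (w y).re + (w y).im * (w y).im)) * (ψ y * ψ y)) x
      (EuclideanSpace.single k 1) =
    2 * (fderiv ℝ F x (EuclideanSpace.single k 1) * (starRingEnd ℂ) (w x)).re * ψ x ^ 2
    + 2 * (F x * (starRingEnd ℂ) (pdC w x k)).re * ψ x ^ 2
    + 4 * (F x * (starRingEnd ℂ) (w x)).re * ψ x * fderiv ℝ ψ x (EuclideanSpace.single k 1)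
    - 1 / 2 * ‖w x‖ ^ 2 * ψ x ^ 2
    - (x k * pdC w x k * (starRingEnd ℂ) (w x)).re * ψ x ^ 2
    - x k * ‖w x‖ ^ 2 * ψ x * fderiv ℝ ψ x (EuclideanSpace.single k 1) := by
  have hFr := Complex.reCLM.hasFDerivAt.comp x hF.hasFDerivAt
  have hFi := Complex.imCLM.hasFDerivAt.comp x hF.hasFDerivAt
  have hwr := Complex.reCLM.hasFDerivAt.comp x hw.hasFDerivAt
  have hwi := Complex.imCLM.hasFDerivAt.comp x hw.hasFDerivAt
  have hx := (EuclideanSpace.proj k : EuclideanSpace ℝ (Fin n) →L[ℝ] ℝ).hasFDerivAt (x := x)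
  have hp := hψ.hasFDerivAt
  have H := ((((hFr.mul hwr).add (hFi.mul hwi)).const_mul 2).sub
    ((hx.const_mul (1/2)).mul ((hwr.mul hwr).add (hwi.mul hwi)))).mul (hp.mul hp)
  have H' := congrArg (fun L => L (EuclideanSpace.single k 1)) H.fderiv
  refine Eq.trans ?_ (H'.trans ?_)
  · rfl
  · have hn : ‖w x‖ ^ 2 = (w x).re * (w x).re + (w x).im * (w x).im := by
      rw [Complex.sq_norm, Complex.normSq_apply]
    simp [hn, pdC]
    ring

/-- Young's inequality for the cross term in one direction, weighted so that the first summand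
is absorbed by ellipticity after `|A p| ≤ Λ|p|`. -/
theorem young_term (a b : ℂ) (s d lam Lam : ℝ) (hlam : 0 < lam) (hLam : 0 < Lam) :
    -(4 * (a * (starRingEnd ℂ) b).re * s * d) ≤
      lam / Lam ^ 2 * ‖a‖ ^ 2 * s ^ 2 + 4 * Lam ^ 2 / lam * ‖b‖ ^ 2 * d ^ 2 := by
  have h1 : |(a * (starRingEnd ℂ) b).re| ≤ ‖a‖ * ‖b‖ := by
    simpa using Complex.abs_re_le_norm (a * (starRingEnd ℂ) b)
  have h2 : -(4 * (a * (starRingEnd ℂ) b).re * s * d) ≤ 4 * (‖a‖ * |s|) * (‖b‖ * |d|) := by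
    calc _ ≤ |-(4 * (a * (starRingEnd ℂ) b).re * s * d)| := le_abs_self _
      _ = 4 * |(a * (starRingEnd ℂ) b).re| * |s| * |d| := by
        simp [abs_mul]
      _ ≤ 4 * (‖a‖ * ‖b‖) * |s| * |d| := by gcongr
      _ = _ := by ring
  have h3 : lam / Lam ^ 2 * (‖a‖ * |s|) ^ 2 + 4 * Lam ^ 2 / lam * (‖b‖ * |d|) ^ 2
      - 4 * (‖a‖ * |s|) * (‖b‖ * |d|) =
      lam / Lam ^ 2 * (‖a‖ * |s| - 2 * Lam ^ 2 / lam * (‖b‖ * |d|)) ^ 2 := by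
    field_simp
    ring
  have h4 : 0 ≤ lam / Lam ^ 2 * (‖a‖ * |s| - 2 * Lam ^ 2 / lam * (‖b‖ * |d|)) ^ 2 := by positivity
  simp only [mul_pow, sq_abs] at h3
  linarith

/-- The energy inequality at one point. `P` stands for `∇w`, `D k` for `∂ₖ(A∇w)ₖ`, `s` for `ψ`
and `d` for `∇ψ`. The subtracted sum is the divergence computed in `fderiv_flux`. -/
theorem pointwise_energy {n : ℕ} (lam Lam μ s : ℝ) (hlam : 0 < lam) (hLam : 0 < Lam)
    (M : Matrix (Fin n) (Fin n) ℂ)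
    (hM : ∀ p : Fin n → ℂ,
      lam * ∑ k, ‖p k‖ ^ 2 ≤ (∑ k, ∑ l, M k l * p k * (starRingEnd ℂ) (p l)).re ∧
      ∑ k, ‖M.mulVec p k‖ ^ 2 ≤ Lam ^ 2 * ∑ k, ‖p k‖ ^ 2)
    (w : ℂ) (P D : Fin n → ℂ) (x d : Fin n → ℝ)
    (hD : ∑ k, D k = (1 / 2) * (Complex.I * w + (μ : ℂ) * w + ∑ k, (x k : ℂ) * P k)) :
    ((2 * μ - n) / 2) * (‖w‖ ^ 2 * s ^ 2) - (1 / 2) * (‖w‖ ^ 2 * ∑ k, x k * (2 * s * d k))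
      - ∑ k, (2 * (D k * (starRingEnd ℂ) w).re * s ^ 2
        + 2 * ((∑ l, M k l * P l) * (starRingEnd ℂ) (P k)).re * s ^ 2
        + 4 * ((∑ l, M k l * P l) * (starRingEnd ℂ) w).re * s * d k
        - 1 / 2 * ‖w‖ ^ 2 * s ^ 2
        - (x k * P k * (starRingEnd ℂ) w).re * s ^ 2
        - x k * ‖w‖ ^ 2 * s * d k) ≤
    -lam * (∑ k, ‖P k‖ ^ 2) * s ^ 2 + 4 * Lam ^ 2 / lam * ‖w‖ ^ 2 * ∑ k, d k ^ 2 := by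
  have e1 : lam * ∑ k, ‖P k‖ ^ 2 ≤ ∑ k, ((∑ l, M k l * P l) * (starRingEnd ℂ) (P k)).re := by
    -- the ellipticity form pairs `A p` with `conj p` transposed, hence `p = conj P`
    have h := (hM fun k => (starRingEnd ℂ) (P k)).1
    simp only [RCLike.norm_conj, RingHomCompTriple.comp_apply, RingHom.id_apply] at h
    refine h.trans_eq ?_
    rw [Complex.re_sum]
    refine Finset.sum_congr rfl fun k _ => ?_
    rw [Finset.sum_mul]
    congr 1
    refine Finset.sum_congr rfl fun l _ => by ring
  have e2 : ∑ k, ‖∑ l, M k l * P l‖ ^ 2 ≤ Lam ^ 2 * ∑ k, ‖P k‖ ^ 2 := (hM P).2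
  have e3 : ∑ k, -(4 * ((∑ l, M k l * P l) * (starRingEnd ℂ) w).re * s * d k) ≤
      lam / Lam ^ 2 * (∑ k, ‖∑ l, M k l * P l‖ ^ 2) * s ^ 2
        + 4 * Lam ^ 2 / lam * ‖w‖ ^ 2 * ∑ k, d k ^ 2 := by
    refine (Finset.sum_le_sum fun k _ => young_term _ w s (d k) lam Lam hlam hLam).trans_eq ?_
    rw [Finset.sum_add_distrib, Finset.mul_sum, Finset.mul_sum, Finset.sum_mul]
  have e4 : lam / Lam ^ 2 * (∑ k, ‖∑ l, M k l * P l‖ ^ 2) * s ^ 2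
      ≤ lam * (∑ k, ‖P k‖ ^ 2) * s ^ 2 := by
    calc _ ≤ lam / Lam ^ 2 * (Lam ^ 2 * ∑ k, ‖P k‖ ^ 2) * s ^ 2 := by gcongr
      _ = _ := by field_simp
  have e5 : 2 * ∑ k, (D k * (starRingEnd ℂ) w).re
      = μ * ‖w‖ ^ 2 + ∑ k, (x k * P k * (starRingEnd ℂ) w).re := by
    rw [← Complex.re_sum, ← Complex.re_sum, ← Finset.sum_mul, ← Finset.sum_mul, hD,
      Complex.sq_norm, Complex.normSq_apply]
    simp
    ring
  have e6 := mul_le_mul_of_nonneg_right e1 (sq_nonneg s)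
  have e7 : ∑ k, x k * (2 * s * d k) = 2 * s * ∑ k, x k * d k := by
    rw [Finset.mul_sum]; exact Finset.sum_congr rfl fun k _ => by ring
  have e8 : ∑ k, x k * ‖w‖ ^ 2 * s * d k = ‖w‖ ^ 2 * s * ∑ k, x k * d k := by
    rw [Finset.mul_sum]; exact Finset.sum_congr rfl fun k _ => by ring
  have e9 := congrArg (· * s ^ 2) e5
  simp only [Finset.sum_sub_distrib, Finset.sum_add_distrib, ← Finset.sum_mul, ← Finset.mul_sum,
    Finset.sum_neg_distrib, Finset.sum_const, Finset.card_univ, Fintype.card_fin, nsmul_eq_mul]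
    at e3 e7 e8 e9 ⊢
  rw [e7, e8]
  linarith

/-- key energy inequality: for solutions of the self-similar profile
equation, testing against `conj(w) ψ²` gives the Caccioppoli-type inequality
`∫ (-λ|∇w|²ψ² + C|w|²|∇ψ|²) ≥ ((2μ-n)/2) ∫ |w|²ψ² - (1/2) ∫ |w|² x·∇(ψ²)`,
with `C` depending only on `λ, Λ`. -/
theorem stmt_15 (n : ℕ) (hn : 1 ≤ n) (lam Lam : ℝ) (hlam : 0 < lam) (hLam : 0 < Lam) :
    ∃ C : ℝ, 0 < C ∧
      ∀ (μ : ℝ) (A : EuclideanSpace ℝ (Fin n) → Matrix (Fin n) (Fin n) ℂ)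
        (w : EuclideanSpace ℝ (Fin n) → ℂ),
        (∀ k l : Fin n, ContDiff ℝ 1 fun x => A x k l) →
        UniformlyElliptic A lam Lam →
        ContDiff ℝ 2 w →
        (∀ x, divAgrad A w x =
          (1 / 2) * (Complex.I * w x + (μ : ℂ) * w x + ∑ k, (x k : ℂ) * pdC w x k)) →
        ∀ ψ : EuclideanSpace ℝ (Fin n) → ℝ, ContDiff ℝ (⊤ : ℕ∞) ψ → HasCompactSupport ψ →
          ((2 * μ - n) / 2) * (∫ x, ‖w x‖ ^ 2 * (ψ x) ^ 2) -
            (1 / 2) * (∫ x, ‖w x‖ ^ 2 *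
              (∑ k, x k * fderiv ℝ (fun y => (ψ y) ^ 2) x (EuclideanSpace.single k 1))) ≤
          ∫ x, (-lam * (∑ k, ‖pdC w x k‖ ^ 2) * (ψ x) ^ 2 +
            C * ‖w x‖ ^ 2 * (∑ k, (fderiv ℝ ψ x (EuclideanSpace.single k 1)) ^ 2)) := by
  refine ⟨4 * Lam ^ 2 / lam, by positivity, ?_⟩
  intro μ A w hA hell hw heq ψ hψ hc
  have hpd : ∀ l, ContDiff ℝ 1 fun y => pdC w y l := fun l =>
    (hw.fderiv_right (m := 1) (by norm_num)).clm_apply contDiff_const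
  set F : Fin n → EuclideanSpace ℝ (Fin n) → ℂ := fun k y => ∑ l, A y k l * pdC w y l with hFdef
  have hF : ∀ k, ContDiff ℝ 1 (F k) := fun k =>
    ContDiff.sum fun l _ => (hA k l).mul (hpd l)
  have hw1 : ContDiff ℝ 1 w := hw.of_le (by norm_num)
  have hψ1 : ContDiff ℝ 1 ψ := hψ.of_le (by exact_mod_cast le_top)
  have re_cd : ∀ {f : EuclideanSpace ℝ (Fin n) → ℂ}, ContDiff ℝ 1 f →
      ContDiff ℝ 1 fun y => (f y).re := fun hf => Complex.reCLM.contDiff.comp hf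
  have im_cd : ∀ {f : EuclideanSpace ℝ (Fin n) → ℂ}, ContDiff ℝ 1 f →
      ContDiff ℝ 1 fun y => (f y).im := fun hf => Complex.imCLM.contDiff.comp hf
  set V : Fin n → EuclideanSpace ℝ (Fin n) → ℝ := fun k y =>
    (2 * ((F k y).re * (w y).re + (F k y).im * (w y).im)
        - 1 / 2 * y k * ((w y).re * (w y).re + (w y).im * (w y).im)) * (ψ y * ψ y) with hVdef
  have hcoord : ∀ k : Fin n, ContDiff ℝ 1 fun y : EuclideanSpace ℝ (Fin n) => y k := fun k =>
    (EuclideanSpace.proj k : EuclideanSpace ℝ (Fin n) →L[ℝ] ℝ).contDiff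
  have hV : ∀ k, ContDiff ℝ 1 (V k) := fun k =>
    ((contDiff_const.mul (((re_cd (hF k)).mul (re_cd hw1)).add
      ((im_cd (hF k)).mul (im_cd hw1)))).sub ((contDiff_const.mul (hcoord k)).mul
      (((re_cd hw1).mul (re_cd hw1)).add ((im_cd hw1).mul (im_cd hw1))))).mul (hψ1.mul hψ1)
  have hVc : ∀ k, HasCompactSupport (V k) := fun k => (hc.mul_right (f' := ψ)).mul_left
  have hdiv := fun k => integral_fderiv_eq_zero (V k) (hV k) (hVc k) (EuclideanSpace.single k 1)
  have hdψ : ∀ k : Fin n, Continuous fun x => fderiv ℝ ψ x (EuclideanSpace.single k 1) := fun k =>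
    (hψ1.continuous_fderiv one_ne_zero).clm_apply continuous_const
  have hsq : ∀ x (k : Fin n), fderiv ℝ (fun y => (ψ y) ^ 2) x (EuclideanSpace.single k 1)
      = 2 * ψ x * fderiv ℝ ψ x (EuclideanSpace.single k 1) := by
    intro x k
    have h := ((hψ1.differentiable one_ne_zero x).hasFDerivAt.pow 2).fderiv
    simpa using congrArg (fun L => L (EuclideanSpace.single k 1)) h
  simp only [hsq]
  have cw := hw1.continuous
  have cψ := hψ1.continuous
  have cpd := fun k => (hpd k).continuous
  have ccoord := fun k => (hcoord k).continuous
  have zψ : ∀ x, x ∉ tsupport ψ → ψ x = 0 := fun x hx => image_eq_zero_of_notMem_tsupport hx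
  have zdψ : ∀ x, x ∉ tsupport ψ → fderiv ℝ ψ x = 0 := fun x hx => by
    by_contra h
    exact hx (support_fderiv_subset ℝ h)
  have i1 : Integrable fun x => ‖w x‖ ^ 2 * ψ x ^ 2 :=
    Continuous.integrable_of_hasCompactSupport (by fun_prop)
      (HasCompactSupport.intro hc fun x hx => by simp [zψ x hx])
  have i2 : Integrable fun x => ‖w x‖ ^ 2 *
      ∑ k, x k * (2 * ψ x * fderiv ℝ ψ x (EuclideanSpace.single k 1)) :=
    Continuous.integrable_of_hasCompactSupport (by fun_prop)
      (HasCompactSupport.intro hc fun x hx => by simp [zψ x hx])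
  have i3 : Integrable fun x => ∑ k, fderiv ℝ (V k) x (EuclideanSpace.single k 1) :=
    integrable_finsetSum _ fun k _ => (hdiv k).1
  have i4 : Integrable fun x => -lam * (∑ k, ‖pdC w x k‖ ^ 2) * (ψ x) ^ 2 +
      4 * Lam ^ 2 / lam * ‖w x‖ ^ 2 *
        (∑ k, (fderiv ℝ ψ x (EuclideanSpace.single k 1)) ^ 2) :=
    Continuous.integrable_of_hasCompactSupport (by fun_prop)
      (HasCompactSupport.intro hc fun x hx => by simp [zψ x hx, zdψ x hx])
  have h3 : ∫ x, ∑ k, fderiv ℝ (V k) x (EuclideanSpace.single k 1) = 0 := by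
    rw [integral_finsetSum _ fun k _ => (hdiv k).1]
    exact Finset.sum_eq_zero fun k _ => (hdiv k).2
  have key := integral_mono (((i1.const_mul ((2 * μ - n) / 2)).sub (i2.const_mul (1 / 2))).sub i3)
    i4 fun x => ?_
  · rwa [integral_sub' ((i1.const_mul _).sub (i2.const_mul _)) i3, h3, sub_zero,
      integral_sub' (i1.const_mul _) (i2.const_mul _), integral_const_mul,
      integral_const_mul] at key
  · have hp := pointwise_energy lam Lam μ (ψ x) hlam hLam (A x) (hell x) (w x) (pdC w x)
      (fun k => fderiv ℝ (F k) x (EuclideanSpace.single k 1)) x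
      (fun k => fderiv ℝ ψ x (EuclideanSpace.single k 1)) (heq x)
    refine le_trans (le_of_eq ?_) hp
    simp only [Pi.sub_apply]
    congr 1
    exact Finset.sum_congr rfl fun k _ => fderiv_flux (F k) w ψ x k
      ((hF k).differentiable one_ne_zero x) (hw1.differentiable one_ne_zero x)
      (hψ1.differentiable one_ne_zero x)
end
end
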